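/- arXiv:2509.04410 — 2 statements merged into one kernel-verified Lean document; each statement's English description precedes it below -/
import Mathlib

section
/- Let n ≥ 2, N = 2ⁿ − 1, F the finite field with 2ⁿ elements, g a generator of F^×, ω = exp(2πi/N), and ψ_q ∈ ℂ^F given by ψ_q(0) = 0, ψ_q(g^j) = ω^{qj}/√N. Fix an 𝔽₂-linear bijection ι : 𝔽₂ⁿ → F and identify ℂ^F with (ℂ²)^{⊗n}. For any A ⊆ {0,…,n−1} with |A| = ℓ, let ρ_A be the reduced density matrix of ψ_q on A. Then for every integer q with q ≢ 0 (mod N), the von Neumann entropy satisfies S(ρ_A) ≥ ℓ ln 2 − 2^{4 + 2ℓ − n}. -/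
open Complex

noncomputable section

/-- Combine a configuration on `A` and a configuration on `Aᶜ` into a full configuration. -/
def mergeCfg {ι : Type*} [DecidableEq ι] (A : Finset ι)
    (x : {i // i ∈ A} → ZMod 2) (y : {i // i ∉ A} → ZMod 2) : ι → ZMod 2 :=
  fun i => if h : i ∈ A then x ⟨i, h⟩ else y ⟨i, h⟩

/-- Reduced density matrix of a state `ψ` on the qubits in `A`. -/
def rdm {ι : Type*} [Fintype ι] [DecidableEq ι] (A : Finset ι)
    (ψ : (ι → ZMod 2) → ℂ) :
    Matrix ({i // i ∈ A} → ZMod 2) ({i // i ∈ A} → ZMod 2) ℂ :=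
  Matrix.of fun x x' => ∑ y : {i // i ∉ A} → ZMod 2,
    ψ (mergeCfg A x y) * (starRingEnd ℂ) (ψ (mergeCfg A x' y))

section
open Polynomial


theorem stp_descent_dvd {S : Type*} [CommRing S] [IsDomain S] {p D U V : S} (hp : Prime p)
    (hV : ¬ p ∣ V) (hD : ¬ p ∣ D) (hU : ¬ p ∣ U) {A B : S}
    (h : (A ^ 2 + A * B) * (p * D) * U = B ^ 2 * V) :
    ∃ A1 B1, A = p * A1 ∧ B = p * B1 ∧ (A1 ^ 2 + A1 * B1) * (p * D) * U = B1 ^ 2 * V := by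
  have hB : p ∣ B := by
    have : p ∣ B ^ 2 * V := ⟨(A ^ 2 + A * B) * D * U, by rw [← h]; ring⟩
    rcases hp.dvd_or_dvd this with h1 | h1
    · exact hp.dvd_of_dvd_pow h1
    · exact absurd h1 hV
  obtain ⟨B1, rfl⟩ := hB
  have h2 : (A ^ 2 + A * (p * B1)) * D * U = p * (B1 ^ 2 * V) := by
    apply mul_left_cancel₀ hp.ne_zero
    linear_combination h
  have hA : p ∣ A := by
    have h3 : p ∣ (A ^ 2 + A * (p * B1)) * D * U := ⟨_, h2⟩
    have h4 : p ∣ A ^ 2 + A * (p * B1) := by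
      rcases hp.dvd_or_dvd h3 with h5 | h5
      · rcases hp.dvd_or_dvd h5 with h6 | h6
        · exact h6
        · exact absurd h6 hD
      · exact absurd h5 hU
    have h7 : p ∣ A ^ 2 := by
      have : A ^ 2 = (A ^ 2 + A * (p * B1)) - p * (A * B1) := by ring
      rw [this]
      exact dvd_sub h4 ⟨_, rfl⟩
    exact hp.dvd_of_dvd_pow h7
  obtain ⟨A1, rfl⟩ := hA
  refine ⟨A1, B1, rfl, rfl, ?_⟩
  apply mul_left_cancel₀ (pow_ne_zero 2 hp.ne_zero)
  linear_combination h

theorem stp_descent {S : Type*} [CommRing S] [IsDomain S] [WfDvdMonoid S] {p D U V : S}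
    (hp : Prime p) (hV : ¬ p ∣ V) (hD : ¬ p ∣ D) (hU : ¬ p ∣ U) {A B : S}
    (h : (A ^ 2 + A * B) * (p * D) * U = B ^ 2 * V) : A = 0 ∧ B = 0 := by
  have key : ∀ k : ℕ, ∀ A B : S, (A ^ 2 + A * B) * (p * D) * U = B ^ 2 * V →
      p ^ k ∣ A ∧ p ^ k ∣ B := by
    intro k
    induction k with
    | zero => intro A B _; simp
    | succ k ih =>
      intro A B h
      obtain ⟨A1, B1, rfl, rfl, h1⟩ := stp_descent_dvd hp hV hD hU h
      obtain ⟨h2, h3⟩ := ih _ _ h1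
      rw [pow_succ']
      exact ⟨mul_dvd_mul_left p h2, mul_dvd_mul_left p h3⟩
  constructor
  · by_contra hA
    obtain ⟨k, hk⟩ := FiniteMultiplicity.of_not_isUnit hp.not_isUnit hA
    exact hk (key _ A B h).1
  · by_contra hA
    obtain ⟨k, hk⟩ := FiniteMultiplicity.of_not_isUnit hp.not_isUnit hA
    exact hk (key _ A B h).2

theorem stp_biv_zero {E : Type*} [Field E] (R : ℕ) : ∀ (d : ℕ) (p : E[X][X]), p.natDegree ≤ d →
    (∀ j, (p.coeff j).natDegree < R) → p.eval (X ^ R) = 0 → p = 0 := by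
  have h0 : ∀ p : E[X][X], (∀ j, (p.coeff j).natDegree < R) → p.eval (X ^ R) = 0 →
      p.coeff 0 = 0 ∧ p.divX.eval (X ^ R) = 0 := by
    intro p hc he
    have h1 : p.divX.eval (X ^ R) * X ^ R + p.coeff 0 = 0 := by
      rw [← he]
      conv_rhs => rw [← divX_mul_X_add p]
      simp
    have h2 : p.coeff 0 = 0 := by
      apply eq_zero_of_dvd_of_natDegree_lt (p := (X : E[X]) ^ R)
      · exact ⟨- p.divX.eval (X ^ R), by linear_combination h1⟩
      · rw [natDegree_X_pow]; exact hc 0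
    refine ⟨h2, ?_⟩
    rw [h2, add_zero] at h1
    exact (mul_eq_zero.1 h1).resolve_right (pow_ne_zero _ X_ne_zero)
  intro d
  induction d with
  | zero =>
    intro p hd hc he
    rw [eq_C_of_natDegree_le_zero hd, (h0 p hc he).1, C_0]
  | succ d ih =>
    intro p hd hc he
    obtain ⟨h1, h2⟩ := h0 p hc he
    have h3 : p.divX = 0 := by
      apply ih _ _ _ h2
      · rw [natDegree_divX_eq_natDegree_tsub_one]; omega
      · intro j; rw [coeff_divX]; exact hc _
    rw [← divX_mul_X_add p, h1, h3]; simp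

/-- all coefficients have degree at most `d` -/
def CDeg {E : Type*} [Field E] (d : ℕ) (p : E[X][X]) : Prop := ∀ j, (p.coeff j).natDegree ≤ d

theorem CDeg.mul {E : Type*} [Field E] {d e : ℕ} {p q : E[X][X]} (hp : CDeg d p) (hq : CDeg e q) :
    CDeg (d + e) (p * q) := by
  intro j
  rw [coeff_mul]
  apply natDegree_sum_le_of_forall_le
  intro x _
  exact natDegree_mul_le.trans (add_le_add (hp _) (hq _))

theorem CDeg.add {E : Type*} [Field E] {d : ℕ} {p q : E[X][X]} (hp : CDeg d p) (hq : CDeg d q) :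
    CDeg d (p + q) := by
  intro j
  rw [coeff_add]
  exact natDegree_add_le_of_degree_le (hp _) (hq _)

theorem CDeg.sub {E : Type*} [Field E] {d : ℕ} {p q : E[X][X]} (hp : CDeg d p) (hq : CDeg d q) :
    CDeg d (p - q) := by
  intro j
  rw [coeff_sub]
  exact (natDegree_sub_le_of_le (hp _) (hq _)).trans (max_self d).le

theorem CDeg.mono {E : Type*} [Field E] {d e : ℕ} {p : E[X][X]} (hp : CDeg d p) (h : d ≤ e) :
    CDeg e p := fun j => (hp j).trans h

theorem CDeg.C {E : Type*} [Field E] {d : ℕ} {p : E[X]} (hp : p.natDegree ≤ d) :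
    CDeg d (C p) := by
  intro j
  rw [coeff_C]
  split_ifs <;> simp [hp]

theorem stp_nonvanish {E : Type*} [Field E] [CharP E 2] (m δ b : ℕ) (hδ : Odd δ)
    (c ρ : E) (hc : c ≠ 0) (hρ : ρ ≠ 0) (hb : 2 * b + δ < 2 ^ m)
    (D Kp : E[X]) (hD : D = 1 + C ρ * X ^ δ)
    (hK : Kp = ∑ i ∈ Finset.range m, C (c ^ 2 ^ i) * D ^ (2 ^ m - 2 ^ i))
    (A B : E[X][X]) (hA : CDeg b A) (hB : CDeg b B)
    (h : A.eval (X ^ 2 ^ m) * D ^ 2 ^ m + B.eval (X ^ 2 ^ m) * Kp = 0) : A = 0 ∧ B = 0 := by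
  have h2 : (2 : E[X]) = 0 := CharTwo.two_eq_zero
  have hδ0 : 0 < δ := hδ.pos
  have hDdeg : D.natDegree = δ := by
    rw [hD, add_comm]
    rw [natDegree_add_eq_left_of_natDegree_lt] <;> rw [natDegree_C_mul_X_pow _ _ hρ]
    simpa using hδ0
  have hD0 : D ≠ 0 := by
    intro h; rw [h] at hDdeg; simp at hDdeg; omega
  have hsep : D.Separable := by
    rw [hD]
    refine ⟨1, C (-(δ : E)⁻¹) * X, ?_⟩
    have hd1 : (δ : E) ≠ 0 := by
      intro h0
      rw [CharP.cast_eq_zero_iff E 2] at h0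
      exact (Nat.not_even_iff_odd.2 hδ) (even_iff_two_dvd.2 h0)
    obtain ⟨e, rfl⟩ : ∃ e, δ = e + 1 := ⟨δ - 1, by omega⟩
    simp only [derivative_add, derivative_one, derivative_C_mul, derivative_X_pow, zero_add]
    have : C (-((e + 1 : ℕ) : E)⁻¹) * C ((e + 1 : ℕ) : E) = -1 := by
      rw [← C_mul, neg_mul, inv_mul_cancel₀ hd1]; simp
    simp only [Nat.add_sub_cancel]
    linear_combination (X * C ρ * X ^ e) * this
  have hsq := hsep.squarefree
  obtain ⟨π, hπi, D', hDD'⟩ : ∃ π, Irreducible π ∧ π ∣ D :=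
    exists_irreducible_of_natDegree_pos (by omega)
  have hπ : Prime π := hπi.prime
  have hπD' : ¬ π ∣ D' := by
    rintro ⟨w, rfl⟩
    exact hπi.not_isUnit (hsq π ⟨w, by rw [hDD']; ring⟩)
  -- the quadratic relation of Kp
  have hKK : (Kp ^ 2 + D ^ 2 ^ m * Kp) * D = D ^ 2 ^ m * (C (c ^ 2 ^ m) * D + C c * D ^ 2 ^ m) := by
    have key : ∀ k ≤ m, ((∑ i ∈ Finset.range k, C (c ^ 2 ^ i) * D ^ (2 ^ m - 2 ^ i)) ^ 2 +
        D ^ 2 ^ m * (∑ i ∈ Finset.range k, C (c ^ 2 ^ i) * D ^ (2 ^ m - 2 ^ i))) * D ^ 2 ^ k =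
        D ^ 2 ^ m * (C (c ^ 2 ^ k) * D ^ 2 ^ m + C c * D ^ (2 ^ m + 2 ^ k - 1)) := by
      intro k
      induction k with
      | zero =>
        intro _
        simp only [Finset.range_zero, Finset.sum_empty, pow_zero, pow_one]
        rw [Nat.add_sub_cancel]
        linear_combination (- D ^ 2 ^ m * (C c * D ^ 2 ^ m)) * h2
      | succ k ih =>
        intro hk
        have ih := ih (by omega)
        rw [Finset.sum_range_succ]
        have hle : 2 ^ k ≤ 2 ^ m := Nat.pow_le_pow_right (by norm_num) (by omega)
        obtain ⟨w, hw⟩ := Nat.exists_eq_add_of_le hle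
        have e1 : 2 ^ m - 2 ^ k = w := by omega
        have hpos : 0 < 2 ^ k := by positivity
        obtain ⟨v, hv⟩ := Nat.exists_eq_add_of_lt hpos
        have e2 : 2 ^ m + 2 ^ (k + 1) - 1 = (2 ^ m + 2 ^ k - 1) + 2 ^ k := by
          rw [pow_succ]; omega
        have e3 : c ^ 2 ^ (k + 1) = c ^ 2 ^ k * c ^ 2 ^ k := by rw [pow_succ, pow_mul]; ring
        rw [e1, e2, e3]
        have e4 : D ^ 2 ^ m = D ^ 2 ^ k * D ^ w := by rw [hw, pow_add]
        have e5 : D ^ 2 ^ (k + 1) = D ^ 2 ^ k * D ^ 2 ^ k := by rw [pow_succ, pow_mul]; ring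
        rw [e5, pow_add D (2 ^ m + 2 ^ k - 1)]
        simp only [C_mul]
        generalize (∑ i ∈ Finset.range k, C (c ^ 2 ^ i) * D ^ (2 ^ m - 2 ^ i)) = Z at *
        generalize D ^ (2 ^ m + 2 ^ k - 1) = Y at *
        rw [e4] at *
        generalize D ^ 2 ^ k = P at *
        generalize D ^ w = W at *
        generalize (C (c ^ 2 ^ k) : E[X]) = G at *
        linear_combination P * ih + (Z * G * W * P * P + G * W * W * P * P * P) * h2
    have := key m le_rfl
    rw [← hK] at this
    have hm : 0 < 2 ^ m := by positivity
    obtain ⟨w, hw⟩ : ∃ w, 2 ^ m = w + 1 := ⟨2 ^ m - 1, by omega⟩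
    rw [hw] at this ⊢
    rw [show w + 1 + (w + 1) - 1 = (w + 1) + w by omega] at this
    apply mul_left_cancel₀ (pow_ne_zero w hD0)
    linear_combination this
  have hrel : (A.eval (X ^ 2 ^ m) ^ 2 + A.eval (X ^ 2 ^ m) * B.eval (X ^ 2 ^ m)) * D * D ^ 2 ^ m =
      B.eval (X ^ 2 ^ m) ^ 2 * (C (c ^ 2 ^ m) * D + C c * D ^ 2 ^ m) := by
    apply mul_left_cancel₀ (pow_ne_zero (2 ^ m) hD0)
    generalize A.eval (X ^ 2 ^ m) = A1 at *
    generalize B.eval (X ^ 2 ^ m) = B1 at *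
    generalize D ^ 2 ^ m = P at *
    have h' : A1 * P = - (B1 * Kp) := by linear_combination h
    linear_combination B1 ^ 2 * hKK + (A1 * P - B1 * Kp + B1 * P) * D * h - B1 ^ 2 * D * P * Kp * h2
  -- lift to two variables
  set U : E[X][X] := 1 + C (C (ρ ^ 2 ^ m)) * X ^ δ with hU
  have hDU : U.eval (X ^ 2 ^ m) = D ^ 2 ^ m := by
    rw [hD, add_pow_char_pow, mul_pow, ← pow_mul, one_pow, ← C_pow]
    simp [hU, ← pow_mul, mul_comm]
  have hUd : CDeg 0 U := by
    refine CDeg.add ?_ ?_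
    · have := CDeg.C (E := E) (d := 0) (p := 1) (by simp)
      simpa using this
    · intro j
      rw [coeff_C_mul, coeff_X_pow]
      split_ifs <;> simp
  have hbiv : (A ^ 2 + A * B) * C D * U = B ^ 2 * (C (C (c ^ 2 ^ m) * D) + C (C c) * U) := by
    rw [← sub_eq_zero]
    apply stp_biv_zero (2 ^ m) _ _ le_rfl
    · have : CDeg (2 * b + δ) ((A ^ 2 + A * B) * C D * U - B ^ 2 * (C (C (c ^ 2 ^ m) * D) + C (C c) * U)) := by
        apply CDeg.sub
        · have := (((hA.mul hA).add (hA.mul hB)).mul (CDeg.C hDdeg.le)).mul hUd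
          rw [← sq] at this
          exact this.mono (by omega)
        · have h1 : CDeg δ (C (C (c ^ 2 ^ m) * D) + C (C c) * U) := by
            apply CDeg.add
            · exact CDeg.C ((natDegree_C_mul_le _ _).trans hDdeg.le)
            · exact ((CDeg.C (d := 0) (by simp)).mul hUd).mono (by omega)
          have := (hB.mul hB).mul h1
          rw [← sq] at this
          exact this.mono (by omega)
      intro j
      exact lt_of_le_of_lt (this j) hb
    · simp only [eval_sub, eval_mul, eval_add, eval_pow, eval_C, hDU]
      rw [hrel, sub_self]
  rw [hDD', C_mul (a := π)] at hbiv
  refine stp_descent (prime_C_iff.2 hπ) ?_ ?_ ?_ hbiv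
  · rw [C_dvd_iff_dvd_coeff]
    intro h0
    have h1 := h0 0
    simp only [coeff_add, coeff_C_zero, coeff_C_mul, hU, coeff_one_zero, coeff_X_pow,
      if_neg hδ0.ne, mul_zero, add_zero, mul_one] at h1
    rw [(dvd_add_right (Dvd.intro (C (c ^ 2 ^ m) * D') (by ring)))] at h1
    exact hπi.not_isUnit (isUnit_of_dvd_unit h1 (isUnit_C.2 (isUnit_iff_ne_zero.2 hc)))
  · rw [C_dvd_iff_dvd_coeff]
    intro h0
    have h1 := h0 0
    rw [coeff_C_zero] at h1
    exact hπD' h1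
  · rw [C_dvd_iff_dvd_coeff]
    intro h0
    have h1 := h0 0
    simp only [coeff_add, coeff_C_mul, hU, coeff_one_zero, coeff_X_pow,
      if_neg hδ0.ne, mul_zero, add_zero] at h1
    exact hπi.not_isUnit (isUnit_of_dvd_one h1)

theorem stp_count {E : Type*} [Field E] [Fintype E] [DecidableEq E] [CharP E 2] (m δ : ℕ)
    (hδ : Odd δ) (hQ : Fintype.card E = 2 ^ m * 2 ^ m) (hR : 8 * δ ≤ 2 ^ m)
    (c ρ s : E) (hc : c ≠ 0) (hρ : ρ ≠ 0) :
    (Finset.univ.filter (fun v : E => 1 + ρ * v ^ δ ≠ 0 ∧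
      (∑ i ∈ Finset.range m, (c * (1 + ρ * v ^ δ)⁻¹) ^ 2 ^ i) +
      (∑ i ∈ Finset.range m, (c * (1 + ρ * v ^ δ)⁻¹) ^ 2 ^ i) ^ 2 ^ m = s)).card * 2 ≤
      2 ^ m * 2 ^ m + 6 * δ * 2 ^ m := by
  classical
  have hδ0 : 0 < δ := hδ.pos
  obtain ⟨r, hr⟩ : ∃ r, 2 ^ m = 4 * (r + 1) := by
    have h3 : 3 ≤ m := by
      by_contra h
      have : 2 ^ m ≤ 2 ^ 2 := Nat.pow_le_pow_right (by norm_num) (by omega)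
      omega
    obtain ⟨k, rfl⟩ := Nat.exists_eq_add_of_le h3
    refine ⟨2 * 2 ^ k - 1, ?_⟩
    have : 0 < 2 ^ k := by positivity
    rw [pow_add]; omega
  set D : E[X] := 1 + C ρ * X ^ δ with hD
  set Kp : E[X] := ∑ i ∈ Finset.range m, C (c ^ 2 ^ i) * D ^ (2 ^ m - 2 ^ i) with hK
  have hDdeg : D.natDegree ≤ δ := by
    rw [hD]
    refine (natDegree_add_le _ _).trans ?_
    simp only [natDegree_one, max_le_iff]
    exact ⟨by omega, natDegree_C_mul_X_pow_le _ _⟩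
  have hDR : (D ^ 2 ^ m).natDegree ≤ δ * 2 ^ m := by
    refine natDegree_pow_le.trans ?_
    rw [mul_comm]; exact Nat.mul_le_mul_right _ hDdeg
  have hKdeg : Kp.natDegree ≤ δ * 2 ^ m := by
    rw [hK]
    apply natDegree_sum_le_of_forall_le
    intro i _
    refine (natDegree_C_mul_le _ _).trans (natDegree_pow_le.trans ?_)
    rw [mul_comm]; exact Nat.mul_le_mul hDdeg (Nat.sub_le _ _)
  set R := 2 ^ m with hRdef
  -- parameters
  set J := 2 * (r + 1) + 2 * δ with hJ
  let κ := Fin J × Fin (r + 1)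
  let mon : κ → E[X] := fun x => X ^ (R * x.2.1 + x.1.1)
  let vec : κ ⊕ κ → E[X] := Sum.elim (fun x => mon x * D ^ R) (fun x => mon x * (Kp + C s * D ^ R))
  set M := R * r + δ * R + J with hM
  have hmon : ∀ x : κ, (mon x).natDegree ≤ R * r + (J - 1) := by
    intro x
    simp only [mon, natDegree_X_pow]
    have h1 := x.1.2
    have h2 := x.2.2
    have : R * x.2.1 ≤ R * r := Nat.mul_le_mul_left _ (by omega)
    omega
  have hvdeg : ∀ x, (vec x).natDegree < M := by
    have hJ0 : 0 < J := by omega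
    rintro (x | x)
    · simp only [vec, Sum.elim_inl]
      have := natDegree_mul_le_of_le (hmon x) hDR
      omega
    · simp only [vec, Sum.elim_inr]
      have h1 : (Kp + C s * D ^ R).natDegree ≤ δ * R :=
        natDegree_add_le_of_degree_le hKdeg ((natDegree_C_mul_le _ _).trans hDR)
      have := natDegree_mul_le_of_le (hmon x) h1
      omega
  let vec' : κ ⊕ κ → degreeLT E M := fun x => ⟨vec x, by
    rw [mem_degreeLT]
    exact degree_le_natDegree.trans_lt (by exact_mod_cast hvdeg x)⟩
  have hdep : ¬ LinearIndependent E vec' := by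
    intro hli
    have h1 := hli.fintype_card_le_finrank
    rw [(degreeLTEquiv E M).finrank_eq] at h1
    simp only [κ, Fintype.card_sum, Fintype.card_prod, Fintype.card_fin, Module.finrank_fin_fun] at h1
    rw [hM, hJ, hr] at h1
    rw [hr] at hR
    nlinarith
  obtain ⟨g, hg, x0, hx0⟩ := Fintype.not_linearIndependent_iff.1 hdep
  have hW : ∑ x, g x • vec x = 0 := by
    have := congrArg (fun z : degreeLT E M => (z : E[X])) hg
    simpa [vec'] using this
  have hsurj : Function.Surjective (fun x : E => x ^ R) := by
    apply Finite.surjective_of_injective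
    intro x y hxy
    exact iterateFrobenius_inj E 2 m (by simpa [iterateFrobenius_def] using hxy)
  choose rt hrt using fun x => hsurj x
  let lift : (κ → E) → E[X][X] := fun f => ∑ x : κ, C (C (f x) * X ^ x.2.1) * X ^ x.1.1
  have hliftc : ∀ f x, ((lift f).coeff x.1.1).coeff x.2.1 = f x := by
    intro f x
    simp only [lift, finsetSum_coeff, coeff_C_mul, coeff_X_pow, mul_ite, mul_one, mul_zero]
    rw [Finset.sum_eq_single x]
    · simp
    · rintro y - hy
      split_ifs with h1
      · rw [coeff_C_mul, coeff_X_pow, if_neg, mul_zero]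
        intro h2
        exact hy (Prod.ext (Fin.ext h1.symm) (Fin.ext h2.symm))
      · simp
    · simp
  have hliftd : ∀ f, CDeg r (lift f) := by
    intro f j
    simp only [lift, finsetSum_coeff, coeff_C_mul, coeff_X_pow, mul_ite, mul_one, mul_zero]
    apply natDegree_sum_le_of_forall_le
    intro x _
    split_ifs
    · refine (natDegree_C_mul_X_pow_le _ _).trans ?_
      have := x.2.2; omega
    · simp
  have hlifte : ∀ f, (lift f).eval (X ^ R) = ∑ x : κ, C (f x) * X ^ (x.2.1 + R * x.1.1) := by
    intro f
    simp only [lift, eval_finsetSum, eval_mul, eval_C, eval_pow, eval_X]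
    refine Finset.sum_congr rfl fun x _ => ?_
    rw [pow_add, pow_mul]; ring
  have hlifted : ∀ f, ((lift f).eval (X ^ R)).natDegree ≤ r + R * (J - 1) := by
    intro f
    rw [hlifte]
    apply natDegree_sum_le_of_forall_le
    intro x _
    refine (natDegree_C_mul_X_pow_le _ _).trans ?_
    have h1 := x.1.2
    have h2 := x.2.2
    have : R * x.1.1 ≤ R * (J - 1) := Nat.mul_le_mul_left _ (by omega)
    omega
  set a : κ → E := fun x => rt (g (Sum.inl x)) with ha
  set b : κ → E := fun x => rt (g (Sum.inr x)) with hb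
  set H : E[X] := (lift a).eval (X ^ R) * D ^ R + (lift b).eval (X ^ R) * Kp with hH
  have hR0 : R ≠ 0 := by positivity
  have hH0 : H ≠ 0 := by
    intro h0
    obtain ⟨h1, h2⟩ := stp_nonvanish m δ r hδ c ρ hc hρ (by rw [← hRdef]; omega) D Kp hD hK _ _
      (hliftd a) (hliftd b) h0
    have hz : ∀ x, rt x = 0 → x = 0 := by
      intro x hx
      rw [← hrt x, hx]; exact zero_pow hR0
    rcases x0 with x | x
    · have := hliftc a x
      rw [h1] at this
      exact hx0 (hz _ (by simpa using this.symm))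
    · have := hliftc b x
      rw [h2] at this
      exact hx0 (hz _ (by simpa using this.symm))
  have hHdeg : H.natDegree ≤ r + R * (J - 1) + δ * R := by
    rw [hH]
    exact natDegree_add_le_of_degree_le (natDegree_mul_le_of_le (hlifted a) hDR)
      (natDegree_mul_le_of_le (hlifted b) hKdeg)
  have hcardle : (Finset.univ.filter (fun v : E => 1 + ρ * v ^ δ ≠ 0 ∧
      (∑ i ∈ Finset.range m, (c * (1 + ρ * v ^ δ)⁻¹) ^ 2 ^ i) +
      (∑ i ∈ Finset.range m, (c * (1 + ρ * v ^ δ)⁻¹) ^ 2 ^ i) ^ R = s)).card ≤ H.natDegree := by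
    refine le_trans (Finset.card_le_card (t := H.roots.toFinset) ?_)
      ((Multiset.toFinset_card_le _).trans (card_roots' H))
    intro v hv
    rw [Finset.mem_filter] at hv
    obtain ⟨-, hv0, hvs⟩ := hv
    rw [Multiset.mem_toFinset, mem_roots hH0, IsRoot.def]
    set d := 1 + ρ * v ^ δ with hd
    set k := ∑ i ∈ Finset.range m, (c * d⁻¹) ^ 2 ^ i with hk
    have hDv : D.eval v = d := by simp [hD, hd]
    have hKv : Kp.eval v = d ^ R * k := by
      rw [hK, hk, eval_finsetSum, Finset.mul_sum]
      refine Finset.sum_congr rfl fun i hi => ?_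
      have hle : 2 ^ i ≤ R := Nat.pow_le_pow_right (by norm_num) (Finset.mem_range.1 hi).le
      rw [eval_mul, eval_C, eval_pow, hDv, mul_pow, inv_pow, pow_sub₀ _ hv0 hle]
      ring
    have hvQ : v ^ (R * R) = v := by rw [← hQ]; exact FiniteField.pow_card v
    have hpow : ∀ f : κ → E, (((lift (fun x => rt (f x))).eval (X ^ R)).eval v) ^ R =
        ∑ x, f x * (mon x).eval v := by
      intro f
      rw [hlifte, eval_finsetSum, hRdef, sum_pow_char_pow]
      refine Finset.sum_congr rfl fun x _ => ?_
      simp only [eval_mul, eval_C, eval_pow, eval_X, mon]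
      rw [← hRdef, mul_pow]
      have h1 : rt (f x) ^ R = f x := hrt _
      rw [h1, ← pow_mul, add_mul, pow_add, pow_add, mul_comm R x.2.1]
      congr 2
      rw [show R * x.1.1 * R = R * R * x.1.1 by ring, pow_mul, hvQ]
    have hWv := congrArg (eval v) hW
    rw [Fintype.sum_sum_type] at hWv
    simp only [vec, Sum.elim_inl, Sum.elim_inr, eval_add, eval_finsetSum, eval_smul, eval_mul,
      smul_eq_mul, eval_pow, eval_C, hDv, hKv, eval_zero] at hWv
    simp only [← mul_assoc, ← Finset.sum_mul] at hWv
    have hα := hpow (fun x => g (Sum.inl x))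
    have hβ := hpow (fun x => g (Sum.inr x))
    rw [← hα, ← hβ] at hWv
    change ((lift a).eval (X ^ R)).eval v ^ R * d ^ R + ((lift b).eval (X ^ R)).eval v ^ R *
      (d ^ R * k + s * d ^ R) = 0 at hWv
    have hfin : (H.eval v) ^ R = 0 := by
      rw [hH, eval_add, eval_mul, eval_mul, eval_pow, hDv, hKv, hRdef, add_pow_char_pow, ← hRdef,
        mul_pow, mul_pow, mul_pow]
      have h2 : (2 : E) = 0 := CharTwo.two_eq_zero
      have hdR : d ^ R ≠ 0 := pow_ne_zero _ hv0
      have h3 : ((lift a).eval (X ^ R)).eval v ^ R + ((lift b).eval (X ^ R)).eval v ^ R *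
          k ^ R = 0 := by
        apply mul_right_cancel₀ hdR
        rw [← hvs] at hWv
        linear_combination hWv - ((lift b).eval (X ^ R)).eval v ^ R * d ^ R * k * h2
      linear_combination (d ^ R) ^ R * h3
    exact eq_zero_of_pow_eq_zero hfin
  have hfinal := hcardle.trans hHdeg
  have hJ1 : J - 1 + 1 = J := by omega
  have : R * (J - 1) + R = R * J := by rw [← hJ1]; simp; ring
  have e : 2 * (R * J) = R * R + 4 * δ * R := by
    rw [hJ]
    have : 2 * (2 * (r + 1) + 2 * δ) = R + 4 * δ := by omega
    calc 2 * (R * (2 * (r + 1) + 2 * δ)) = R * (2 * (2 * (r + 1) + 2 * δ)) := by ring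
      _ = _ := by rw [this]; ring
  nlinarith

theorem stp_char {E : Type*} [Field E] [Fintype E] [CharP E 2] (m : ℕ)
    (hQ : Fintype.card E = 2 ^ m * 2 ^ m) (ψ : AddChar E ℂ) (hψ : ψ ≠ 1) :
    ∃ c : E, c ≠ 0 ∧ ∀ x : E,
      (ψ x = 1 ∧ (∑ i ∈ Finset.range m, (c * x) ^ 2 ^ i) +
        (∑ i ∈ Finset.range m, (c * x) ^ 2 ^ i) ^ 2 ^ m = 0) ∨
      (ψ x = -1 ∧ (∑ i ∈ Finset.range m, (c * x) ^ 2 ^ i) +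
        (∑ i ∈ Finset.range m, (c * x) ^ 2 ^ i) ^ 2 ^ m = 1) := by
  classical
  let _ : Algebra (ZMod 2) E := ZMod.algebra E 2
  have hval : ∀ x, ψ x = 1 ∨ ψ x = -1 := by
    intro x
    have h1 : ψ x * ψ x = 1 := by
      rw [← AddChar.map_add_eq_mul, CharTwo.add_self_eq_zero, AddChar.map_zero_eq_one]
    exact mul_self_eq_one_iff.1 h1
  have hne : (1 : ℂ) ≠ -1 := by norm_num
  let φ0 : E →+ ZMod 2 :=
    { toFun := fun x => if ψ x = 1 then 0 else 1
      map_zero' := by simp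
      map_add' := by
        intro x y
        rw [AddChar.map_add_eq_mul]
        rcases hval x with h1 | h1 <;> rcases hval y with h2 | h2 <;> rw [h1, h2] <;>
          norm_num
        decide }
  let φ : E →ₗ[ZMod 2] ZMod 2 := φ0.toZModLinearMap 2
  have hφ : ∀ x, φ x = if ψ x = 1 then 0 else 1 := fun x => rfl
  have hnd := traceForm_nondegenerate (ZMod 2) E
  let c := (LinearMap.BilinForm.toDual (Algebra.traceForm (ZMod 2) E) hnd).symm φ
  have hcx : ∀ x, Algebra.trace (ZMod 2) E (c * x) = φ x := by
    intro x
    have h1 := LinearMap.BilinForm.toDual_def (B := Algebra.traceForm (ZMod 2) E) hnd (m := c) (n := x)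
    rw [Algebra.traceForm_apply] at h1
    rw [← h1]
    simp [c]
  have hfr : Module.finrank (ZMod 2) E = m + m := by
    have h1 := Module.card_eq_pow_finrank (K := ZMod 2) (V := E)
    rw [hQ, ← pow_add, ZMod.card] at h1
    exact (Nat.pow_right_injective le_rfl h1).symm
  have htr : ∀ x : E, (∑ i ∈ Finset.range m, x ^ 2 ^ i) + (∑ i ∈ Finset.range m, x ^ 2 ^ i) ^ 2 ^ m
      = algebraMap (ZMod 2) E (Algebra.trace (ZMod 2) E x) := by
    intro x
    rw [FiniteField.algebraMap_trace_eq_sum_pow, hfr, Finset.sum_range_add, sum_pow_char_pow]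
    simp only [Nat.card_zmod]
    congr 1
    refine Finset.sum_congr rfl fun i _ => ?_
    rw [← pow_mul, ← pow_add, add_comm]
  refine ⟨c, ?_, ?_⟩
  · intro hc
    apply hψ
    ext x
    have := hcx x
    rw [hc, zero_mul, map_zero, hφ] at this
    by_contra h
    rw [AddChar.one_apply] at h
    rw [if_neg h] at this
    exact zero_ne_one this
  · intro x
    rw [htr, hcx, hφ]
    rcases hval x with h1 | h1
    · left; simp [h1]
    · right; simp [h1, hne.symm]

theorem stp_sum {E : Type*} [Field E] [Fintype E] [CharP E 2] (m δ : ℕ)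
    (hδ : Odd δ) (hQ : Fintype.card E = 2 ^ m * 2 ^ m) (ψ : AddChar E ℂ) (hψ : ψ ≠ 1)
    (ρ : E) (hρ : ρ ≠ 0) :
    ‖∑ v : E, ψ (1 + ρ * v ^ δ)⁻¹‖ ≤ 8 * δ * 2 ^ m := by
  classical
  have hδ0 : 0 < δ := hδ.pos
  have hδ1 : (1 : ℝ) ≤ δ := by exact_mod_cast hδ0
  have hRpos : (0 : ℝ) < 2 ^ m := by positivity
  by_cases hR : 8 * δ ≤ 2 ^ m
  swap
  · have h1 : ‖∑ v : E, ψ (1 + ρ * v ^ δ)⁻¹‖ ≤ ∑ v : E, (1 : ℝ) := by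
      refine (norm_sum_le _ _).trans (Finset.sum_le_sum fun v _ => ?_)
      rw [AddChar.norm_apply]
    refine h1.trans ?_
    have h2 : ((2 : ℝ) ^ m) ≤ 8 * δ := by exact_mod_cast (not_le.1 hR).le
    simp only [Finset.sum_const, Finset.card_univ, hQ, nsmul_eq_mul, mul_one]
    push_cast
    nlinarith
  obtain ⟨c, hc, hcx⟩ := stp_char m hQ ψ hψ
  have h0 := stp_count m δ hδ hQ hR c ρ 0 hc hρ
  have h1 := stp_count m δ hδ hQ hR c ρ 1 hc hρ
  set Z : Finset E := Finset.univ.filter (fun v : E => ¬ (1 + ρ * v ^ δ ≠ 0)) with hZ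
  set P : Finset E := Finset.univ.filter (fun v : E => 1 + ρ * v ^ δ ≠ 0) with hP
  set P0 := P.filter (fun v => ψ (1 + ρ * v ^ δ)⁻¹ = 1) with hP0
  set P1 := P.filter (fun v => ¬ ψ (1 + ρ * v ^ δ)⁻¹ = 1) with hP1
  have hne : (1 : ℂ) ≠ -1 := by norm_num
  have hZc : Z.card ≤ δ := by
    set D : E[X] := C ρ * X ^ δ + C 1 with hD
    have hDd : D.natDegree = δ := by
      rw [hD, natDegree_add_C, natDegree_C_mul_X_pow _ _ hρ]
    have hD0 : D ≠ 0 := by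
      intro h; rw [h, natDegree_zero] at hDd; omega
    rw [← hDd]
    refine le_trans (Finset.card_le_card (t := D.roots.toFinset) ?_)
      ((Multiset.toFinset_card_le _).trans (card_roots' D))
    intro v hv
    rw [hZ, Finset.mem_filter, not_not] at hv
    rw [Multiset.mem_toFinset, mem_roots hD0, IsRoot.def]
    simp only [hD, eval_add, eval_mul, eval_C, eval_pow, eval_X]
    rw [add_comm]; exact hv.2
  have hcard : P.card + Z.card = 2 ^ m * 2 ^ m := by
    rw [← hQ, ← Finset.card_univ, hP, hZ]
    exact Finset.card_filter_add_card_filter_not _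
  have hcard2 : P0.card + P1.card = P.card := Finset.card_filter_add_card_filter_not _
  have hP0c : P0.card * 2 ≤ 2 ^ m * 2 ^ m + 6 * δ * 2 ^ m := by
    refine le_trans (Nat.mul_le_mul_right 2 (Finset.card_le_card ?_)) h0
    intro v hv
    rw [hP0, hP, Finset.mem_filter, Finset.mem_filter] at hv
    rw [Finset.mem_filter]
    refine ⟨Finset.mem_univ _, hv.1.2, ?_⟩
    rcases hcx (1 + ρ * v ^ δ)⁻¹ with h | h
    · exact h.2
    · exact absurd (hv.2.symm.trans h.1) hne
  have hP1c : P1.card * 2 ≤ 2 ^ m * 2 ^ m + 6 * δ * 2 ^ m := by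
    refine le_trans (Nat.mul_le_mul_right 2 (Finset.card_le_card ?_)) h1
    intro v hv
    rw [hP1, hP, Finset.mem_filter, Finset.mem_filter] at hv
    rw [Finset.mem_filter]
    refine ⟨Finset.mem_univ _, hv.1.2, ?_⟩
    rcases hcx (1 + ρ * v ^ δ)⁻¹ with h | h
    · exact absurd h.1 hv.2
    · exact h.2
  have hsum : ∑ v : E, ψ (1 + ρ * v ^ δ)⁻¹ = (((P0.card : ℝ) - P1.card + Z.card : ℝ) : ℂ) := by
    rw [← Finset.sum_filter_add_sum_filter_not Finset.univ (fun v : E => 1 + ρ * v ^ δ ≠ 0),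
      ← Finset.sum_filter_add_sum_filter_not P (fun v => ψ (1 + ρ * v ^ δ)⁻¹ = 1)]
    have e0 : ∑ v ∈ P0, ψ (1 + ρ * v ^ δ)⁻¹ = P0.card := by
      rw [Finset.sum_congr rfl (g := fun _ => (1 : ℂ))]
      · simp
      · intro v hv; exact (Finset.mem_filter.1 hv).2
    have e1 : ∑ v ∈ P1, ψ (1 + ρ * v ^ δ)⁻¹ = - (P1.card : ℂ) := by
      rw [Finset.sum_congr rfl (g := fun _ => (-1 : ℂ))]
      · simp
      · intro v hv
        rcases hcx (1 + ρ * v ^ δ)⁻¹ with h | h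
        · exact absurd h.1 (Finset.mem_filter.1 hv).2
        · exact h.1
    have e2 : ∑ v ∈ Z, ψ (1 + ρ * v ^ δ)⁻¹ = Z.card := by
      rw [Finset.sum_congr rfl (g := fun _ => (1 : ℂ))]
      · simp
      · intro v hv
        have : 1 + ρ * v ^ δ = 0 := not_not.1 (Finset.mem_filter.1 hv).2
        rw [this]; simp
    rw [e0, e1, e2]
    push_cast; ring
  rw [hsum, Complex.norm_real, Real.norm_eq_abs, abs_le]
  have hZc' : (Z.card : ℝ) ≤ δ := by exact_mod_cast hZc
  have hcard' : (P.card : ℝ) + Z.card = 2 ^ m * 2 ^ m := by exact_mod_cast hcard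
  have hcard2' : (P0.card : ℝ) + P1.card = P.card := by exact_mod_cast hcard2
  have hP0c' : (P0.card : ℝ) * 2 ≤ 2 ^ m * 2 ^ m + 6 * δ * 2 ^ m := by exact_mod_cast hP0c
  have hP1c' : (P1.card : ℝ) * 2 ≤ 2 ^ m * 2 ^ m + 6 * δ * 2 ^ m := by exact_mod_cast hP1c
  have hZ0 : (0 : ℝ) ≤ Z.card := Nat.cast_nonneg _
  have h2m : (1 : ℝ) ≤ 2 ^ m := one_le_pow₀ (by norm_num)
  have hprod : (δ : ℝ) ≤ δ * 2 ^ m := by nlinarith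
  constructor <;> nlinarith

theorem ext_sum_bound {F E : Type*} [Field F] [Fintype F] [Field E] [Fintype E] [Algebra F E]
    [CharP E 2] (m : ℕ) (hq : Odd (Fintype.card F - 1))
    (hQ : Fintype.card E = 2 ^ m * 2 ^ m) (χ : MulChar F ℂ) (ψ : AddChar E ℂ) (hψ : ψ ≠ 1) :
    ‖∑ t : E, χ (Algebra.norm F (1 + t)) * χ⁻¹ (Algebra.norm F t) * ψ t‖ ≤
      8 * (Fintype.card F - 1 : ℕ) * 2 ^ m + 2 := by
  classical
  have hχn : ∀ a : F, ‖χ a‖ ≤ 1 := by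
    intro a
    by_cases ha : a = 0
    · rw [ha, MulChar.map_zero]; simp
    · have h1 : χ a ^ (Fintype.card F - 1) = 1 := by
        rw [← map_pow, FiniteField.pow_card_sub_one_eq_one a ha, map_one]
      exact (Complex.norm_eq_one_of_pow_eq_one h1 hq.pos.ne').le
  set δ := Fintype.card F - 1 with hδ
  let G : E → ℂ := fun u => χ (Algebra.norm F u) * ψ (1 + u)⁻¹
  have h11 : (1 : E) + 1 = 0 := CharTwo.add_self_eq_zero 1
  have hbij : Function.Bijective (fun t : E => 1 + t⁻¹) :=
    (Equiv.addLeft (1 : E)).bijective.comp inv_involutive.bijective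
  have hGsum : ∑ u, G u = ∑ t, G (1 + t⁻¹) := (hbij.sum_comp G).symm
  have hS : ∑ t : E, χ (Algebra.norm F (1 + t)) * χ⁻¹ (Algebra.norm F t) * ψ t = ∑ u, G u - 1 := by
    rw [hGsum, ← Finset.sum_erase_add _ _ (Finset.mem_univ (0 : E)),
      ← Finset.sum_erase_add _ (fun t => G (1 + t⁻¹)) (Finset.mem_univ (0 : E))]
    have e1 : G (1 + 0⁻¹) = 1 := by simp [G, h11]
    have e2 : χ (Algebra.norm F (1 + (0 : E))) * χ⁻¹ (Algebra.norm F (0 : E)) * ψ 0 = 0 := by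
      rw [Algebra.norm_zero, MulChar.map_zero]; simp
    rw [e1, e2, add_zero, add_sub_cancel_right]
    refine Finset.sum_congr rfl fun t ht => ?_
    have ht0 : t ≠ 0 := Finset.ne_of_mem_erase ht
    simp only [G]
    have e3 : (1 + (1 + t⁻¹))⁻¹ = t := by rw [← add_assoc, h11, zero_add, inv_inv]
    have e4 : 1 + t⁻¹ = (1 + t) * t⁻¹ := by field_simp; ring
    have e5 : Algebra.norm F t⁻¹ = (Algebra.norm F t)⁻¹ := by
      refine eq_inv_of_mul_eq_one_left ?_
      rw [← map_mul, inv_mul_cancel₀ ht0, map_one]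
    rw [e3, e4, map_mul, map_mul, MulChar.inv_apply', e5]
  have hshift : ∀ v : E, v ≠ 0 → ∑ u, G u = ∑ u, χ (Algebra.norm F u) * ψ (1 + u * v ^ δ)⁻¹ := by
    intro v hv
    have hvδ : v ^ δ ≠ 0 := pow_ne_zero _ hv
    have hb : Function.Bijective (fun u : E => u * v ^ δ) := mulRight_bijective₀ _ hvδ
    rw [← hb.sum_comp G]
    refine Finset.sum_congr rfl fun u _ => ?_
    simp only [G]
    have hN : Algebra.norm F v ≠ 0 := Algebra.norm_ne_zero_iff.2 hv
    rw [map_mul, map_pow, FiniteField.pow_card_sub_one_eq_one _ hN, mul_one]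
  have hcard : (Finset.univ.erase (0 : E)).card = Fintype.card E - 1 := by
    rw [Finset.card_erase_of_mem (Finset.mem_univ _), Finset.card_univ]
  have hE1 : 1 < Fintype.card E := Fintype.one_lt_card
  have hinner : ∀ u : E, u ≠ 0 →
      ‖∑ v ∈ Finset.univ.erase (0 : E), ψ (1 + u * v ^ δ)⁻¹‖ ≤ 8 * δ * 2 ^ m + 1 := by
    intro u hu
    have h1 := stp_sum m δ hq hQ ψ hψ u hu
    rw [← Finset.sum_erase_add _ _ (Finset.mem_univ (0 : E))] at h1
    have h2 := norm_sub_le (∑ v ∈ Finset.univ.erase (0 : E), ψ (1 + u * v ^ δ)⁻¹ +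
      ψ (1 + u * 0 ^ δ)⁻¹) (ψ (1 + u * 0 ^ δ)⁻¹)
    rw [add_sub_cancel_right, AddChar.norm_apply] at h2
    linarith
  have hmain : ((Fintype.card E - 1 : ℕ) : ℂ) * ∑ u, G u = ∑ u ∈ Finset.univ.erase (0 : E),
      χ (Algebra.norm F u) * ∑ v ∈ Finset.univ.erase (0 : E), ψ (1 + u * v ^ δ)⁻¹ := by
    have h1 : ∑ v ∈ Finset.univ.erase (0 : E), ∑ u, G u =
        ((Fintype.card E - 1 : ℕ) : ℂ) * ∑ u, G u := by
      rw [Finset.sum_const, hcard, nsmul_eq_mul]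
    rw [← h1, Finset.sum_congr rfl (fun v hv => hshift v (Finset.ne_of_mem_erase hv)),
      Finset.sum_comm, ← Finset.sum_erase_add _ _ (Finset.mem_univ (0 : E))]
    simp only [Algebra.norm_zero, MulChar.map_zero, zero_mul, Finset.sum_const_zero, add_zero,
      Finset.mul_sum]
  have hG : ‖∑ u, G u‖ ≤ 8 * δ * 2 ^ m + 1 := by
    have hpos : (0 : ℝ) < (Fintype.card E - 1 : ℕ) := by exact_mod_cast (by omega)
    refine le_of_mul_le_mul_left ?_ hpos
    have : ((Fintype.card E - 1 : ℕ) : ℝ) * ‖∑ u, G u‖ =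
        ‖((Fintype.card E - 1 : ℕ) : ℂ) * ∑ u, G u‖ := by
      rw [norm_mul, Complex.norm_natCast]
    rw [this, hmain]
    refine (norm_sum_le _ _).trans ?_
    rw [← hcard, ← nsmul_eq_mul]
    refine Finset.sum_le_card_nsmul _ _ _ fun u hu => ?_
    rw [norm_mul]
    have h1 := hinner u (Finset.ne_of_mem_erase hu)
    have h2 := hχn (Algebra.norm F u)
    calc _ ≤ 1 * (8 * δ * 2 ^ m + 1 : ℝ) := by gcongr
      _ = _ := one_mul _
  rw [hS]
  refine (norm_sub_le _ _).trans ?_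
  rw [norm_one]
  linarith

/-- the multiplicative function on monic polynomials attached to the characters -/
def lamF {F : Type*} [Field F] (χ : MulChar F ℂ) (ψ : AddChar F ℂ) (f : F[X]) : ℂ :=
  χ (f.eval 1) * χ⁻¹ (f.eval 0) * ψ f.nextCoeff

theorem lamF_one {F : Type*} [Field F] (χ : MulChar F ℂ) (ψ : AddChar F ℂ) :
    lamF χ ψ 1 = 1 := by
  have h : (1 : F[X]).nextCoeff = 0 := by
    rw [← C_1]; exact nextCoeff_C_eq_zero 1
  simp [lamF, h]

theorem lamF_mul {F : Type*} [Field F] (χ : MulChar F ℂ) (ψ : AddChar F ℂ) {f g : F[X]}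
    (hf : f.Monic) (hg : g.Monic) : lamF χ ψ (f * g) = lamF χ ψ f * lamF χ ψ g := by
  simp only [lamF, eval_mul, map_mul, hf.nextCoeff_mul hg, AddChar.map_add_eq_mul]
  ring

theorem lamF_pow {F : Type*} [Field F] (χ : MulChar F ℂ) (ψ : AddChar F ℂ) {f : F[X]}
    (hf : f.Monic) (k : ℕ) : lamF χ ψ (f ^ k) = lamF χ ψ f ^ k := by
  induction k with
  | zero => simp [lamF_one]
  | succ k ih => rw [pow_succ, lamF_mul χ ψ (hf.pow k) hf, ih, pow_succ]

theorem norm_eq_minpoly_pow {F E : Type*} [Field F] [CharP F 2] [Field E] [Algebra F E]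
    [FiniteDimensional F E] (t : E) (e : ℕ) (he : e * (minpoly F t).natDegree = Module.finrank F E) :
    Algebra.norm F t = ((minpoly F t).eval 0) ^ e ∧
    Algebra.trace F E t = e * (minpoly F t).nextCoeff := by
  have hIsInt : IsIntegral F t := IsIntegral.of_finite F t
  have hd : 0 < (minpoly F t).natDegree := minpoly.natDegree_pos hIsInt
  have hfr : Module.finrank (IntermediateField.adjoin F {t}) E = e := by
    have h1 := Module.finrank_mul_finrank F (IntermediateField.adjoin F {t}) E
    rw [IntermediateField.adjoin.finrank hIsInt, ← he, mul_comm] at h1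
    exact Nat.eq_of_mul_eq_mul_right hd h1
  constructor
  · rw [Algebra.norm_eq_norm_adjoin F t, hfr]
    congr 1
    have := Algebra.PowerBasis.norm_gen_eq_coeff_zero_minpoly
      (IntermediateField.adjoin.powerBasis hIsInt)
    rw [IntermediateField.adjoin.powerBasis_gen hIsInt] at this
    rw [this, CharTwo.neg_eq, one_pow, one_mul, IntermediateField.minpoly_gen, coeff_zero_eq_eval_zero]
  · rw [trace_eq_finrank_mul_minpoly_nextCoeff, hfr, CharTwo.neg_eq]

theorem lamF_minpoly {F E : Type*} [Field F] [CharP F 2] [Field E] [Algebra F E]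
    [FiniteDimensional F E] (χ : MulChar F ℂ) (ψ : AddChar F ℂ)
    (t : E) (e : ℕ) (he : e * (minpoly F t).natDegree = Module.finrank F E) :
    χ (Algebra.norm F (1 + t)) * χ⁻¹ (Algebra.norm F t) * ψ (Algebra.trace F E t) =
      lamF χ ψ (minpoly F t) ^ e := by
  have h1 : minpoly F (1 + t) = (minpoly F t).comp (X - C 1) := by
    rw [add_comm, ← minpoly.add_algebraMap, map_one]
  have he' : e * (minpoly F (1 + t)).natDegree = Module.finrank F E := by
    rw [h1, natDegree_comp, natDegree_X_sub_C, mul_one, he]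
  rw [(norm_eq_minpoly_pow t e he).1, (norm_eq_minpoly_pow t e he).2,
    (norm_eq_minpoly_pow (1 + t) e he').1, h1, lamF, ← nsmul_eq_mul, AddChar.map_nsmul_eq_pow]
  simp only [eval_comp, eval_sub, eval_X, eval_C, zero_sub, CharTwo.neg_eq, map_pow, mul_pow]

theorem mon_finite (F : Type*) [Field F] [Finite F] (k : ℕ) :
    {f : F[X] | f.Monic ∧ f.natDegree = k}.Finite := by
  have : Finite (degreeLT F (k + 1)) := Finite.of_equiv _ (degreeLTEquiv F (k + 1)).toEquiv.symm
  refine Set.Finite.subset (Set.toFinite (degreeLT F (k + 1) : Set F[X])) ?_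
  rintro f ⟨-, hf⟩
  rw [SetLike.mem_coe, mem_degreeLT]
  exact degree_le_natDegree.trans_lt (by rw [hf]; exact_mod_cast Nat.lt_succ_self k)

/-- monic polynomials of degree `k` -/
def monF (F : Type*) [Field F] [Finite F] (k : ℕ) : Finset F[X] := (mon_finite F k).toFinset

theorem mem_monF {F : Type*} [Field F] [Finite F] {k : ℕ} {f : F[X]} :
    f ∈ monF F k ↔ f.Monic ∧ f.natDegree = k := by
  simp [monF]

theorem pairs_finite (F : Type*) [Field F] [Finite F] (j : ℕ) :
    {x : F[X] × ℕ | x.1.Monic ∧ Irreducible x.1 ∧ 1 ≤ x.2 ∧ x.2 * x.1.natDegree = j}.Finite := by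
  refine Set.Finite.subset ((Set.Finite.biUnion (Set.finite_Iic j)
    (fun k _ => mon_finite F k)).prod (Set.finite_Iic j)) ?_
  rintro ⟨P, e⟩ ⟨h1, h2, h3, h4⟩
  have hd : 1 ≤ P.natDegree := h2.natDegree_pos
  simp only at h1 h2 h3 h4
  refine ⟨?_, ?_⟩
  · simp only [Set.mem_iUnion, Set.mem_Iic]
    exact ⟨P.natDegree, by nlinarith, h1, rfl⟩
  · simp only [Set.mem_Iic]; nlinarith

/-- pairs `(P, e)` with `P` monic irreducible and `deg (P ^ e) = j` -/
def pairsF (F : Type*) [Field F] [Finite F] (j : ℕ) : Finset (F[X] × ℕ) := (pairs_finite F j).toFinset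

theorem mem_pairsF {F : Type*} [Field F] [Finite F] {j : ℕ} {x : F[X] × ℕ} :
    x ∈ pairsF F j ↔ x.1.Monic ∧ Irreducible x.1 ∧ 1 ≤ x.2 ∧ x.2 * x.1.natDegree = j := by
  simp [pairsF]

/-- power sums -/
def powS {F : Type*} [Field F] [Finite F] (χ : MulChar F ℂ) (ψ : AddChar F ℂ) (j : ℕ) : ℂ :=
  ∑ x ∈ pairsF F j, (x.1.natDegree : ℂ) * lamF χ ψ x.1 ^ x.2

/-- coefficients of the L-function -/
def coefL {F : Type*} [Field F] [Finite F] (χ : MulChar F ℂ) (ψ : AddChar F ℂ) (j : ℕ) : ℂ :=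
  ∑ f ∈ monF F j, lamF χ ψ f

theorem coefL_zero {F : Type*} [Field F] [Finite F] (χ : MulChar F ℂ) (ψ : AddChar F ℂ) :
    coefL χ ψ 0 = 1 := by
  have : monF F 0 = {1} := by
    ext f
    rw [mem_monF, Finset.mem_singleton]
    constructor
    · rintro ⟨h1, h2⟩
      exact h1.natDegree_eq_zero.1 h2
    · rintro rfl
      exact ⟨monic_one, natDegree_one⟩
  rw [coefL, this, Finset.sum_singleton, lamF_one]

theorem coefL_eq_zero {F : Type*} [Field F] [Finite F] (χ : MulChar F ℂ) (ψ : AddChar F ℂ)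
    [CharP F 2] (hψ : ψ ≠ 1) (k : ℕ) (hk : 3 ≤ k) : coefL χ ψ k = 0 := by
  obtain ⟨b, hb⟩ : ∃ b, ψ b ≠ 1 := by
    by_contra! h
    exact hψ (by ext x; simpa using h x)
  obtain ⟨i, rfl⟩ := Nat.exists_eq_add_of_le hk
  set h : F[X] := C b * X ^ (2 + i) + C b * X ^ (1 + i) with hh
  have hdeg : h.degree < (3 + i : ℕ) := by
    apply (degree_add_le _ _).trans_lt
    rw [max_lt_iff]
    constructor
    · exact (degree_C_mul_X_pow_le _ _).trans_lt (by exact_mod_cast (by omega))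
    · exact (degree_C_mul_X_pow_le _ _).trans_lt (by exact_mod_cast (by omega))
  have h2 : h + h = 0 := CharTwo.add_self_eq_zero h
  have hmem : ∀ f ∈ monF F (3 + i), f + h ∈ monF F (3 + i) := by
    intro f hf
    rw [mem_monF] at hf ⊢
    have hfd : f.degree = (3 + i : ℕ) := by
      rw [degree_eq_natDegree hf.1.ne_zero, hf.2]
    have hlt : h.degree < f.degree := by rw [hfd]; exact hdeg
    refine ⟨hf.1.add_of_left hlt, ?_⟩
    rw [natDegree_eq_of_degree_eq (degree_add_eq_left_of_degree_lt hlt), hf.2]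
  have hl : ∀ f ∈ monF F (3 + i), lamF χ ψ (f + h) = ψ b * lamF χ ψ f := by
    intro f hf
    have hf' := hmem f hf
    rw [mem_monF] at hf hf'
    have e0 : h.eval 0 = 0 := by simp [hh]
    have e1 : h.eval 1 = 0 := by simp [hh, CharTwo.add_self_eq_zero]
    have e2 : (f + h).nextCoeff = f.nextCoeff + b := by
      rw [nextCoeff_of_natDegree_pos (by omega), nextCoeff_of_natDegree_pos (by omega), hf.2, hf'.2,
        coeff_add]
      congr 1
      rw [hh, coeff_add, coeff_C_mul, coeff_C_mul, coeff_X_pow, coeff_X_pow, if_pos (by omega),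
        if_neg (by omega)]
      simp
    simp only [lamF, eval_add, e0, e1, add_zero, e2, AddChar.map_add_eq_mul]
    ring
  have key : coefL χ ψ (3 + i) = ψ b * coefL χ ψ (3 + i) := by
    conv_rhs => rw [coefL, Finset.mul_sum, ← Finset.sum_congr rfl hl]
    rw [coefL]
    refine (Finset.sum_nbij' (fun f => f + h) (fun f => f + h) hmem hmem ?_ ?_ ?_).symm
    · intro f _; rw [add_assoc, h2, add_zero]
    · intro f _; rw [add_assoc, h2, add_zero]
    · intro f _; rfl
  have : (1 - ψ b) * coefL χ ψ (3 + i) = 0 := by linear_combination key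
  rcases mul_eq_zero.1 this with h0 | h0
  · exact absurd (sub_eq_zero.1 h0).symm hb
  · exact h0

theorem ext_powS {F E : Type*} [Field F] [Fintype F] [CharP F 2] [Field E] [Fintype E] [Algebra F E]
    (χ : MulChar F ℂ) (ψ : AddChar F ℂ) :
    ∑ t : E, χ (Algebra.norm F (1 + t)) * χ⁻¹ (Algebra.norm F t) * ψ (Algebra.trace F E t) =
      powS χ ψ (Module.finrank F E) := by
  classical
  set j := Module.finrank F E with hj
  have hj0 : 0 < j := Module.finrank_pos
  have hIsInt : ∀ t : E, IsIntegral F t := fun t => IsIntegral.of_finite F t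
  have hdvd : ∀ t : E, (j / (minpoly F t).natDegree) * (minpoly F t).natDegree = j :=
    fun t => Nat.div_mul_cancel (minpoly.degree_dvd (hIsInt t))
  let g : E → F[X] × ℕ := fun t => (minpoly F t, j / (minpoly F t).natDegree)
  have hg : ∀ t ∈ (Finset.univ : Finset E), g t ∈ pairsF F j := by
    intro t _
    rw [mem_pairsF]
    refine ⟨minpoly.monic (hIsInt t), minpoly.irreducible (hIsInt t), ?_, hdvd t⟩
    rcases Nat.eq_zero_or_pos (j / (minpoly F t).natDegree) with h | h
    · have := hdvd t
      rw [h] at this; omega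
    · exact h
  rw [← Finset.sum_fiberwise_of_maps_to hg, powS]
  refine Finset.sum_congr rfl fun x hx => ?_
  rw [mem_pairsF] at hx
  obtain ⟨hm, hi, he, hdeg⟩ := hx
  have hd0 := hi.natDegree_pos
  have hsub : (Finset.univ.filter fun t => g t = x) = (x.1.map (algebraMap F E)).roots.toFinset := by
    ext t
    rw [Finset.mem_filter, Multiset.mem_toFinset, mem_roots (map_ne_zero hm.ne_zero), IsRoot.def,
      eval_map_algebraMap]
    constructor
    · rintro ⟨-, h⟩
      rw [← h]; exact minpoly.aeval F t
    · intro h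
      refine ⟨Finset.mem_univ _, ?_⟩
      have h1 := minpoly.eq_of_irreducible_of_monic hi h hm
      refine Prod.ext h1.symm ?_
      simp only [g]
      rw [← h1, ← hdeg, Nat.mul_div_cancel _ hd0]
  have hval : ∀ t ∈ Finset.univ.filter (fun t => g t = x),
      χ (Algebra.norm F (1 + t)) * χ⁻¹ (Algebra.norm F t) * ψ (Algebra.trace F E t) =
      lamF χ ψ x.1 ^ x.2 := by
    intro t ht
    rw [Finset.mem_filter] at ht
    rw [lamF_minpoly χ ψ t _ (hdvd t), ← ht.2]
  rw [Finset.sum_congr rfl hval, Finset.sum_const, nsmul_eq_mul]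
  congr 2
  rw [hsub]
  have hdvdX : x.1 ∣ X ^ Fintype.card E - X := by
    have := (hi.natDegree_dvd_iff_dvd_X_pow_card_pow_sub_X (n := j)).1 ⟨x.2, by rw [← hdeg, mul_comm]⟩
    rwa [Nat.card_eq_fintype_card, hj, ← Module.card_eq_pow_finrank] at this
  have hdvdE : x.1.map (algebraMap F E) ∣ X ^ Fintype.card E - X := by
    have := map_dvd (mapRingHom (algebraMap F E)) hdvdX
    simpa using this
  have hXs : (X ^ Fintype.card E - X : E[X]).Splits := by
    rw [splits_iff_card_roots, FiniteField.roots_X_pow_card_sub_X,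
      FiniteField.X_pow_card_sub_X_natDegree_eq E Fintype.one_lt_card]
    rfl
  have hX0 : (X ^ Fintype.card E - X : E[X]) ≠ 0 :=
    FiniteField.X_pow_card_sub_X_ne_zero E Fintype.one_lt_card
  have hs := hXs.of_dvd hX0 hdvdE
  have hnd : (x.1.map (algebraMap F E)).roots.Nodup := by
    refine Multiset.nodup_of_le (roots.le_of_dvd hX0 hdvdE) ?_
    rw [FiniteField.roots_X_pow_card_sub_X]
    exact Finset.nodup _
  rw [Multiset.toFinset_card_of_nodup hnd, ← hs.natDegree_eq_card_roots, natDegree_map]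

theorem pow_dvd_iff_count {F : Type*} [Field F] [DecidableEq F] {f P : F[X]} (hf : f ≠ 0)
    (hm : P.Monic) (hi : Irreducible P) (e : ℕ) :
    P ^ e ∣ f ↔ e ≤ (UniqueFactorizationMonoid.normalizedFactors f).count P := by
  rw [UniqueFactorizationMonoid.dvd_iff_normalizedFactors_le_normalizedFactors
    (pow_ne_zero _ hi.ne_zero) hf, UniqueFactorizationMonoid.normalizedFactors_pow,
    UniqueFactorizationMonoid.normalizedFactors_irreducible hi, hm.normalize_eq_self,
    Multiset.le_count_iff_replicate_le, Multiset.nsmul_singleton]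

theorem deg_sum {F : Type*} [Field F] [Finite F] {f : F[X]} (hf : f.Monic) (k : ℕ)
    (hk : f.natDegree = k) [DecidableRel (fun a b : F[X] => a ∣ b)] :
    k = ∑ j ∈ Finset.Icc 1 k, ∑ x ∈ (pairsF F j).filter (fun x => x.1 ^ x.2 ∣ f),
      x.1.natDegree := by
  classical
  set s := UniqueFactorizationMonoid.normalizedFactors f with hs
  have hf0 := hf.ne_zero
  have hmem : ∀ P ∈ s, P.Monic ∧ Irreducible P := by
    intro P hP
    have hi := UniqueFactorizationMonoid.irreducible_of_normalized_factor P hP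
    refine ⟨?_, hi⟩
    have := UniqueFactorizationMonoid.normalize_normalized_factor P hP
    rw [← this]
    exact monic_normalize hi.ne_zero
  have h1 : f.natDegree = (s.map natDegree).sum := by
    have h2 : s.prod = f := by
      rw [hs, UniqueFactorizationMonoid.prod_normalizedFactors_eq hf0, hf.normalize_eq_self]
    rw [← natDegree_multiset_prod_of_monic s (fun P hP => (hmem P hP).1), h2]
  have h3 : f.natDegree = ∑ P ∈ s.toFinset, ∑ e ∈ Finset.Icc 1 (s.count P), P.natDegree := by
    rw [h1, Finset.sum_multiset_map_count]
    refine Finset.sum_congr rfl fun P _ => ?_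
    rw [Finset.sum_const, Nat.card_Icc, Nat.add_sub_cancel]
  rw [← hk]
  conv_lhs => rw [h3]
  rw [Finset.sum_sigma', Finset.sum_sigma']
  refine Finset.sum_bij' (fun a _ => (⟨a.2 * a.1.natDegree, (a.1, a.2)⟩ : (_ : ℕ) × (F[X] × ℕ)))
    (fun b _ => (⟨b.2.1, b.2.2⟩ : (_ : F[X]) × ℕ)) ?_ ?_ ?_ ?_ ?_
  · rintro ⟨P, e⟩ h
    simp only [Finset.mem_sigma, Multiset.mem_toFinset, Finset.mem_Icc, Finset.mem_filter,
      mem_pairsF] at h ⊢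
    obtain ⟨hP, he1, he2⟩ := h
    have ⟨hm, hi⟩ := hmem P hP
    have hd := (pow_dvd_iff_count hf0 hm hi e).2 he2
    refine ⟨⟨Nat.mul_pos he1 hi.natDegree_pos, ?_⟩, ⟨hm, hi, he1, trivial⟩, hd⟩
    rw [← natDegree_pow]
    exact natDegree_le_of_dvd hd hf0
  · rintro ⟨j, P, e⟩ h
    simp only [Finset.mem_sigma, Multiset.mem_toFinset, Finset.mem_Icc, Finset.mem_filter,
      mem_pairsF] at h ⊢
    obtain ⟨-, ⟨hm, hi, he1, -⟩, hd⟩ := h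
    have hc := (pow_dvd_iff_count hf0 hm hi e).1 hd
    exact ⟨Multiset.count_pos.1 (lt_of_lt_of_le he1 hc), he1, hc⟩
  · rintro ⟨P, e⟩ h; rfl
  · rintro ⟨j, P, e⟩ h
    simp only [Finset.mem_sigma, Finset.mem_filter, mem_pairsF] at h
    obtain ⟨-, ⟨-, -, -, h4⟩, -⟩ := h
    simp [h4]
  · rintro ⟨P, e⟩ h; rfl

theorem sum_mul_dvd {F : Type*} [Field F] [Finite F] (χ : MulChar F ℂ) (ψ : AddChar F ℂ)
    [DecidableRel (fun a b : F[X] => a ∣ b)]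
    (k j : ℕ) (hjk : j ≤ k) (Q : F[X]) (hQ : Q.Monic) (hj : Q.natDegree = j) :
    ∑ f ∈ (monF F k).filter (fun f => Q ∣ f), lamF χ ψ f = lamF χ ψ Q * coefL χ ψ (k - j) := by
  classical
  rw [coefL, Finset.mul_sum]
  refine (Finset.sum_bij (fun g _ => Q * g) ?_ ?_ ?_ ?_).symm
  · intro g hg
    rw [mem_monF] at hg
    rw [Finset.mem_filter, mem_monF]
    refine ⟨⟨hQ.mul hg.1, ?_⟩, dvd_mul_right _ _⟩
    rw [hQ.natDegree_mul hg.1, hj, hg.2]; omega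
  · intro a _ b _ h
    exact mul_left_cancel₀ hQ.ne_zero h
  · intro f hf
    rw [Finset.mem_filter, mem_monF] at hf
    obtain ⟨⟨hm, hd⟩, g, rfl⟩ := hf
    have hg : g.Monic := hQ.of_mul_monic_left hm
    refine ⟨g, ?_, rfl⟩
    rw [mem_monF]
    rw [hQ.natDegree_mul hg] at hd
    exact ⟨hg, by omega⟩
  · intro g hg
    rw [mem_monF] at hg
    rw [lamF_mul χ ψ hQ hg.1]

theorem euler_id {F : Type*} [Field F] [Finite F] (χ : MulChar F ℂ) (ψ : AddChar F ℂ) (k : ℕ) :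
    (k : ℂ) * coefL χ ψ k = ∑ j ∈ Finset.Icc 1 k, powS χ ψ j * coefL χ ψ (k - j) := by
  classical
  have h1 : (k : ℂ) * coefL χ ψ k = ∑ f ∈ monF F k, ∑ j ∈ Finset.Icc 1 k, ∑ x ∈ pairsF F j,
      if x.1 ^ x.2 ∣ f then (x.1.natDegree : ℂ) * lamF χ ψ f else 0 := by
    rw [coefL, Finset.mul_sum]
    refine Finset.sum_congr rfl fun f hf => ?_
    rw [mem_monF] at hf
    have := deg_sum hf.1 k hf.2
    conv_lhs => rw [this]
    push_cast
    rw [Finset.sum_mul]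
    refine Finset.sum_congr rfl fun j _ => ?_
    rw [Finset.sum_filter, Finset.sum_mul]
    refine Finset.sum_congr rfl fun x _ => ?_
    split_ifs <;> simp
  rw [h1, Finset.sum_comm]
  refine Finset.sum_congr rfl fun j hj => ?_
  rw [Finset.sum_comm, powS, Finset.sum_mul]
  refine Finset.sum_congr rfl fun x hx => ?_
  rw [mem_pairsF] at hx
  rw [← Finset.sum_filter, ← Finset.mul_sum, sum_mul_dvd χ ψ k j (Finset.mem_Icc.1 hj).2 _
    (hx.1.pow _) (by rw [natDegree_pow, hx.2.2.2]), lamF_pow χ ψ hx.1, mul_assoc]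

theorem pow_bdd_le_one (r K : ℝ) (h : ∀ i : ℕ, 1 ≤ i → r ^ i ≤ K) : r ≤ 1 := by
  by_contra! hr
  obtain ⟨n, hn⟩ := pow_unbounded_of_one_lt K hr
  have h1 := h (n + 1) (by omega)
  have h2 : r ^ n ≤ r ^ (n + 1) := pow_le_pow_right₀ hr.le (by omega)
  linarith

theorem amplify_aux (u v : ℂ) (K : ℝ) (h : ∀ i : ℕ, 1 ≤ i → ‖u ^ i + v ^ i‖ ≤ K) : ‖u‖ ≤ 1 := by
  have huv : ‖u‖ * ‖v‖ ≤ 1 := by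
    refine pow_bdd_le_one _ ((K * K + K) / 2) fun i hi => ?_
    have h1 : 2 * (u * v) ^ i = (u ^ i + v ^ i) * (u ^ i + v ^ i) - (u ^ (2 * i) + v ^ (2 * i)) := by
      ring
    have h2 : ‖2 * (u * v) ^ i‖ ≤ K * K + K := by
      rw [h1]
      refine (norm_sub_le _ _).trans ?_
      rw [norm_mul]
      have h3 := h i hi
      have h4 := h (2 * i) (by omega)
      have := norm_nonneg (u ^ i + v ^ i)
      have hK : 0 ≤ K := this.trans h3
      gcongr
    rw [norm_mul, norm_pow, norm_mul] at h2
    simp only [Complex.norm_ofNat] at h2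
    linarith
  by_contra! hu
  have hv : ‖v‖ ≤ 1 := by
    by_contra! hv
    nlinarith
  have : ‖u‖ ≤ 1 := by
    refine pow_bdd_le_one _ (K + 1) fun i hi => ?_
    have h1 := h i hi
    have h2 := norm_sub_le (u ^ i + v ^ i) (v ^ i)
    rw [add_sub_cancel_right, norm_pow, norm_pow v] at h2
    have h3 : ‖v‖ ^ i ≤ 1 := pow_le_one₀ (norm_nonneg _) hv
    linarith
  linarith

theorem amplify (u v : ℂ) (K q : ℝ) (hq : 0 < q)
    (h : ∀ i : ℕ, 1 ≤ i → ‖u ^ i + v ^ i‖ ≤ K * q ^ i) : ‖u‖ ≤ q := by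
  have hqc : (q : ℂ) ≠ 0 := by exact_mod_cast hq.ne'
  have := amplify_aux (u / q) (v / q) K fun i hi => by
    rw [div_pow, div_pow, ← add_div, norm_div, norm_pow, Complex.norm_real, Real.norm_of_nonneg hq.le,
      div_le_iff₀ (pow_pos hq i)]
    exact h i hi
  rw [norm_div, Complex.norm_real, Real.norm_of_nonneg hq.le, div_le_one hq] at this
  exact this

theorem newton_rec (L S : ℕ → ℂ) (h0 : L 0 = 1) (h3 : ∀ k, 3 ≤ k → L k = 0)
    (hE : ∀ k : ℕ, (k : ℂ) * L k = ∑ j ∈ Finset.Icc 1 k, S j * L (k - j)) :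
    ∃ α β : ℂ, ∀ k, 1 ≤ k → S k = -(α ^ k + β ^ k) := by
  obtain ⟨z, hz⟩ := IsAlgClosed.exists_pow_nat_eq (L 1 ^ 2 - 4 * L 2) (n := 2) (by norm_num)
  refine ⟨(-L 1 + z) / 2, (-L 1 - z) / 2, ?_⟩
  set α := (-L 1 + z) / 2 with hα
  set β := (-L 1 - z) / 2 with hβ
  have hs : L 1 = -(α + β) := by rw [hα, hβ]; ring
  have hp : L 2 = α * β := by rw [hα, hβ]; linear_combination (1 / 4) * hz
  have hS1 : S 1 = -(α + β) := by
    have := hE 1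
    simp [h0] at this
    rw [← this, hs]
  have hS2 : S 2 = -(α ^ 2 + β ^ 2) := by
    have := hE 2
    simp [Finset.sum_Icc_succ_top, h0] at this
    rw [hp, hS1, hs] at this
    linear_combination -this
  have hrec : ∀ k, S (k + 3) = (α + β) * S (k + 2) - α * β * S (k + 1) := by
    intro k
    have := hE (k + 3)
    rw [h3 _ (by omega), Finset.sum_Icc_succ_top (by omega), Finset.sum_Icc_succ_top (by omega),
      Finset.sum_Icc_succ_top (by omega), Finset.sum_eq_zero] at this
    · have e1 : k + 3 - (k + 1) = 2 := by omega
      have e2 : k + 3 - (k + 1 + 1) = 1 := by omega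
      have e3 : k + 3 - (k + 2 + 1) = 0 := by omega
      rw [e1, e2, e3, h0, hs, hp] at this
      linear_combination -this
    · intro j hj
      rw [Finset.mem_Icc] at hj
      rw [h3 _ (by omega), mul_zero]
  have key : ∀ k, S (k + 1) = -(α ^ (k + 1) + β ^ (k + 1)) ∧
      S (k + 2) = -(α ^ (k + 2) + β ^ (k + 2)) := by
    intro k
    induction k with
    | zero => exact ⟨by simpa using hS1, hS2⟩
    | succ k ih =>
      refine ⟨ih.2, ?_⟩
      rw [show k + 1 + 2 = k + 3 by ring, hrec, ih.1, ih.2]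
      ring
  intro k hk
  obtain ⟨i, rfl⟩ := Nat.exists_eq_add_of_le' hk
  exact (key i).1

theorem key_bound {F : Type*} [Field F] [Fintype F] (n : ℕ) (hn : 1 ≤ n)
    (hcard : Fintype.card F = 2 ^ n) (χ : MulChar F ℂ) (ψ : AddChar F ℂ) (hψ : ψ ≠ 1) :
    ‖∑ t : F, χ (1 + t) * χ⁻¹ t * ψ t‖ ^ 2 ≤ 4 * 2 ^ n := by
  classical
  have : Fact (Nat.Prime 2) := ⟨Nat.prime_two⟩
  have : CharP F 2 := by
    apply charP_of_card_eq_prime_pow (f := n)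
    rw [hcard]
  obtain ⟨α, β, hαβ⟩ := newton_rec (coefL χ ψ) (powS χ ψ) (coefL_zero χ ψ)
    (coefL_eq_zero χ ψ hψ) (euler_id χ ψ)
  have hodd : Odd (Fintype.card F - 1) := by
    rw [hcard]
    exact Nat.Even.sub_odd Nat.one_le_two_pow (Nat.even_pow.2 ⟨even_two, by omega⟩) odd_one
  have hb : ∀ i : ℕ, 1 ≤ i → ‖(α ^ 2) ^ i + (β ^ 2) ^ i‖ ≤
      (8 * (Fintype.card F - 1 : ℕ) + 2 : ℝ) * ((2 : ℝ) ^ n) ^ i := by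
    intro i hi
    have : NeZero (2 * i) := ⟨by omega⟩
    let E := FiniteField.Extension F 2 (2 * i)
    let _ : Fintype E := Fintype.ofFinite E
    have : CharP E 2 := charP_of_injective_algebraMap (algebraMap F E).injective 2
    have hfr : Module.finrank F E = 2 * i := FiniteField.finrank_extension F 2 (2 * i)
    have hQ : Fintype.card E = 2 ^ (n * i) * 2 ^ (n * i) := by
      rw [Module.card_eq_pow_finrank (K := F), hfr, hcard]
      ring
    have hsurj := Algebra.trace_surjective F E
    let Ψ : AddChar E ℂ := ψ.compAddMonoidHom (Algebra.trace F E).toAddMonoidHom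
    have hΨ : Ψ ≠ 1 := by
      intro h
      apply hψ
      ext x
      obtain ⟨t, rfl⟩ := hsurj x
      have := DFunLike.congr_fun h t
      simpa [Ψ] using this
    have h1 := ext_sum_bound (F := F) (E := E) (n * i) hodd hQ χ Ψ hΨ
    have h2 := ext_powS (F := F) (E := E) χ ψ
    rw [hfr, hαβ _ (by omega)] at h2
    have h3 : ∑ t : E, χ (Algebra.norm F (1 + t)) * χ⁻¹ (Algebra.norm F t) * Ψ t =
      -(α ^ (2 * i) + β ^ (2 * i)) := by
      rw [← h2]; rfl
    rw [h3, norm_neg] at h1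
    rw [← pow_mul, ← pow_mul, ← pow_mul]
    refine h1.trans ?_
    have : (1 : ℝ) ≤ 2 ^ (n * i) := one_le_pow₀ (by norm_num)
    nlinarith
  have hq : (0 : ℝ) < 2 ^ n := by positivity
  have ha := amplify _ _ _ _ hq hb
  have hb' := amplify (β ^ 2) (α ^ 2) _ _ hq (fun i hi => by rw [add_comm]; exact hb i hi)
  rw [norm_pow] at ha hb'
  have h2 := ext_powS (F := F) (E := F) χ ψ
  rw [Module.finrank_self, hαβ 1 le_rfl] at h2
  simp only [Algebra.norm_self, MonoidHom.id_apply, Algebra.trace_self_apply, pow_one] at h2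
  rw [h2, norm_neg]
  have h3 := norm_add_le α β
  have h4 := norm_nonneg (α + β)
  nlinarith [sq_nonneg (‖α‖ - ‖β‖)]

theorem corr_bound {F : Type*} [Field F] [Fintype F] (n : ℕ) (hn : 1 ≤ n)
    (hcard : Fintype.card F = 2 ^ n) (χ : MulChar F ℂ) (hχ : χ ≠ 1) (ψ : AddChar F ℂ)
    (a : F) (ha : a ≠ 0) :
    ‖∑ z : F, χ z * (starRingEnd ℂ) (χ (z + a)) * ψ z‖ ^ 2 ≤ 4 * 2 ^ n := by
  classical
  have : Fact (Nat.Prime 2) := ⟨Nat.prime_two⟩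
  have : CharP F 2 := by
    apply charP_of_card_eq_prime_pow (f := n)
    rw [hcard]
  have hconj : ∀ x, (starRingEnd ℂ) (χ x) = χ⁻¹ x := fun x => by
    have := MulChar.star_apply' χ x
    simpa using this
  have hb : Function.Bijective (fun t : F => a * t) := mulLeft_bijective₀ _ ha
  have h1 : ∑ z : F, χ z * (starRingEnd ℂ) (χ (z + a)) * ψ z =
      ∑ t : F, χ⁻¹ (1 + t) * (χ⁻¹)⁻¹ t * (ψ.mulShift a) t := by
    rw [← hb.sum_comp]
    refine Finset.sum_congr rfl fun t _ => ?_
    have e : a * t + a = a * (1 + t) := by ring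
    have e2 : χ a * χ⁻¹ a = 1 := by
      rw [← MulChar.mul_apply, mul_inv_cancel, MulChar.one_apply ha.isUnit]
    rw [hconj, e, inv_inv, AddChar.mulShift_apply, map_mul, map_mul]
    linear_combination (χ t * χ⁻¹ (1 + t) * ψ (a * t)) * e2
  rw [h1]
  by_cases hψ : ψ.mulShift a = 1
  · have h2 : ∑ t : F, χ⁻¹ (1 + t) * (χ⁻¹)⁻¹ t * (ψ.mulShift a) t = jacobiSum χ χ⁻¹ := by
      rw [hψ, jacobiSum]
      refine Finset.sum_congr rfl fun t _ => ?_
      rw [inv_inv, AddChar.one_apply, mul_one, mul_comm, CharTwo.sub_eq_add]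
    rw [h2, jacobiSum_nontrivial_inv hχ, norm_neg, CharTwo.neg_eq (1 : F), map_one, norm_one]
    have : (1 : ℝ) ≤ 2 ^ n := one_le_pow₀ (by norm_num)
    linarith
  · exact key_bound n hn hcard χ⁻¹ _ hψ

theorem parseval_fin {G : Type*} [AddCommGroup G] [Fintype G] (h : G → ℂ) :
    ∑ e : AddChar G ℂ, ‖∑ x, h x * e x‖ ^ 2 = Fintype.card G * ∑ x, ‖h x‖ ^ 2 := by
  classical
  have : ((∑ e : AddChar G ℂ, ‖∑ x, h x * e x‖ ^ 2 : ℝ) : ℂ) =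
      ((Fintype.card G * ∑ x, ‖h x‖ ^ 2 : ℝ) : ℂ) := by
    push_cast
    have h1 : ∀ e : AddChar G ℂ, ((‖∑ x, h x * e x‖ : ℂ)) ^ 2 =
        ∑ x, ∑ y, h x * (starRingEnd ℂ) (h y) * e (x - y) := by
      intro e
      rw [← Complex.mul_conj', map_sum, Finset.sum_mul_sum]
      refine Finset.sum_congr rfl fun x _ => Finset.sum_congr rfl fun y _ => ?_
      rw [map_mul, sub_eq_add_neg, AddChar.map_add_eq_mul, AddChar.map_neg_eq_conj]
      ring
    simp only [h1]
    rw [Finset.sum_comm, Finset.mul_sum]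
    refine Finset.sum_congr rfl fun x _ => ?_
    rw [Finset.sum_comm, Finset.sum_eq_single x]
    · rw [← Finset.mul_sum, AddChar.sum_apply_eq_ite, if_pos (sub_self x), Complex.mul_conj', mul_comm]
    · intro y _ hy
      rw [← Finset.mul_sum, AddChar.sum_apply_eq_ite, if_neg (sub_ne_zero.2 hy.symm), mul_zero]
    · intro hx; exact absurd (Finset.mem_univ x) hx
  exact_mod_cast this

theorem mulchar_norm {F : Type*} [Field F] [Fintype F] (χ : MulChar F ℂ) {a : F} (ha : a ≠ 0) :
    ‖χ a‖ = 1 := by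
  have h1 : χ a ^ (Fintype.card F - 1) = 1 := by
    rw [← map_pow, FiniteField.pow_card_sub_one_eq_one a ha, map_one]
  have : 1 < Fintype.card F := Fintype.one_lt_card
  exact Complex.norm_eq_one_of_pow_eq_one h1 (by omega)

theorem purity_bound {F G Y : Type*} [Field F] [Fintype F] [AddCommGroup G] [Fintype G]
    [AddCommGroup Y] [Fintype Y] (n : ℕ) (hn : 1 ≤ n)
    (hcard : Fintype.card F = 2 ^ n) (χ : MulChar F ℂ) (hχ : χ ≠ 1) (φ : G × Y ≃+ F) :
    (Fintype.card G : ℝ) *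
      ∑ x : G, ∑ x' : G, ‖∑ y : Y, χ (φ (x, y)) * (starRingEnd ℂ) (χ (φ (x', y)))‖ ^ 2 ≤
      (2 ^ n) ^ 2 + 4 * 2 ^ n * (Fintype.card G : ℝ) ^ 2 := by
  classical
  set d : ℝ := (Fintype.card G : ℝ) with hd
  have hd1 : 1 ≤ d := by
    rw [hd]; exact_mod_cast Fintype.card_pos
  have hGY : d * Fintype.card Y = 2 ^ n := by
    have h1 := Fintype.card_congr φ.toEquiv
    rw [Fintype.card_prod, hcard] at h1
    rw [hd]; exact_mod_cast h1
  have hχ1 : ∀ a : F, ‖χ a‖ ≤ 1 := by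
    intro a
    by_cases ha : a = 0
    · rw [ha, MulChar.map_zero]; simp
    · exact (mulchar_norm χ ha).le
  let T : G → G → ℂ := fun a x => ∑ y : Y, χ (φ (x, y)) * (starRingEnd ℂ) (χ (φ (x + a, y)))
  have h1 : ∑ x : G, ∑ x' : G, ‖∑ y : Y, χ (φ (x, y)) * (starRingEnd ℂ) (χ (φ (x', y)))‖ ^ 2 =
      ∑ a : G, ∑ x : G, ‖T a x‖ ^ 2 := by
    symm
    rw [Finset.sum_comm]
    refine Finset.sum_congr rfl fun x _ => ?_
    exact (Equiv.sum_comp (Equiv.addLeft x) (fun x' => ‖∑ y : Y, χ (φ (x, y)) *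
      (starRingEnd ℂ) (χ (φ (x', y)))‖ ^ 2))
  have hdiag : d * ∑ x : G, ‖T 0 x‖ ^ 2 ≤ (2 ^ n) ^ 2 := by
    have h2 : ∀ x, ‖T 0 x‖ ^ 2 ≤ (Fintype.card Y : ℝ) ^ 2 := by
      intro x
      have : ‖T 0 x‖ ≤ Fintype.card Y := by
        refine (norm_sum_le _ _).trans ?_
        have := Finset.sum_le_card_nsmul (Finset.univ : Finset Y)
          (fun y => ‖χ (φ (x, y)) * (starRingEnd ℂ) (χ (φ (x + 0, y)))‖) 1 (fun y _ => by
            rw [norm_mul, RCLike.norm_conj]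
            exact mul_le_one₀ (hχ1 _) (norm_nonneg _) (hχ1 _))
        simpa using this
      gcongr
    have h3 := Finset.sum_le_card_nsmul (Finset.univ : Finset G) _ _ (fun x _ => h2 x)
    rw [Finset.card_univ, nsmul_eq_mul, ← hd] at h3
    rw [← hGY]
    nlinarith
  have hoff : ∀ a : G, a ≠ 0 → d * ∑ x : G, ‖T a x‖ ^ 2 ≤ d * (4 * 2 ^ n) := by
    intro a ha
    rw [hd, ← parseval_fin, ← AddChar.card_eq (α := G), ← nsmul_eq_mul, ← Finset.card_univ]
    refine Finset.sum_le_card_nsmul _ _ _ fun e _ => ?_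
    let Ψ : AddChar F ℂ := e.compAddMonoidHom
      ((AddMonoidHom.fst G Y).comp φ.symm.toAddMonoidHom)
    have ha' : φ (a, 0) ≠ 0 := by
      intro h
      rw [map_eq_zero_iff φ φ.injective] at h
      exact ha (congrArg Prod.fst h)
    have := corr_bound n hn hcard χ hχ Ψ (φ (a, 0)) ha'
    have e1 : ∑ x, T a x * e x =
        ∑ z : F, χ z * (starRingEnd ℂ) (χ (z + φ (a, 0))) * Ψ z := by
      rw [← φ.toEquiv.sum_comp, Fintype.sum_prod_type]
      refine Finset.sum_congr rfl fun x _ => ?_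
      simp only [T]
      rw [Finset.sum_mul]
      refine Finset.sum_congr rfl fun y _ => ?_
      have e2 : φ (x + a, y) = φ (x, y) + φ (a, 0) := by
        rw [← map_add, Prod.mk_add_mk, add_zero]
      have e3 : Ψ (φ (x, y)) = e x := by simp [Ψ]
      simp only [AddEquiv.toEquiv_eq_coe, AddEquiv.coe_toEquiv]
      rw [e2, e3]
    rw [e1]; exact this
  rw [h1, ← Finset.sum_erase_add _ _ (Finset.mem_univ (0 : G)), mul_add, Finset.mul_sum]
  have h4 := Finset.sum_le_card_nsmul (Finset.univ.erase (0 : G)) _ _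
    (fun a ha => hoff a (Finset.ne_of_mem_erase ha))
  have h5 : ((Finset.univ.erase (0 : G)).card : ℝ) ≤ d := by
    rw [hd]; exact_mod_cast Finset.card_le_univ _
  rw [nsmul_eq_mul] at h4
  have h6 : ((Finset.univ.erase (0 : G)).card : ℝ) * (d * (4 * 2 ^ n)) ≤ d * (d * (4 * 2 ^ n)) := by
    gcongr
  nlinarith

theorem sum_sq_eigenvalues {m : Type*} [Fintype m] [DecidableEq m] (ρ : Matrix m m ℂ)
    (h : ρ.IsHermitian) :
    ∑ i, h.eigenvalues i ^ 2 = ∑ x, ∑ x', ‖ρ x x'‖ ^ 2 := by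
  have h1 : (ρ * ρ).trace = ((∑ i, h.eigenvalues i ^ 2 : ℝ) : ℂ) := by
    have hs := h.spectral_theorem
    rw [Unitary.conjStarAlgAut_apply] at hs
    set U : Matrix m m ℂ := (h.eigenvectorUnitary : Matrix m m ℂ) with hU
    set D : Matrix m m ℂ := Matrix.diagonal (RCLike.ofReal ∘ h.eigenvalues) with hD
    have hUU : star U * U = 1 := Unitary.coe_star_mul_self h.eigenvectorUnitary
    have h2 : ρ * ρ = U * (D * D) * star U := by
      conv_lhs => rw [hs]
      calc U * D * star U * (U * D * star U) = U * D * (star U * U) * D * star U := by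
            simp only [Matrix.mul_assoc]
        _ = _ := by rw [hUU, Matrix.mul_one]; simp only [Matrix.mul_assoc]
    rw [h2, Matrix.trace_mul_comm, ← Matrix.mul_assoc, hUU, Matrix.one_mul, hD,
      Matrix.diagonal_mul_diagonal, Matrix.trace_diagonal]
    push_cast
    refine Finset.sum_congr rfl fun i _ => ?_
    simp [sq]
  have h2 : (ρ * ρ).trace = ((∑ x, ∑ x', ‖ρ x x'‖ ^ 2 : ℝ) : ℂ) := by
    rw [Matrix.trace]
    push_cast
    refine Finset.sum_congr rfl fun x _ => ?_
    rw [Matrix.diag_apply, Matrix.mul_apply]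
    refine Finset.sum_congr rfl fun x' _ => ?_
    rw [← h.apply x' x, ← Complex.mul_conj']
    rfl
  rw [h1] at h2
  exact_mod_cast h2

theorem entropy_lower {m : Type*} [Fintype m] (l : m → ℝ) (d : ℝ) (hd : 0 < d)
    (h0 : ∀ i, 0 ≤ l i) (h1 : ∑ i, l i = 1) :
    Real.log d - (d * ∑ i, l i ^ 2 - 1) ≤ ∑ i, Real.negMulLog (l i) := by
  have key : ∀ i, l i * Real.log d - (d * l i ^ 2 - l i) ≤ Real.negMulLog (l i) := by
    intro i
    rcases (h0 i).eq_or_lt with h | h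
    · rw [← h]; simp
    · have h2 := Real.log_le_sub_one_of_pos (mul_pos hd h)
      rw [Real.log_mul hd.ne' h.ne'] at h2
      rw [Real.negMulLog]
      nlinarith
  have := Finset.sum_le_sum (fun i (_ : i ∈ Finset.univ) => key i)
  rw [Finset.sum_sub_distrib, Finset.sum_sub_distrib, ← Finset.sum_mul, ← Finset.mul_sum, h1,
    one_mul] at this
  exact this

/-- splitting a configuration into its parts on `A` and its complement -/
def splitEquiv {κ : Type*} [DecidableEq κ] (A : Finset κ) :
    (({i // i ∈ A} → ZMod 2) × ({i // i ∉ A} → ZMod 2)) ≃+ (κ → ZMod 2) where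
  toFun p := mergeCfg A p.1 p.2
  invFun c := (fun i => c i, fun i => c i)
  left_inv := by
    rintro ⟨x, y⟩
    refine Prod.ext ?_ ?_
    · funext i
      simp [mergeCfg, i.2]
    · funext i
      simp [mergeCfg, i.2]
  right_inv := by
    intro c
    funext i
    simp [mergeCfg]
  map_add' := by
    rintro ⟨x, y⟩ ⟨x', y'⟩
    funext i
    by_cases h : i ∈ A <;> simp [mergeCfg, h]

theorem exists_mulChar {F : Type*} [Field F] [Fintype F] (N : ℕ) (hN0 : N ≠ 0)
    (g : Fˣ) (hg : ∀ x : Fˣ, x ∈ Subgroup.zpowers g)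
    (ω : ℂ) (hω : ω = Complex.exp (2 * Real.pi * Complex.I / N))
    (q : ℤ) (hq : ¬ (N : ℤ) ∣ q) (ψq : F → ℂ) (hψq0 : ψq 0 = 0)
    (hψq : ∀ j : ℕ, ψq ((g ^ j : Fˣ) : F) = ω ^ (q * j) / Real.sqrt N) :
    ∃ χ : MulChar F ℂ, χ ≠ 1 ∧ ∀ x, ψq x = χ x / Real.sqrt N := by
  have hNr : (0 : ℝ) < N := by exact_mod_cast Nat.pos_of_ne_zero hN0
  have hs : ((Real.sqrt N : ℝ) : ℂ) ≠ 0 := by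
    exact_mod_cast (Real.sqrt_pos.2 hNr).ne'
  have hω0 : ω ≠ 0 := by rw [hω]; exact Complex.exp_ne_zero _
  have hpow : ∀ x : F, x ≠ 0 → ∃ j : ℕ, x = ((g ^ j : Fˣ) : F) := by
    intro x hx
    have := mem_powers_iff_mem_zpowers.2 (hg (Units.mk0 x hx))
    obtain ⟨j, hj⟩ := this
    refine ⟨j, ?_⟩
    have hj' : g ^ j = Units.mk0 x hx := hj
    rw [hj', Units.val_mk0]
  have hval : ∀ j : ℕ, ψq ((g ^ j : Fˣ) : F) * Real.sqrt N = ω ^ (q * j) := by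
    intro j
    rw [hψq, div_mul_cancel₀ _ hs]
  let χ : MulChar F ℂ :=
    { toFun := fun x => ψq x * Real.sqrt N
      map_one' := by
        have := hval 0
        simpa using this
      map_mul' := by
        intro x y
        by_cases hx : x = 0
        · simp [hx, hψq0]
        by_cases hy : y = 0
        · simp [hy, hψq0]
        obtain ⟨i, rfl⟩ := hpow x hx
        obtain ⟨j, rfl⟩ := hpow y hy
        rw [← Units.val_mul, ← pow_add, hval, hval, hval, ← zpow_add₀ hω0]
        push_cast
        rw [mul_add]
      map_nonunit' := by
        intro a ha
        have : a = 0 := by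
          by_contra h
          exact ha (isUnit_iff_ne_zero.2 h)
        simp [this, hψq0] }
  have hχ : ∀ x, χ x = ψq x * Real.sqrt N := fun x => rfl
  refine ⟨χ, ?_, ?_⟩
  · intro h
    have h1 : χ (g : F) = 1 := by rw [h, MulChar.one_apply g.isUnit]
    have h2 := hval 1
    rw [pow_one, ← hχ, h1, Nat.cast_one, mul_one] at h2
    have hp := Complex.isPrimitiveRoot_exp N hN0
    rw [← hω] at hp
    exact hq ((hp.zpow_eq_one_iff_dvd q).1 h2.symm)
  · intro x
    rw [hχ, mul_div_cancel_right₀ _ hs]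

theorem final_arith (Q d P : ℝ) (hQ : 4 ≤ Q) (hd : 1 ≤ d)
    (h : d * P ≤ Q ^ 2 + 4 * Q * d ^ 2) :
    d * (P / (Q - 1) ^ 2) - 1 ≤ 16 * d ^ 2 / Q := by
  have hN : 0 < (Q - 1) ^ 2 := by nlinarith
  have h1 : d * (P / (Q - 1) ^ 2) - 1 = (d * P - (Q - 1) ^ 2) / (Q - 1) ^ 2 := by
    rw [sub_div, div_self hN.ne', mul_div_assoc]
  rw [h1, div_le_div_iff₀ hN (by linarith)]
  have hd2 : 1 ≤ d ^ 2 := by nlinarith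
  have h2 : d * P - (Q - 1) ^ 2 ≤ 6 * Q * d ^ 2 := by nlinarith
  have h3 : 6 * Q * Q ≤ 16 * (Q - 1) ^ 2 := by nlinarith
  calc (d * P - (Q - 1) ^ 2) * Q ≤ 6 * Q * d ^ 2 * Q := by gcongr
    _ = d ^ 2 * (6 * Q * Q) := by ring
    _ ≤ d ^ 2 * (16 * (Q - 1) ^ 2) := by gcongr
    _ = _ := by ring

open scoped ComplexOrder in
theorem eig_nonneg {m k : Type*} [Fintype m] [DecidableEq m] [Fintype k] (V : Matrix m k ℂ)
    (M : Matrix m m ℂ) (hM : M = V * V.conjTranspose) (h : M.IsHermitian) (i : m) :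
    0 ≤ h.eigenvalues i := by
  have hp : M.PosSemidef := by
    rw [hM]; exact Matrix.posSemidef_self_mul_conjTranspose V
  exact hp.eigenvalues_nonneg i

end

/-- Every nontrivial chi state has near-maximal entanglement entropy on any
set of `ℓ` qubits: `S(ρ_A) ≥ ℓ ln 2 − 2^{4+2ℓ−n}`. -/
theorem lfsr_eigenstate_entanglement
    (n ℓ : ℕ) (hn : 2 ≤ n) (N : ℕ) (hN : N = 2 ^ n - 1)
    (F : Type*) [Field F] [Fintype F] [DecidableEq F]
    (hcard : Fintype.card F = 2 ^ n)
    (g : Fˣ) (hg : ∀ x : Fˣ, x ∈ Subgroup.zpowers g)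
    (ω : ℂ) (hω : ω = Complex.exp (2 * Real.pi * Complex.I / N))
    (ι : (Fin n → ZMod 2) ≃+ F)
    (q : ℤ) (hq : ¬ (N : ℤ) ∣ q)
    (ψq : F → ℂ)
    (hψq0 : ψq 0 = 0)
    (hψq : ∀ j : ℕ, ψq ((g ^ j : Fˣ) : F) = ω ^ (q * j) / Real.sqrt N)
    (A : Finset (Fin n)) (hA : A.card = ℓ) :
    ∀ hherm : (rdm A (fun x => ψq (ι x))).IsHermitian,
      ∑ i, Real.negMulLog (hherm.eigenvalues i) ≥
        (ℓ : ℝ) * Real.log 2 - (2 : ℝ) ^ ((4 + 2 * (ℓ : ℝ)) - (n : ℝ)) := by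
  intro hherm
  have hQN : (4 : ℝ) ≤ 2 ^ n := by
    calc (4 : ℝ) = 2 ^ 2 := by norm_num
      _ ≤ 2 ^ n := pow_le_pow_right₀ (by norm_num) hn
  have hNR : (N : ℝ) = 2 ^ n - 1 := by
    rw [hN, Nat.cast_sub Nat.one_le_two_pow]
    push_cast; ring
  have hNpos : (0 : ℝ) < N := by rw [hNR]; linarith
  have hN0 : N ≠ 0 := by
    rintro rfl
    simp at hNpos
  obtain ⟨χ, hχ, hχψ⟩ := exists_mulChar N hN0 g hg ω hω q hq ψq hψq0 hψq
  let φ : (({i // i ∈ A} → ZMod 2) × ({i // i ∉ A} → ZMod 2)) ≃+ F := (splitEquiv A).trans ι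
  have hφ : ∀ x y, φ (x, y) = ι (mergeCfg A x y) := fun x y => rfl
  have hsq : ((Real.sqrt N : ℝ) : ℂ) * ((Real.sqrt N : ℝ) : ℂ) = (N : ℂ) := by
    rw [← Complex.ofReal_mul, Real.mul_self_sqrt hNpos.le]
    simp
  have hρ : ∀ x x', rdm A (fun x => ψq (ι x)) x x' =
      (∑ y, χ (φ (x, y)) * (starRingEnd ℂ) (χ (φ (x', y)))) / N := by
    intro x x'
    rw [rdm, Matrix.of_apply, Finset.sum_div]
    refine Finset.sum_congr rfl fun y _ => ?_
    rw [hχψ, hχψ, map_div₀, Complex.conj_ofReal, div_mul_div_comm, hsq, hφ, hφ]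
  have hnn : ∀ i, 0 ≤ hherm.eigenvalues i := eig_nonneg
    (Matrix.of fun (x : {i // i ∈ A} → ZMod 2) (y : {i // i ∉ A} → ZMod 2) =>
      ψq (ι (mergeCfg A x y))) _ rfl hherm
  have hcardG : (Fintype.card ({i // i ∈ A} → ZMod 2) : ℝ) = 2 ^ ℓ := by
    rw [Fintype.card_fun, ZMod.card, Fintype.card_coe, hA]
    push_cast; rfl
  have htr : ∑ i, hherm.eigenvalues i = 1 := by
    have h1 := hherm.trace_eq_sum_eigenvalues
    have h2 : (rdm A (fun x => ψq (ι x))).trace = 1 := by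
      rw [Matrix.trace]
      simp only [Matrix.diag_apply, hρ]
      rw [← Finset.sum_div, ← Fintype.sum_prod_type'
        (f := fun x y => χ (φ (x, y)) * (starRingEnd ℂ) (χ (φ (x, y))))]
      have h3 : ∑ p : ({i // i ∈ A} → ZMod 2) × ({i // i ∉ A} → ZMod 2),
          χ (φ (p.1, p.2)) * (starRingEnd ℂ) (χ (φ (p.1, p.2))) =
          ∑ z : F, χ z * (starRingEnd ℂ) (χ z) :=
        φ.toEquiv.sum_comp (fun z => χ z * (starRingEnd ℂ) (χ z))
      rw [h3, ← Finset.sum_erase_add _ _ (Finset.mem_univ (0 : F)), MulChar.map_zero, zero_mul,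
        add_zero, Finset.sum_congr rfl (fun z hz => by
          rw [Complex.mul_conj', mulchar_norm χ (Finset.ne_of_mem_erase hz)]), Finset.sum_const,
        Finset.card_erase_of_mem (Finset.mem_univ _), Finset.card_univ, hcard, ← hN]
      have : (N : ℂ) ≠ 0 := by exact_mod_cast hN0
      simp [this]
    rw [h2] at h1
    have h1' : ((∑ i, hherm.eigenvalues i : ℝ) : ℂ) = 1 := by
      rw [h1]; push_cast; rfl
    exact_mod_cast h1'
  have hpur := purity_bound n (by omega) hcard χ hχ φ
  rw [hcardG] at hpur
  have hent := entropy_lower hherm.eigenvalues (2 ^ ℓ) (by positivity) hnn htr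
  have hP : ∑ i, hherm.eigenvalues i ^ 2 = (∑ x, ∑ x',
      ‖∑ y, χ (φ (x, y)) * (starRingEnd ℂ) (χ (φ (x', y)))‖ ^ 2) / (2 ^ n - 1) ^ 2 := by
    rw [sum_sq_eigenvalues, Finset.sum_div]
    refine Finset.sum_congr rfl fun x _ => ?_
    rw [Finset.sum_div]
    refine Finset.sum_congr rfl fun x' _ => ?_
    rw [hρ, norm_div, Complex.norm_natCast, div_pow, hNR]
  have hfin := final_arith (2 ^ n) (2 ^ ℓ) _ hQN (one_le_pow₀ (by norm_num)) hpur
  rw [← hP] at hfin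
  have hrpow : (2 : ℝ) ^ ((4 + 2 * (ℓ : ℝ)) - (n : ℝ)) = 16 * (2 ^ ℓ) ^ 2 / 2 ^ n := by
    rw [Real.rpow_sub (by norm_num), Real.rpow_natCast,
      show (4 + 2 * (ℓ : ℝ)) = ((4 + 2 * ℓ : ℕ) : ℝ) by push_cast; ring, Real.rpow_natCast]
    congr 1
    ring
  rw [hrpow, ge_iff_le]
  rw [Real.log_pow] at hent
  linarith
end
end

section
/- Let n ≥ 2, N = 2ⁿ − 1, F the finite field with 2ⁿ elements, g a generator of F^×, ω = exp(2πi/N), and ψ_q ∈ ℂ^F given by ψ_q(0) = 0, ψ_q(g^j) = ω^{qj}/√N. Fix an 𝔽₂-linear bijection ι : 𝔽₂ⁿ → F and identify ℂ^F with (ℂ²)^{⊗n}. For A ⊆ {0,…,n−1} with |A| = ℓ, let ρ_A be the reduced density matrix of ψ_q on A. Then for every integer q with q ≢ 0 (mod N), the purity satisfies Tr(ρ_A²) ≤ 2^{−ℓ} · (1 + (4^ℓ − 1) · 2^{4−n}). -/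
open Complex

noncomputable section

namespace PurityAux
open Polynomial Finset

section Stepanov
variable {K : Type*} [Field K]

/-- pole order at infinity, as degree of the norm -/
def dg {f h : K[X]} (z : QuadraticAlgebra K[X] f h) : WithBot ℕ := (QuadraticAlgebra.norm z).degree

lemma dg_eq {f h : K[X]} {g : ℕ} (hh : h.natDegree ≤ g) (hf : f.natDegree = 2 * g + 1)
    (z : QuadraticAlgebra K[X] f h) :
    dg z = max (z.re ^ 2).degree (f * z.im ^ 2).degree := by
  obtain ⟨a, b⟩ := z
  have hf0 : f ≠ 0 := by rintro rfl; simp at hf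
  simp only [dg, QuadraticAlgebra.norm_def]
  by_cases ha : a = 0
  · subst ha
    rw [← degree_neg (f * _)]
    simp only [ne_eq, OfNat.ofNat_ne_zero, not_false_eq_true, zero_pow, degree_zero, bot_le, sup_of_le_right]
    congr 1; ring
  by_cases hb : b = 0
  · subst hb
    simp only [ne_eq, OfNat.ofNat_ne_zero, not_false_eq_true, zero_pow, mul_zero, degree_zero, bot_le, sup_of_le_left]
    congr 1; ring
  have e1 : (a ^ 2).degree = ((2 * a.natDegree : ℕ) : WithBot ℕ) := by
    rw [degree_eq_natDegree (pow_ne_zero _ ha), natDegree_pow]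
  have e2 : (f * b ^ 2).degree = ((2 * g + 1 + 2 * b.natDegree : ℕ) : WithBot ℕ) := by
    rw [degree_eq_natDegree (mul_ne_zero hf0 (pow_ne_zero _ hb)),
      natDegree_mul hf0 (pow_ne_zero _ hb), natDegree_pow, hf]
  have e3 : (h * a * b).degree ≤ ((g + a.natDegree + b.natDegree : ℕ) : WithBot ℕ) := by
    refine degree_le_of_natDegree_le ?_
    refine natDegree_mul_le.trans ?_
    have := natDegree_mul_le (p := h) (q := a)
    omega
  have key : a * a + h * a * b - f * b * b = (a ^ 2 - f * b ^ 2) + h * a * b := by ring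
  rcases lt_or_gt_of_ne (show 2 * a.natDegree ≠ 2 * g + 1 + 2 * b.natDegree by omega) with hlt | hlt
  · have h1 : (a ^ 2 - f * b ^ 2).degree = (f * b ^ 2).degree := by
      apply degree_sub_eq_right_of_degree_lt
      rw [e1, e2]; exact_mod_cast hlt
    have h2 : ((a ^ 2 - f * b ^ 2) + h * a * b).degree = (a ^ 2 - f * b ^ 2).degree := by
      apply degree_add_eq_left_of_degree_lt
      rw [h1, e2]; refine e3.trans_lt ?_
      exact_mod_cast (by omega)
    have h3 : (a ^ 2).degree ≤ (f * b ^ 2).degree := by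
      rw [e1, e2]; exact_mod_cast hlt.le
    rw [max_eq_right h3, ← h1, ← h2]; congr 1
  · have h1 : (a ^ 2 - f * b ^ 2).degree = (a ^ 2).degree := by
      apply degree_sub_eq_left_of_degree_lt
      rw [e1, e2]; exact_mod_cast hlt
    have h2 : ((a ^ 2 - f * b ^ 2) + h * a * b).degree = (a ^ 2 - f * b ^ 2).degree := by
      apply degree_add_eq_left_of_degree_lt
      rw [h1, e1]; refine e3.trans_lt ?_
      exact_mod_cast (by omega)
    have h3 : (f * b ^ 2).degree ≤ (a ^ 2).degree := by
      rw [e1, e2]; exact_mod_cast hlt.le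
    rw [max_eq_left h3, ← h1, ← h2]; congr 1

lemma dg_mul {f h : K[X]} (z w : QuadraticAlgebra K[X] f h) : dg (z * w) = dg z + dg w := by
  simp [dg, map_mul, degree_mul]

lemma dg_pow {f h : K[X]} (z : QuadraticAlgebra K[X] f h) (n : ℕ) : dg (z ^ n) = n • dg z := by
  simp [dg, map_pow, degree_pow]

lemma dg_eq_bot {f h : K[X]} {g : ℕ} (hh : h.natDegree ≤ g) (hf : f.natDegree = 2 * g + 1)
    {z : QuadraticAlgebra K[X] f h} : dg z = ⊥ ↔ z = 0 := by
  have hf0 : f ≠ 0 := by rintro rfl; simp at hf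
  rw [dg_eq hh hf, _root_.max_eq_bot, degree_eq_bot, degree_eq_bot]
  constructor
  · rintro ⟨h1, h2⟩
    ext1 <;> simp_all
  · rintro rfl; simp

lemma sq_degree_mono {a b c : K[X]} {d : WithBot ℕ} (f : K[X]) (hc : c = a + b)
    (ha : (f * a ^ 2).degree < d) (hb : (f * b ^ 2).degree < d) : (f * c ^ 2).degree < d := by
  subst hc
  rcases le_total a.degree b.degree with h | h
  · refine lt_of_le_of_lt ?_ hb
    rw [degree_mul, degree_mul, degree_pow, degree_pow]
    have : (a + b).degree ≤ b.degree := (degree_add_le a b).trans (max_le h le_rfl)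
    gcongr
  · refine lt_of_le_of_lt ?_ ha
    rw [degree_mul, degree_mul, degree_pow, degree_pow]
    have : (a + b).degree ≤ a.degree := (degree_add_le a b).trans (max_le le_rfl h)
    gcongr

lemma dg_add_lt {f h : K[X]} {g : ℕ} (hh : h.natDegree ≤ g) (hf : f.natDegree = 2 * g + 1)
    {z w : QuadraticAlgebra K[X] f h} {d : WithBot ℕ} (hz : dg z < d) (hw : dg w < d) :
    dg (z + w) < d := by
  rw [dg_eq hh hf, max_lt_iff] at *
  constructor
  · have := sq_degree_mono (a := z.re) (b := w.re) (d := d) 1 rfl (by simpa using hz.1)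
      (by simpa using hw.1)
    simpa using this
  · exact sq_degree_mono f (by simp) hz.2 hw.2

lemma dg_sum_lt {f h : K[X]} {g : ℕ} (hh : h.natDegree ≤ g) (hf : f.natDegree = 2 * g + 1)
    {J : Type*} (s : Finset J) (v : J → QuadraticAlgebra K[X] f h) {d : WithBot ℕ} (hd : ⊥ < d)
    (hv : ∀ j ∈ s, dg (v j) < d) : dg (∑ j ∈ s, v j) < d := by
  classical
  induction s using Finset.induction_on with
  | empty => simpa [dg] using hd
  | insert a s ha ih =>
    rw [Finset.sum_insert ha]
    exact dg_add_lt hh hf (hv a (by simp)) (ih fun j hj => hv j (by simp [hj]))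

lemma dg_neg {f h : K[X]} (z : QuadraticAlgebra K[X] f h) : dg (-z) = dg z := by
  simp [dg]

lemma sum_ne_zero_of_dg {f h : K[X]} {g : ℕ} (hh : h.natDegree ≤ g) (hf : f.natDegree = 2 * g + 1)
    {J : Type*} [Fintype J] (v : J → QuadraticAlgebra K[X] f h)
    (hne : ∃ j, v j ≠ 0) (hinj : ∀ i j, v i ≠ 0 → v j ≠ 0 → dg (v i) = dg (v j) → i = j) :
    ∑ j, v j ≠ 0 := by
  classical
  obtain ⟨i0, hi0⟩ := hne
  obtain ⟨j, -, hj⟩ := Finset.exists_max_image Finset.univ (fun j => dg (v j)) ⟨i0, by simp⟩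
  have hpos : ⊥ < dg (v j) := lt_of_lt_of_le
    (bot_lt_iff_ne_bot.2 (by rw [Ne, dg_eq_bot hh hf]; exact hi0)) (hj i0 (by simp))
  have hvj : v j ≠ 0 := by
    rw [Ne, ← dg_eq_bot hh hf]; exact hpos.ne'
  intro h0
  rw [← Finset.add_sum_erase _ _ (Finset.mem_univ j)] at h0
  have h1 : dg (∑ i ∈ Finset.univ.erase j, v i) < dg (v j) := by
    apply dg_sum_lt hh hf _ _ hpos
    intro i hi
    rw [Finset.mem_erase] at hi
    refine lt_of_le_of_ne (hj i (by simp)) fun he => ?_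
    have hvi : v i ≠ 0 := by
      rw [Ne, ← dg_eq_bot hh hf, he]; exact hpos.ne'
    exact hi.1 (hinj i j hvi hvj he)
  rw [add_eq_zero_iff_eq_neg.1 h0, dg_neg] at h1
  exact lt_irrefl _ h1

/-- evaluation at an affine point -/
def ev (f h : K[X]) (x t : K) (hP : t ^ 2 = f.eval x + h.eval x * t) :
    QuadraticAlgebra K[X] f h →+* K where
  toFun z := z.re.eval x + z.im.eval x * t
  map_one' := by simp [QuadraticAlgebra.re_one, QuadraticAlgebra.im_one]
  map_mul' z w := by
    simp
    linear_combination (-1) * (z.im.eval x * w.im.eval x) * hP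
  map_zero' := by simp
  map_add' z w := by simp; ring

lemma ev_apply (f h : K[X]) (x t : K) (hP : t ^ 2 = f.eval x + h.eval x * t)
    (z : QuadraticAlgebra K[X] f h) : ev f h x t hP z = z.re.eval x + z.im.eval x * t := rfl

/-- zeros of a nonzero function are at most its degree -/
lemma card_zeros_le [Fintype K] [DecidableEq K] {f h : K[X]} 
    (z : QuadraticAlgebra K[X] f h) (hz : QuadraticAlgebra.norm z ≠ 0) (D : ℕ)
    (hD : dg z ≤ D)
    (P : Finset (K × K)) (hP : ∀ p ∈ P, p.2 ^ 2 = f.eval p.1 + h.eval p.1 * p.2)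
    (hP0 : ∀ p ∈ P, z.re.eval p.1 + z.im.eval p.1 * p.2 = 0) : P.card ≤ D := by
  have h1 : P.card = ∑ x : K, (P.filter fun p => p.1 = x).card :=
    Finset.card_eq_sum_card_fiberwise (by simp)
  have h2 : ∀ x : K, (P.filter fun p => p.1 = x).card ≤ (QuadraticAlgebra.norm z).roots.count x := by
    intro x
    rw [count_roots]
    by_cases hc : (P.filter fun p => p.1 = x).card ≤ 1
    · rcases Nat.eq_zero_or_pos (P.filter fun p => p.1 = x).card with h0 | h0
      · omega
      · refine hc.trans ?_
        rw [Nat.succ_le_iff, rootMultiplicity_pos hz]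
        obtain ⟨p, hp⟩ := Finset.card_pos.1 h0
        rw [Finset.mem_filter] at hp
        obtain ⟨hp, rfl⟩ := hp
        have e1 := hP p hp
        have e2 := hP0 p hp
        simp only [IsRoot, QuadraticAlgebra.norm_def, eval_add, eval_sub, eval_mul]
        linear_combination (z.re.eval p.1 + z.im.eval p.1 * (h.eval p.1 - p.2)) * e2 + (z.im.eval p.1)^2 * e1
    · push Not at hc
      obtain ⟨p, hp, p', hp', hne⟩ := Finset.one_lt_card.1 hc
      rw [Finset.mem_filter] at hp hp'
      obtain ⟨x1, t1⟩ := p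
      obtain ⟨x2, t2⟩ := p'
      obtain ⟨hp, rfl⟩ := hp
      obtain ⟨hp', hx⟩ := hp'
      simp only at hx
      subst hx
      have hne' : t1 ≠ t2 := fun h => hne (by rw [h])
      have a1 := hP0 _ hp
      have a2 := hP0 _ hp'
      simp only at a1 a2
      have hb : z.im.eval x2 = 0 := by
        have : z.im.eval x2 * (t1 - t2) = 0 := by linear_combination a1 - a2
        rcases mul_eq_zero.1 this with h | h
        · exact h
        · exact absurd (sub_eq_zero.1 h) hne'
      have ha : z.re.eval x2 = 0 := by rw [hb] at a1; simpa using a1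
      have hle2 : (P.filter fun p => p.1 = x2).card ≤ 2 := by
        -- all second coords are among t1, t2
        have hsub : (P.filter fun p => p.1 = x2) ⊆ {(x2, t1), (x2, t2)} := by
          intro p hp3
          rw [Finset.mem_filter] at hp3
          obtain ⟨x3, t3⟩ := p
          obtain ⟨hp3, hx3⟩ := hp3
          simp only at hx3
          subst hx3
          have b1 := hP _ hp
          have b2 := hP _ hp'
          have b3 := hP _ hp3
          simp only at b1 b2 b3
          have c1 : (t1 - t2) * (t1 + t2 - h.eval x3) = 0 := by linear_combination b1 - b2
          have c2 : t1 + t2 - h.eval x3 = 0 := by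
            rcases mul_eq_zero.1 c1 with h | h
            · exact absurd (sub_eq_zero.1 h) hne'
            · exact h
          have c3 : (t3 - t1) * (t3 - t2) = 0 := by
            linear_combination b3 - b1 + (t1 - t3) * c2
          rcases mul_eq_zero.1 c3 with h | h
          · simp [sub_eq_zero.1 h]
          · simp [sub_eq_zero.1 h]
        exact (Finset.card_le_card hsub).trans Finset.card_le_two
      refine hle2.trans ?_
      rw [le_rootMultiplicity_iff hz]
      obtain ⟨a, ha'⟩ := dvd_iff_isRoot.2 ha
      obtain ⟨b, hb'⟩ := dvd_iff_isRoot.2 hb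
      refine ⟨a ^ 2 + h * a * b - f * b ^ 2, ?_⟩
      rw [QuadraticAlgebra.norm_def, ha', hb']; ring
  calc P.card = _ := h1
    _ ≤ ∑ x : K, (QuadraticAlgebra.norm z).roots.count x := Finset.sum_le_sum fun x _ => h2 x
    _ = (QuadraticAlgebra.norm z).roots.card := by
        rw [Multiset.sum_count_eq_card]; simp
    _ ≤ (QuadraticAlgebra.norm z).natDegree := card_roots' _
    _ ≤ D := natDegree_le_of_degree_le hD

end Stepanov
end PurityAux


namespace PurityAux
open Polynomial Finset

section Stepanov2
variable {K : Type*} [Field K]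

/-- the monomial basis of the coordinate ring -/
def sb (f h : K[X]) {m1 m2 : ℕ} : Fin m1 ⊕ Fin m2 → QuadraticAlgebra K[X] f h
  | .inl i => ⟨X ^ (i : ℕ), 0⟩
  | .inr i => ⟨0, X ^ (i : ℕ)⟩

/-- degrees of the monomial basis -/
def sdeg (g : ℕ) {m1 m2 : ℕ} : Fin m1 ⊕ Fin m2 → ℕ
  | .inl i => 2 * i
  | .inr i => 2 * g + 1 + 2 * i

lemma sdeg_inj (g : ℕ) {m1 m2 : ℕ} : Function.Injective (sdeg g (m1 := m1) (m2 := m2)) := by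
  rintro (⟨i, hi⟩ | ⟨i, hi⟩) (⟨j, hj⟩ | ⟨j, hj⟩) hij <;> simp [sdeg] at hij ⊢ <;> omega

lemma dg_sb {f h : K[X]} {g : ℕ} (hh : h.natDegree ≤ g) (hf : f.natDegree = 2 * g + 1)
    {m1 m2 : ℕ} (j : Fin m1 ⊕ Fin m2) : dg (sb f h j) = (sdeg g j : ℕ) := by
  have hf0 : f ≠ 0 := by rintro rfl; simp at hf
  rw [dg_eq hh hf]
  rcases j with i | i
  · simp [sb, sdeg]
  · simp [sb, sdeg, degree_eq_natDegree hf0, hf]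

lemma dg_mk_le {f h : K[X]} {g : ℕ} (hh : h.natDegree ≤ g) (hf : f.natDegree = 2 * g + 1)
    {n1 n2 d : ℕ} {a b : K[X]} (ha : a.degree < n1) (hb : b.degree < n2)
    (h1 : 2 * n1 ≤ d + 2) (h2 : 2 * n2 + 2 * g + 1 ≤ d + 2) :
    dg (⟨a, b⟩ : QuadraticAlgebra K[X] f h) ≤ d := by
  have hf0 : f ≠ 0 := by rintro rfl; simp at hf
  rw [dg_eq hh hf]
  refine max_le ?_ ?_
  · by_cases h0 : a = 0
    · simp [h0]
    · rw [degree_eq_natDegree h0] at ha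
      have : a.natDegree < n1 := by exact_mod_cast ha
      refine degree_le_of_natDegree_le ?_
      rw [natDegree_pow]; simp only; omega
  · by_cases h0 : b = 0
    · simp [h0]
    · rw [degree_eq_natDegree h0] at hb
      have : b.natDegree < n2 := by exact_mod_cast hb
      refine degree_le_of_natDegree_le ?_
      rw [natDegree_mul hf0 (pow_ne_zero _ h0), natDegree_pow, hf]; omega

lemma degrees_of_dg_le {f h : K[X]} {g : ℕ} (hh : h.natDegree ≤ g) (hf : f.natDegree = 2 * g + 1)
    {d n1 n2 : ℕ} {z : QuadraticAlgebra K[X] f h} (hz : dg z ≤ d)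
    (h1 : d < 2 * n1) (h2 : d < 2 * n2 + 2 * g + 1) :
    z.re.degree < n1 ∧ z.im.degree < n2 := by
  have hf0 : f ≠ 0 := by rintro rfl; simp at hf
  rw [dg_eq hh hf, max_le_iff] at hz
  constructor
  · by_cases h0 : z.re = 0
    · simp [h0]
    · have := natDegree_le_of_degree_le hz.1
      rw [natDegree_pow] at this
      rw [degree_eq_natDegree h0]; exact_mod_cast (by omega)
  · by_cases h0 : z.im = 0
    · simp [h0]
    · have := natDegree_le_of_degree_le hz.2
      rw [natDegree_mul hf0 (pow_ne_zero _ h0), natDegree_pow, hf] at this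
      rw [degree_eq_natDegree h0]; exact_mod_cast (by omega)

lemma card_degreeLT [Fintype K] (n : ℕ) : Nat.card (degreeLT K n) = Fintype.card K ^ n := by
  rw [Nat.card_congr (degreeLTEquiv K n).toEquiv]; simp

theorem stepanov [Fintype K] [DecidableEq K] [CharP K 2] (r g : ℕ)
    (hQ : Fintype.card K = 2 ^ r * 2 ^ r) (hR : (g + 1) ^ 2 < 2 ^ r)
    (h f : K[X]) (hh : h.natDegree ≤ g) (hf : f.natDegree = 2 * g + 1)
    (P : Finset (K × K)) (hP : ∀ p ∈ P, p.2 ^ 2 = f.eval p.1 + h.eval p.1 * p.2) :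
    P.card ≤ 2 ^ r * 2 ^ r + (2 * g + 1) * 2 ^ r := by
  obtain ⟨H, hH⟩ : ∃ H, 2 ^ r = 2 * H := by
    rcases r with _ | r
    · simp at hR
    · exact ⟨2 ^ r, by ring⟩
  set R := 2 ^ r with hRdef
  have hgH : g ≤ H := by nlinarith
  have hR1 : 1 ≤ R := by omega
  -- unknowns
  let U := degreeLT K H × degreeLT K (H - g)
  let J := Fin (H + g + 1) ⊕ Fin H
  let V := degreeLT K (R * H + g + 1) × degreeLT K (R * H)
  have : ∀ n, Finite (degreeLT K n) := fun n => Finite.of_equiv _ (degreeLTEquiv K n).toEquiv.symm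
  let toO : U → QuadraticAlgebra K[X] f h := fun u => ⟨u.1.1, u.2.1⟩
  have toO_deg : ∀ u, dg (toO u) ≤ ((R - 1 : ℕ) : WithBot ℕ) := fun u =>
    dg_mk_le hh hf (mem_degreeLT.1 u.1.2) (mem_degreeLT.1 u.2.2) (by omega) (by omega)
  have toO_inj : ∀ u u', toO u = toO u' → u = u' := by
    intro u u' h
    have h1 := congrArg QuadraticAlgebra.re h
    have h2 := congrArg QuadraticAlgebra.im h
    exact Prod.ext (Subtype.ext h1) (Subtype.ext h2)
  have sdeg_le : ∀ j : J, sdeg g j ≤ R + 2 * g := by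
    rintro (⟨i, hi⟩ | ⟨i, hi⟩) <;> simp only [sdeg] <;> omega
  let Θ : (J → U) → QuadraticAlgebra K[X] f h := fun u => ∑ j, toO (u j) ^ R * sb f h j
  have Θ_deg : ∀ u, dg (Θ u) ≤ ((R * R + 2 * g : ℕ) : WithBot ℕ) := by
    intro u
    have : dg (Θ u) < ((R * R + 2 * g + 1 : ℕ) : WithBot ℕ) := by
      apply dg_sum_lt hh hf _ _ (WithBot.bot_lt_coe _)
      intro j _
      rw [dg_mul, dg_pow, dg_sb hh hf]
      calc R • dg (toO (u j)) + (sdeg g j : ℕ) ≤ R • ((R - 1 : ℕ) : WithBot ℕ) + ((R + 2 * g : ℕ) : WithBot ℕ) := by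
            gcongr
            · exact toO_deg _
            · exact sdeg_le j
        _ < _ := by
          rw [nsmul_eq_mul]
          obtain ⟨k, hk⟩ := Nat.exists_eq_add_of_le hR1
          have : R * (R - 1) + (R + 2 * g) < R * R + 2 * g + 1 := by
            rw [hk]; simp; ring_nf; omega
          have h2 : ((R * (R - 1) + (R + 2 * g) : ℕ) : WithBot ℕ) < ((R * R + 2 * g + 1 : ℕ) : WithBot ℕ) :=
            WithBot.coe_lt_coe.2 this
          refine lt_of_eq_of_lt ?_ h2
          push_cast; rfl
    by_cases hb : dg (Θ u) = ⊥
    · rw [hb]; exact bot_le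
    · obtain ⟨d, hd⟩ := WithBot.ne_bot_iff_exists.1 hb
      rw [← hd] at this ⊢
      have := WithBot.coe_lt_coe.1 this
      exact WithBot.coe_le_coe.2 (Nat.lt_succ_iff.1 this)
  have Θ_mem : ∀ u, (Θ u).re.degree < ((R * H + g + 1 : ℕ) : WithBot ℕ) ∧ (Θ u).im.degree < ((R * H : ℕ) : WithBot ℕ) := by
    intro u
    have e : R * R = 2 * (R * H) := by rw [hH]; ring
    refine degrees_of_dg_le hh hf (Θ_deg u) ?_ ?_ <;> rw [e] <;> omega
  let Θ' : (J → U) → V := fun u => (⟨(Θ u).re, mem_degreeLT.2 (Θ_mem u).1⟩, ⟨(Θ u).im, mem_degreeLT.2 (Θ_mem u).2⟩)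
  have hcard : Nat.card V < Nat.card (J → U) := by
    have hq : 1 < Fintype.card K := Fintype.one_lt_card
    rw [Nat.card_fun, Nat.card_prod, Nat.card_prod, card_degreeLT, card_degreeLT, card_degreeLT,
      card_degreeLT, ← pow_add, ← pow_add, ← pow_mul]
    apply Nat.pow_lt_pow_right hq
    simp only [J, Nat.card_sum, Nat.card_fin]
    obtain ⟨k, hk⟩ := Nat.exists_eq_add_of_le hgH
    rw [hk, Nat.add_sub_cancel_left, hH, hk]
    rw [hH, hk] at hR
    nlinarith
  obtain ⟨u, u', hne, heq⟩ : ∃ u u', u ≠ u' ∧ Θ' u = Θ' u' := by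
    by_contra hcon
    push Not at hcon
    have : Function.Injective Θ' := fun a b hab => by
      by_contra hne; exact hcon a b hne hab
    exact absurd (Nat.card_le_card_of_injective Θ' this) (by omega)
  have hΘ : Θ u = Θ u' := by
    have h1 := congrArg (fun v => v.1.1) heq
    have h2 := congrArg (fun v => v.2.1) heq
    exact QuadraticAlgebra.ext h1 h2
  let w : J → QuadraticAlgebra K[X] f h := fun j => toO (u j) - toO (u' j)
  have w_deg : ∀ j, dg (w j) < (R : WithBot ℕ) := by
    intro j
    have hlt : ((R - 1 : ℕ) : WithBot ℕ) < R := by exact_mod_cast (by omega)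
    simp only [w, sub_eq_add_neg]
    apply dg_add_lt hh hf
    · exact (toO_deg _).trans_lt hlt
    · rw [dg_neg]; exact (toO_deg _).trans_lt hlt
  let Ψ : QuadraticAlgebra K[X] f h := ∑ j, w j * sb f h j ^ R
  have v_deg : ∀ j, w j ≠ 0 → ∃ d : ℕ, d < R ∧ dg (w j * sb f h j ^ R) = ((d + R * sdeg g j : ℕ) : WithBot ℕ) := by
    intro j hj
    have hb : dg (w j) ≠ ⊥ := by rwa [Ne, dg_eq_bot hh hf]
    obtain ⟨d, hd⟩ := WithBot.ne_bot_iff_exists.1 hb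
    refine ⟨d, ?_, ?_⟩
    · have := w_deg j
      rw [← hd] at this; exact WithBot.coe_lt_coe.1 this
    · rw [dg_mul, dg_pow, dg_sb hh hf, ← hd, nsmul_eq_mul]; push_cast; rfl
  have hw0 : ∀ j, w j * sb f h j ^ R ≠ 0 → w j ≠ 0 := by
    intro j hj h0; apply hj; rw [h0, zero_mul]
  have hΨ0 : Ψ ≠ 0 := by
    apply sum_ne_zero_of_dg hh hf
    · obtain ⟨j, hj⟩ := Function.ne_iff.1 hne
      refine ⟨j, ?_⟩
      have : w j ≠ 0 := fun h0 => hj (toO_inj _ _ (sub_eq_zero.1 h0))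
      obtain ⟨d, -, hd⟩ := v_deg j this
      rw [Ne, ← dg_eq_bot hh hf, hd]
      exact WithBot.coe_ne_bot
    · intro i j hi hj hij
      obtain ⟨d, hd, hd'⟩ := v_deg i (hw0 i hi)
      obtain ⟨e, he, he'⟩ := v_deg j (hw0 j hj)
      rw [hd', he'] at hij
      have hij' : d + R * sdeg g i = e + R * sdeg g j := by exact_mod_cast hij
      apply sdeg_inj g
      have := congrArg (· / R) hij'
      simpa [Nat.add_mul_div_left _ _ (show 0 < R by omega), Nat.div_eq_of_lt hd, Nat.div_eq_of_lt he] using this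
  have hΨdeg : dg Ψ ≤ ((R * R + (2 * g + 1) * R : ℕ) : WithBot ℕ) := by
    apply le_of_lt
    apply dg_sum_lt hh hf _ _ (WithBot.bot_lt_coe _)
    intro j _
    by_cases hj : w j = 0
    · rw [hj, zero_mul, (dg_eq_bot hh hf).2 rfl]; exact WithBot.bot_lt_coe _
    · obtain ⟨d, hd, hd'⟩ := v_deg j hj
      rw [hd']
      have := Nat.mul_le_mul_left R (sdeg_le j)
      have : d + R * sdeg g j < R * R + (2 * g + 1) * R := by nlinarith
      exact WithBot.coe_lt_coe.2 this
  refine card_zeros_le Ψ ?_ _ hΨdeg P hP ?_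
  · intro h0
    apply hΨ0
    rw [← dg_eq_bot hh hf, dg, h0, degree_zero]
  · intro p hp
    let φ := ev f h p.1 p.2 (hP p hp)
    have h1 : φ Ψ ^ R = 0 := by
      have hfix : ∀ x : K, (x ^ R) ^ R = x := by
        intro x; rw [← pow_mul, ← hQ, FiniteField.pow_card]
      simp only [Ψ, map_sum, map_mul, map_pow, w, map_sub]
      rw [hRdef, sum_pow_char_pow 2]
      simp only [← hRdef, mul_pow, hfix]
      have : ∀ a b : K, (a - b) ^ R = a ^ R - b ^ R := fun a b => sub_pow_char_pow a b r 
      simp only [this, sub_mul, Finset.sum_sub_distrib]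
      have := congrArg φ hΘ
      simp only [Θ, map_sum, map_mul, map_pow] at this
      rw [this, sub_self]
    have := pow_eq_zero_iff (by omega) |>.1 h1
    rwa [ev_apply] at this

end Stepanov2
end PurityAux


namespace PurityAux
open Polynomial Finset

/-- sign character of `ZMod 2` -/
def sg (a : ZMod 2) : ℝ := if a = 0 then 1 else -1

lemma zmod2_cases (a : ZMod 2) : a = 0 ∨ a = 1 := by
  revert a; decide

lemma sg_add (a b : ZMod 2) : sg (a + b) = sg a * sg b := by
  rcases zmod2_cases a with rfl | rfl <;> rcases zmod2_cases b with rfl | rfl <;>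
    simp [sg, show (1 : ZMod 2) + 1 = 0 from rfl]

lemma abs_sg (a : ZMod 2) : |sg a| = 1 := by
  unfold sg; split_ifs <;> simp

section AS
variable {K : Type*} [Field K] [Fintype K] [DecidableEq K] [CharP K 2]

/-- Artin-Schreier solvability -/
lemma as_solvable (τ : K →+ ZMod 2) (hτ : ∀ t, τ (t ^ 2) = τ t) (hτ1 : ∃ e, τ e = 1)
    (w : K) (hw : τ w = 0) : ∃ t, t ^ 2 + t = w := by
  obtain ⟨e, he⟩ := hτ1
  let φ : K →+ K :=
    { toFun := fun t => t ^ 2 + t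
      map_zero' := by simp
      map_add' := fun a b => by rw [CharTwo.add_sq]; ring }
  have hφ : ∀ t, φ t = t ^ 2 + t := fun t => rfl
  have hsub : φ.range ≤ τ.ker := by
    rintro _ ⟨t, rfl⟩
    rw [AddMonoidHom.mem_ker, hφ, map_add, hτ]
    exact CharTwo.add_self_eq_zero _
  have hker : Nat.card φ.ker ≤ 2 := by
    have : (φ.ker : Set K) ⊆ (({0, 1} : Finset K) : Set K) := by
      intro t ht
      have ht : t ^ 2 + t = 0 := ht
      have : t * (t + 1) = 0 := by linear_combination ht
      rcases mul_eq_zero.1 this with h | h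
      · simp [h]
      · have : t = 1 := by rw [← sub_eq_zero, CharTwo.sub_eq_add]; exact h
        simp [this]
    calc Nat.card φ.ker = Set.ncard (φ.ker : Set K) := rfl
      _ ≤ Set.ncard (({0, 1} : Finset K) : Set K) := Set.ncard_le_ncard this (Finset.finite_toSet _)
      _ ≤ 2 := by rw [Set.ncard_coe_finset]; exact Finset.card_le_two
  have h1 : Nat.card φ.ker * Nat.card φ.range = Nat.card K := by
    have := AddSubgroup.card_mul_index φ.ker
    rwa [AddSubgroup.index_ker] at this
  have h2 : Nat.card τ.ker * 2 = Nat.card K := by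
    have := AddSubgroup.card_mul_index τ.ker
    rw [AddSubgroup.index_ker] at this
    have hs : Nat.card τ.range = 2 := by
      have : τ.range = ⊤ := by
        rw [AddMonoidHom.range_eq_top]
        intro a
        rcases zmod2_cases a with rfl | rfl
        · exact ⟨0, map_zero _⟩
        · exact ⟨e, he⟩
      rw [this]; simp
    rwa [hs] at this
  have h3 : φ.range = τ.ker := by
    apply AddSubgroup.eq_of_le_of_card_ge hsub
    nlinarith [Nat.card_pos (α := φ.range)]
  have : w ∈ φ.range := by rw [h3]; exact hw
  exact this

lemma as_upper (τ : K →+ ZMod 2) (hτ : ∀ t, τ (t ^ 2) = τ t) (hτ1 : ∃ e, τ e = 1)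
    (r g : ℕ) (hQ : Fintype.card K = 2 ^ r * 2 ^ r) (hR : (g + 1) ^ 2 < 2 ^ r)
    (h u : K[X]) (hh : h.natDegree = g) (hu : u.natDegree = g + 1) (e : K) :
    ∑ x ∈ univ.filter (fun x : K => h.eval x ≠ 0), (1 + sg (τ (u.eval x / h.eval x + e))) ≤
      2 ^ r * 2 ^ r + (2 * g + 1) * 2 ^ r := by
  classical
  have hu0 : u ≠ 0 := by rintro rfl; simp at hu
  by_cases hh0 : h = 0
  · simp [hh0]; positivity
  let f : K[X] := u * h + C e * h ^ 2
  have hf : f.natDegree = 2 * g + 1 := by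
    have h1 : (u * h).natDegree = 2 * g + 1 := by rw [natDegree_mul hu0 hh0, hu, hh]; ring
    have h2 : (C e * h ^ 2).natDegree < (u * h).natDegree := by
      rw [h1]
      refine (natDegree_C_mul_le _ _).trans_lt ?_
      rw [natDegree_pow, hh]; omega
    rw [natDegree_add_eq_left_of_natDegree_lt h2, h1]
  let P : Finset (K × K) := univ.filter fun p => h.eval p.1 ≠ 0 ∧ p.2 ^ 2 = f.eval p.1 + h.eval p.1 * p.2
  have hP := stepanov r g hQ hR h f hh.le hf P (fun p hp => (Finset.mem_filter.1 hp).2.2)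
  have hcard : P.card = ∑ x ∈ univ.filter (fun x : K => h.eval x ≠ 0), (P.filter fun p => p.1 = x).card :=
    Finset.card_eq_sum_card_fiberwise (fun p hp => by
      simp [P] at hp ⊢; exact hp.1)
  have hle : ∑ x ∈ univ.filter (fun x : K => h.eval x ≠ 0), (1 + sg (τ (u.eval x / h.eval x + e))) ≤ (P.card : ℝ) := by
    rw [hcard, Nat.cast_sum]
    apply Finset.sum_le_sum
    intro x hx
    have hx : h.eval x ≠ 0 := by simpa using hx
    by_cases hw : τ (u.eval x / h.eval x + e) = 0
    · obtain ⟨t, ht⟩ := as_solvable τ hτ hτ1 _ hw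
      have hs : ({(x, t * h.eval x), (x, (t + 1) * h.eval x)} : Finset (K × K)) ⊆ P.filter fun p => p.1 = x := by
        have key : ∀ s : K, s ^ 2 + s = u.eval x / h.eval x + e → (x, s * h.eval x) ∈ P.filter fun p => p.1 = x := by
          intro s hs
          simp only [P, Finset.mem_filter, Finset.mem_univ, true_and, and_true]
          refine ⟨hx, ?_⟩
          simp only [f, eval_add, eval_mul, eval_C, eval_pow]
          have : s ^ 2 = u.eval x / h.eval x + e + s := by
            rw [← hs, add_assoc, CharTwo.add_self_eq_zero, add_zero]
          rw [mul_pow, this]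
          field_simp
        intro p hp
        rw [Finset.mem_insert, Finset.mem_singleton] at hp
        rcases hp with rfl | rfl
        · exact key t ht
        · apply key
          rw [← ht, CharTwo.add_sq]
          have : (1 : K) + 1 = 0 := CharTwo.add_self_eq_zero _
          linear_combination this
      have hc := Finset.card_le_card hs
      rw [Finset.card_pair] at hc
      · have : (2 : ℝ) ≤ ((P.filter fun p => p.1 = x).card : ℝ) := by exact_mod_cast hc
        rw [sg, if_pos hw]; linarith
      · intro h0
        have := (Prod.ext_iff.1 h0).2
        simp only at this
        have := mul_right_cancel₀ hx this
        simp at this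
    · rw [sg, if_neg hw]; simp
  refine hle.trans ?_
  exact_mod_cast hP

lemma as_abs (τ : K →+ ZMod 2) (hτ : ∀ t, τ (t ^ 2) = τ t) (hτ1 : ∃ e, τ e = 1)
    (r g : ℕ) (hQ : Fintype.card K = 2 ^ r * 2 ^ r) (hR : (g + 1) ^ 2 < 2 ^ r)
    (h u : K[X]) (hh0 : h ≠ 0) (hh : h.natDegree = g) (hu : u.natDegree = g + 1) :
    |∑ x ∈ univ.filter (fun x : K => h.eval x ≠ 0), sg (τ (u.eval x / h.eval x))| ≤
      g + (2 * g + 1) * 2 ^ r := by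
  have h0 := as_upper τ hτ hτ1 r g hQ hR h u hh hu 0
  obtain ⟨e, he⟩ := hτ1
  have h1 := as_upper τ hτ ⟨e, he⟩ r g hQ hR h u hh hu e
  simp only [map_add, sg_add, he] at h1
  simp only [add_zero] at h0
  have hs1 : sg 1 = -1 := by simp [sg]
  rw [hs1] at h1
  rw [Finset.sum_add_distrib] at h0 h1
  rw [← Finset.sum_mul] at h1
  have hc : ((univ.filter (fun x : K => h.eval x ≠ 0)).card : ℝ) ≥ 2 ^ r * 2 ^ r - g := by
    have h2 : (univ.filter (fun x : K => h.eval x = 0)).card ≤ g := by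
      rw [← hh]
      refine le_trans ?_ (card_roots' h)
      refine le_trans (Finset.card_le_card ?_) (Multiset.toFinset_card_le h.roots)
      intro x hx
      simp at hx
      simp [hh0, hx]
    have h3 := Finset.card_filter_add_card_filter_not (s := (univ : Finset K)) (fun x : K => h.eval x = 0)
    rw [Finset.card_univ, hQ] at h3
    have h4 : ((univ.filter (fun x : K => h.eval x = 0)).card : ℝ) ≤ g := by exact_mod_cast h2
    have h5 : ((univ.filter (fun x : K => h.eval x = 0)).card : ℝ) + ((univ.filter (fun x : K => ¬ h.eval x = 0)).card : ℝ) = 2 ^ r * 2 ^ r := by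
      exact_mod_cast h3
    simp only [ne_eq]
    linarith
  simp only [Finset.sum_const, nsmul_eq_mul, mul_one] at h0 h1
  rw [abs_le]
  constructor <;> linarith

end AS
end PurityAux


namespace PurityAux
open Polynomial Finset

section NS
variable {K : Type*} [Field K] [Fintype K] [DecidableEq K] [CharP K 2]

lemma h_natDegree (n : ℕ) (hn : 2 ≤ n) :
    (X ^ (2 ^ n - 1) + (X + 1) ^ (2 ^ n - 1) : K[X]).natDegree = 2 ^ n - 2 ∧
    (X ^ (2 ^ n - 1) + (X + 1) ^ (2 ^ n - 1) : K[X]) ≠ 0 := by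
  have h4 : 4 ≤ 2 ^ n := by
    calc 4 = 2 ^ 2 := rfl
      _ ≤ 2 ^ n := Nat.pow_le_pow_right (by norm_num) hn
  set h : K[X] := X ^ (2 ^ n - 1) + (X + 1) ^ (2 ^ n - 1) with hh
  have key : X * (X + 1) * h = X ^ (2 ^ n) + X := by
    have e1 : (X + 1 : K[X]) ^ (2 ^ n) = X ^ (2 ^ n) + 1 := by
      rw [add_pow_char_pow, one_pow]
    have e2 : X * X ^ (2 ^ n - 1) = (X ^ (2 ^ n) : K[X]) := by
      rw [← pow_succ']; congr 1; omega
    have e3 : (X + 1) * (X + 1) ^ (2 ^ n - 1) = (X + 1 : K[X]) ^ (2 ^ n) := by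
      rw [← pow_succ']; congr 1; omega
    have e4 : (X ^ (2 ^ n + 1) + X ^ (2 ^ n + 1) : K[X]) = 0 := CharTwo.add_self_eq_zero _
    rw [hh]
    linear_combination (X + 1) * e2 + X * e3 + X * e1 + e4
  have hd : (X ^ (2 ^ n) + X : K[X]).natDegree = 2 ^ n := by
    rw [natDegree_add_eq_left_of_natDegree_lt] <;> simp
    omega
  have h0 : h ≠ 0 := by
    rintro h0
    rw [h0, mul_zero] at key
    rw [← key] at hd; simp at hd; omega
  refine ⟨?_, h0⟩
  have hX1 : (X + 1 : K[X]) ≠ 0 := (monic_X_add_C 1).ne_zero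
  rw [← key, natDegree_mul (mul_ne_zero X_ne_zero hX1) h0, natDegree_mul X_ne_zero hX1, natDegree_X,
    show (X + 1 : K[X]) = X + C 1 by simp, natDegree_X_add_C] at hd
  omega

lemma y_sum_bound (τ : K →+ ZMod 2) (hτ : ∀ t, τ (t ^ 2) = τ t) (hτ1 : ∃ e, τ e = 1)
    (r n : ℕ) (hn : 2 ≤ n) (hQ : Fintype.card K = 2 ^ r * 2 ^ r) (hR : (2 ^ n - 1) ^ 2 < 2 ^ r)
    (c : K) (hc : c ≠ 0) :
    |∑ y ∈ univ.filter (fun y : K => y ≠ 0 ∧ y ^ (2 ^ n - 1) ≠ 1),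
      sg (τ (c * (y ^ (2 ^ n - 1) / (1 + y ^ (2 ^ n - 1)))))| ≤ 3 * 2 ^ n * 2 ^ r := by
  have h4 : 4 ≤ 2 ^ n := by
    calc 4 = 2 ^ 2 := rfl
      _ ≤ 2 ^ n := Nat.pow_le_pow_right (by norm_num) hn
  obtain ⟨hh, hh0⟩ := h_natDegree (K := K) n hn
  set h : K[X] := X ^ (2 ^ n - 1) + (X + 1) ^ (2 ^ n - 1) with hhdef
  set u : K[X] := C c * (X + 1) ^ (2 ^ n - 1) with hudef
  have hu : u.natDegree = (2 ^ n - 2) + 1 := by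
    rw [hudef, natDegree_C_mul hc, natDegree_pow, show (X + 1 : K[X]) = X + C 1 by simp,
      natDegree_X_add_C]; omega
  have B := as_abs τ hτ hτ1 r (2 ^ n - 2) hQ (by convert hR using 2; omega) h u hh0 hh hu
  have heval : ∀ x : K, h.eval x = x ^ (2 ^ n - 1) + (x + 1) ^ (2 ^ n - 1) := fun x => by
    simp [hhdef]
  have ueval : ∀ x : K, u.eval x = c * (x + 1) ^ (2 ^ n - 1) := fun x => by
    simp [hudef]
  have hodd : 2 ^ n - 1 ≠ 0 := by omega
  have h11 : (1 : K) + 1 = 0 := CharTwo.add_self_eq_zero _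
  -- split off x = 0, 1
  set G : K → ℝ := fun x => sg (τ (u.eval x / h.eval x)) with hG
  have hsplit : ∑ x ∈ univ.filter (fun x : K => h.eval x ≠ 0), G x =
      ∑ x ∈ univ.filter (fun x : K => h.eval x ≠ 0 ∧ x ≠ 0 ∧ x ≠ 1), G x + (G 0 + G 1) := by
    have : univ.filter (fun x : K => h.eval x ≠ 0) =
        univ.filter (fun x : K => h.eval x ≠ 0 ∧ x ≠ 0 ∧ x ≠ 1) ∪ {0, 1} := by
      ext x
      simp only [Finset.mem_filter, Finset.mem_univ, true_and, Finset.mem_union, Finset.mem_insert, Finset.mem_singleton]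
      constructor
      · intro hx; tauto
      · rintro (hx | rfl | rfl)
        · exact hx.1
        · rw [heval]; simp [hodd]
        · rw [heval, h11]; simp [hodd]
    rw [this, Finset.sum_union, Finset.sum_pair zero_ne_one]
    rw [Finset.disjoint_left]
    intro x hx hx'
    simp at hx hx'
    tauto
  have hreidx : ∑ y ∈ univ.filter (fun y : K => y ≠ 0 ∧ y ^ (2 ^ n - 1) ≠ 1),
      sg (τ (c * (y ^ (2 ^ n - 1) / (1 + y ^ (2 ^ n - 1))))) =
      ∑ x ∈ univ.filter (fun x : K => h.eval x ≠ 0 ∧ x ≠ 0 ∧ x ≠ 1), G x := by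
    symm
    have hne1 : ∀ x : K, x + 1 = 0 ↔ x = 1 := fun x => by
      rw [← CharTwo.sub_eq_add, sub_eq_zero]
    have hpow : ∀ x : K, x ≠ 0 → 1 + ((x + 1) / x) ^ (2 ^ n - 1) = h.eval x / x ^ (2 ^ n - 1) := by
      intro x hx
      rw [heval, div_pow]; field_simp
    refine Finset.sum_bij' (fun x _ => (x + 1) / x) (fun y _ => 1 / (y + 1)) ?_ ?_ ?_ ?_ ?_
    · intro x hx
      simp only [Finset.mem_filter, Finset.mem_univ, true_and] at hx ⊢
      obtain ⟨a, b, d⟩ := hx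
      refine ⟨div_ne_zero (by rwa [Ne, hne1]) b, fun h1 => ?_⟩
      have := hpow x b
      rw [h1, h11] at this
      exact (div_ne_zero a (pow_ne_zero _ b)) this.symm
    · intro y hy
      simp only [Finset.mem_filter, Finset.mem_univ, true_and] at hy ⊢
      obtain ⟨a, b⟩ := hy
      have hy1 : y + 1 ≠ 0 := by
        rw [Ne, hne1]; rintro rfl; simp at b
      have hx0 : 1 / (y + 1) ≠ 0 := one_div_ne_zero hy1
      have e : (1 / (y + 1) + 1) / (1 / (y + 1)) = y := by
        field_simp
        linear_combination h11
      have := hpow _ hx0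
      rw [e] at this
      refine ⟨fun h1 => ?_, hx0, fun h1 => ?_⟩
      · rw [h1, zero_div, add_comm, hne1] at this
        exact b this
      · rw [h1, h11] at e; simp at e; exact a e.symm
    · intro x hx
      simp only [Finset.mem_filter, Finset.mem_univ, true_and] at hx
      obtain ⟨a, b, d⟩ := hx
      have : (x + 1) / x + 1 = 1 / x := by
        field_simp
        linear_combination x * h11
      rw [this]; simp
    · intro y hy
      simp only [Finset.mem_filter, Finset.mem_univ, true_and] at hy
      obtain ⟨a, b⟩ := hy
      have hy1 : y + 1 ≠ 0 := by
        rw [Ne, hne1]; rintro rfl; simp at b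
      field_simp
      linear_combination h11
    · intro x hx
      simp only [Finset.mem_filter, Finset.mem_univ, true_and] at hx
      obtain ⟨a, b, d⟩ := hx
      simp only [hG]
      rw [hpow x b, ueval, div_pow]
      congr 2
      field_simp
  rw [hreidx]
  rw [hsplit] at B
  have b0 := abs_sg (τ (u.eval 0 / h.eval 0))
  have b1 := abs_sg (τ (u.eval 1 / h.eval 1))
  have c0 : |G 0| = 1 := b0
  have c1 : |G 1| = 1 := b1
  have e : ((2 ^ n - 2 : ℕ) : ℝ) = 2 ^ n - 2 := by
    rw [Nat.cast_sub (by omega)]; simp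
  rw [e] at B
  have hr : (1 : ℝ) ≤ 2 ^ r := one_le_pow₀ (by norm_num)
  have h4' : (4 : ℝ) ≤ 2 ^ n := by exact_mod_cast h4
  set S := ∑ x ∈ univ.filter (fun x : K => h.eval x ≠ 0 ∧ x ≠ 0 ∧ x ≠ 1), G x
  have : |S| ≤ |S + (G 0 + G 1)| + |G 0| + |G 1| := by
    calc |S| = |(S + (G 0 + G 1)) - (G 0 + G 1)| := by congr 1; ring
      _ ≤ |S + (G 0 + G 1)| + |G 0 + G 1| := abs_sub _ _
      _ ≤ _ := by linarith [abs_add_le (G 0) (G 1)]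
  nlinarith

variable {F : Type*} [Field F] [Fintype F] [DecidableEq F] [Algebra F K]

lemma fiber_card (n : ℕ) (hn : 2 ≤ n) (hF : Fintype.card F = 2 ^ n) (v : K) (hv0 : v ≠ 0)
    (hv : Algebra.norm F v = 1) :
    (univ.filter (fun y : K => y ^ (2 ^ n - 1) = v)).card = 2 ^ n - 1 := by
  have h4 : 4 ≤ 2 ^ n := by
    calc 4 = 2 ^ 2 := rfl
      _ ≤ 2 ^ n := Nat.pow_le_pow_right (by norm_num) hn
  obtain ⟨γ, hγ⟩ := IsCyclic.exists_generator (α := Kˣ)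
  have hord : orderOf γ = Fintype.card K - 1 := by
    rw [orderOf_eq_card_of_forall_mem_zpowers hγ, Nat.card_eq_fintype_card, Fintype.card_units]
  have hdvd : 2 ^ n - 1 ∣ Fintype.card K - 1 := by
    rw [Module.card_eq_pow_finrank (K := F) (V := K), hF]
    simpa using Nat.sub_dvd_pow_sub_pow (2 ^ n) 1 (Module.finrank F K)
  obtain ⟨M, hM⟩ := hdvd
  have hK1 : 0 < Fintype.card K - 1 := by
    have := Fintype.one_lt_card (α := K); omega
  have hMpos : 0 < M := by
    rcases Nat.eq_zero_or_pos M with h | h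
    · rw [h] at hM; omega
    · exact h
  have hprim : IsPrimitiveRoot ((γ : K) ^ M) (2 ^ n - 1) := by
    have h1 : IsPrimitiveRoot γ (Fintype.card K - 1) := hord ▸ IsPrimitiveRoot.orderOf γ
    have h2 : IsPrimitiveRoot (γ : K) (Fintype.card K - 1) := IsPrimitiveRoot.coe_units_iff.2 h1
    exact h2.pow hK1 (by rw [hM, mul_comm])
  have hex : ∃ α : K, α ^ (2 ^ n - 1) = v := by
    obtain ⟨k, hk⟩ := (Subgroup.mem_zpowers_iff.1 (hγ (Units.mk0 v hv0)))
    have h1 := FiniteField.algebraMap_norm_eq_pow (K := F) (x := v)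
    rw [hv, map_one, Nat.card_eq_fintype_card, Nat.card_eq_fintype_card, hF, hM,
      Nat.mul_div_cancel_left _ (by omega)] at h1
    have h2 : γ ^ (k * (M : ℤ)) = 1 := by
      rw [zpow_mul, hk]; ext; simp [← h1]
    rw [← orderOf_dvd_iff_zpow_eq_one, hord, hM] at h2
    push_cast at h2
    have h3 : ((2 ^ n - 1 : ℕ) : ℤ) ∣ k := Int.dvd_of_mul_dvd_mul_right (by exact_mod_cast hMpos.ne') h2
    obtain ⟨j, hj⟩ := h3
    refine ⟨((γ ^ j : Kˣ) : K), ?_⟩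
    rw [← Units.val_pow_eq_pow_val, ← zpow_natCast, ← zpow_mul, mul_comm, ← hj, hk]; simp
  have hc := hprim.card_nthRoots v
  rw [if_pos hex] at hc
  have hnd : (nthRoots (2 ^ n - 1) v).Nodup := hprim.nthRoots_nodup hv0
  have e : univ.filter (fun y : K => y ^ (2 ^ n - 1) = v) = (nthRoots (2 ^ n - 1) v).toFinset := by
    ext y
    simp [mem_nthRoots (show 0 < 2 ^ n - 1 by omega)]
  rw [e, Multiset.toFinset_card_of_nodup hnd, hc]

lemma norm_div' (a b : K) (hb : b ≠ 0) :
    Algebra.norm F (a / b) = Algebra.norm F a / Algebra.norm F b := by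
  have hb' : Algebra.norm F b ≠ 0 := by rwa [Ne, Algebra.norm_eq_zero_iff]
  rw [eq_div_iff hb', ← map_mul, div_mul_cancel₀ _ hb]

theorem norm_sum_bound (τ : K →+ ZMod 2) (hτ : ∀ t, τ (t ^ 2) = τ t) (hτ1 : ∃ e, τ e = 1)
    (r n : ℕ) (hn : 2 ≤ n) (hF : Fintype.card F = 2 ^ n)
    (hQ : Fintype.card K = 2 ^ r * 2 ^ r) (hR : (2 ^ n - 1) ^ 2 < 2 ^ r)
    (c : K) (hc : c ≠ 0) :
    ((2 : ℝ) ^ n - 1) * |∑ z ∈ univ.filter (fun z : K => z ≠ 0 ∧ z ≠ 1 ∧ Algebra.norm F z = Algebra.norm F (z + 1)),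
      sg (τ (c * z))| ≤ 3 * 2 ^ n * 2 ^ r := by
  have h4 : 4 ≤ 2 ^ n := by
    calc 4 = 2 ^ 2 := rfl
      _ ≤ 2 ^ n := Nat.pow_le_pow_right (by norm_num) hn
  have B := y_sum_bound τ hτ hτ1 r n hn hQ hR c hc
  have h11 : (1 : K) + 1 = 0 := CharTwo.add_self_eq_zero _
  have hne1 : ∀ x : K, x + 1 = 0 ↔ x = 1 := fun x => by
    rw [← CharTwo.sub_eq_add, sub_eq_zero]
  have hcard : ∀ y : K, y ≠ 0 → Algebra.norm F (y ^ (2 ^ n - 1)) = 1 := by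
    intro y hy
    rw [map_pow, ← hF]
    exact FiniteField.pow_card_sub_one_eq_one _ (by rwa [Ne, Algebra.norm_eq_zero_iff])
  have key : ∑ y ∈ univ.filter (fun y : K => y ≠ 0 ∧ y ^ (2 ^ n - 1) ≠ 1),
      sg (τ (c * (y ^ (2 ^ n - 1) / (1 + y ^ (2 ^ n - 1))))) =
      ∑ z ∈ univ.filter (fun z : K => z ≠ 0 ∧ z ≠ 1 ∧ Algebra.norm F z = Algebra.norm F (z + 1)),
      ((2 : ℝ) ^ n - 1) * sg (τ (c * z)) := by
    rw [← Finset.sum_fiberwise_of_maps_to (g := fun y : K => y ^ (2 ^ n - 1) / (1 + y ^ (2 ^ n - 1)))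
      (t := univ.filter (fun z : K => z ≠ 0 ∧ z ≠ 1 ∧ Algebra.norm F z = Algebra.norm F (z + 1)))]
    · apply Finset.sum_congr rfl
      intro z hz
      simp only [Finset.mem_filter, Finset.mem_univ, true_and] at hz
      obtain ⟨z0, z1, hz⟩ := hz
      have z1' : z + 1 ≠ 0 := by rwa [Ne, hne1]
      have hfib : (univ.filter (fun y : K => y ≠ 0 ∧ y ^ (2 ^ n - 1) ≠ 1)).filter
          (fun y => y ^ (2 ^ n - 1) / (1 + y ^ (2 ^ n - 1)) = z) =
          univ.filter (fun y : K => y ^ (2 ^ n - 1) = z / (z + 1)) := by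
        ext y
        simp only [Finset.mem_filter, Finset.mem_univ, true_and]
        constructor
        · rintro ⟨⟨_, hy1⟩, hy⟩
          have h1 : 1 + y ^ (2 ^ n - 1) ≠ 0 := by rwa [add_comm, Ne, hne1]
          rw [← hy]
          have e : y ^ (2 ^ n - 1) / (1 + y ^ (2 ^ n - 1)) + 1 = 1 / (1 + y ^ (2 ^ n - 1)) := by
            field_simp
            linear_combination y ^ (2 ^ n - 1) * h11
          rw [e]; field_simp
        · intro hy
          have hy1 : y ^ (2 ^ n - 1) ≠ 1 := by
            rw [hy]; intro h
            rw [div_eq_one_iff_eq z1'] at h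
            simp at h
          refine ⟨⟨?_, hy1⟩, ?_⟩
          · rintro rfl
            rw [zero_pow (by omega)] at hy
            exact div_ne_zero z0 z1' hy.symm
          · rw [hy]
            have e : 1 + z / (z + 1) = 1 / (z + 1) := by
              field_simp
              linear_combination z * h11
            rw [e]; field_simp
      rw [hfib]
      have hsum : ∀ y ∈ univ.filter (fun y : K => y ^ (2 ^ n - 1) = z / (z + 1)),
          sg (τ (c * (y ^ (2 ^ n - 1) / (1 + y ^ (2 ^ n - 1))))) = sg (τ (c * z)) := by
        intro y hy
        rw [← hfib] at hy
        rw [(Finset.mem_filter.1 hy).2]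
      rw [Finset.sum_congr rfl hsum, Finset.sum_const, fiber_card (F := F) n hn hF _ (div_ne_zero z0 z1'), nsmul_eq_mul,
        Nat.cast_sub (by omega)]
      · simp
      · have hz1 : Algebra.norm F (z + 1) ≠ 0 := by rwa [Ne, Algebra.norm_eq_zero_iff]
        rw [norm_div' _ _ z1', hz, div_self hz1]
    · intro y hy
      simp only [Finset.mem_filter, Finset.mem_univ, true_and] at hy ⊢
      have h1 : 1 + y ^ (2 ^ n - 1) ≠ 0 := by rw [add_comm, Ne, hne1]; exact hy.2
      have e : y ^ (2 ^ n - 1) / (1 + y ^ (2 ^ n - 1)) + 1 = 1 / (1 + y ^ (2 ^ n - 1)) := by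
        field_simp
        linear_combination y ^ (2 ^ n - 1) * h11
      refine ⟨div_ne_zero (pow_ne_zero _ hy.1) h1, ?_, ?_⟩
      · rw [Ne, ← hne1, e]; exact one_div_ne_zero h1
      · rw [e, norm_div' _ _ h1, norm_div' _ _ h1, hcard y hy.1, map_one]
  rw [key, ← Finset.mul_sum, abs_mul] at B
  rwa [abs_of_nonneg (by have : (1:ℝ) ≤ 2 ^ n := one_le_pow₀ (by norm_num)
                         linarith)] at B

end NS
end PurityAux


namespace PurityAux
open Polynomial Finset

section Newton
variable {F : Type*} [Field F] [Finite F]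

lemma mon_finite (F : Type*) [Field F] [Finite F] (k : ℕ) : {p : F[X] | p.Monic ∧ p.natDegree = k}.Finite := by
  have : Finite (degreeLT F k) := Finite.of_equiv _ (degreeLTEquiv F k).toEquiv.symm
  have : Finite { p : F[X] // p.Monic ∧ p.natDegree = k } := Finite.of_equiv _ (monicEquivDegreeLT k).symm
  exact Set.finite_coe_iff.1 this

variable (F) in
/-- monic polynomials of degree `k` -/
def mon (k : ℕ) : Finset F[X] := (mon_finite F k).toFinset

lemma mem_mon {k : ℕ} {p : F[X]} : p ∈ mon F k ↔ p.Monic ∧ p.natDegree = k := by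
  simp [mon]

open Classical in
variable (F) in
/-- monic irreducible polynomials of degree `k` -/
def irr (k : ℕ) : Finset F[X] := (mon F k).filter Irreducible

lemma mem_irr {k : ℕ} {p : F[X]} : p ∈ irr F k ↔ p.Monic ∧ p.natDegree = k ∧ Irreducible p := by
  simp [irr, mem_mon, and_assoc]

/-- coefficient sums of the L-function -/
def Lc (lam : F[X] → ℂ) (k : ℕ) : ℂ := ∑ p ∈ mon F k, lam p

/-- power sums of the L-function -/
def Sc (lam : F[X] → ℂ) (m : ℕ) : ℂ := ∑ d ∈ m.divisors, ∑ P ∈ irr F d, (d : ℂ) * lam P ^ (m / d)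

open Classical in
lemma degree_count (k : ℕ) (f : F[X]) (hf : f ∈ mon F k) :
    (k : ℂ) = ∑ d ∈ Icc 1 k, ∑ P ∈ irr F d, ∑ j ∈ Icc 1 k, if P ^ j ∣ f then (d : ℂ) else 0 := by
  obtain ⟨hm, hk⟩ := mem_mon.1 hf
  have hf0 := hm.ne_zero
  set s := UniqueFactorizationMonoid.normalizedFactors f with hs
  have hprod : s.prod = f := by
    rw [hs, UniqueFactorizationMonoid.prod_normalizedFactors_eq hf0, hm.normalize_eq_self]
  have hmem : ∀ P ∈ s, P.Monic ∧ Irreducible P ∧ P.natDegree ≤ k ∧ 1 ≤ P.natDegree := by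
    intro P hP
    have hi := UniqueFactorizationMonoid.irreducible_of_normalized_factor P hP
    have hn := UniqueFactorizationMonoid.normalize_normalized_factor P hP
    refine ⟨?_, hi, ?_, hi.natDegree_pos⟩
    · rw [← hn]; exact monic_normalize hi.ne_zero
    · rw [← hk]
      exact natDegree_le_of_dvd (UniqueFactorizationMonoid.dvd_of_mem_normalizedFactors hP) hf0
  have hcount : ∀ P : F[X], P.Monic → Irreducible P → ∀ j, P ^ j ∣ f ↔ j ≤ s.count P := by
    intro P hPm hPi j
    rw [pow_dvd_iff_le_emultiplicity,
      UniqueFactorizationMonoid.emultiplicity_eq_count_normalizedFactors hPi hf0,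
      hPm.normalize_eq_self]
    exact_mod_cast Iff.rfl
  have hdeg : k = ∑ P ∈ s.toFinset, s.count P * P.natDegree := by
    rw [← hk]
    conv_lhs => rw [← hprod]
    rw [natDegree_multiset_prod_of_monic _ (fun P hP => (hmem P hP).1), Finset.sum_multiset_map_count]
    simp
  have hck : ∀ P : F[X], P.Monic → Irreducible P → s.count P ≤ k := by
    intro P hPm hPi
    have h1 := (hcount P hPm hPi (s.count P)).2 le_rfl
    have h2 := natDegree_le_of_dvd h1 hf0
    rw [natDegree_pow, hk] at h2
    nlinarith [hPi.natDegree_pos]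
  have hinner : ∀ d ∈ Icc 1 k, ∀ P ∈ irr F d, (∑ j ∈ Icc 1 k, if P ^ j ∣ f then (d : ℂ) else 0) =
      (s.count P : ℂ) * P.natDegree := by
    intro d _ P hP
    obtain ⟨hPm, hPd, hPi⟩ := mem_irr.1 hP
    simp only [hcount P hPm hPi]
    rw [← Finset.sum_filter]
    have : (Icc 1 k).filter (fun j => j ≤ s.count P) = Icc 1 (s.count P) := by
      have := hck P hPm hPi
      ext j; simp; omega
    rw [this]; simp [hPd]
  rw [Finset.sum_congr rfl fun d hd => Finset.sum_congr rfl (hinner d hd)]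
  rw [← Finset.sum_biUnion]
  · conv_lhs => rw [hdeg]
    push_cast
    apply Finset.sum_subset
    · intro P hP
      rw [Multiset.mem_toFinset] at hP
      obtain ⟨a, b, c, d⟩ := hmem P hP
      rw [Finset.mem_biUnion]
      exact ⟨P.natDegree, by simp; omega, mem_irr.2 ⟨a, rfl, b⟩⟩
    · intro P _ hP
      rw [Multiset.mem_toFinset] at hP
      simp [Multiset.count_eq_zero_of_notMem hP]
  · intro d _ e _ hde
    simp only [Function.onFun]
    rw [Finset.disjoint_left]
    intro P h1 h2
    exact hde ((mem_irr.1 h1).2.1.symm.trans (mem_irr.1 h2).2.1)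

open Classical in
lemma sum_multiples (lam : F[X] → ℂ) (hmul : ∀ p q : F[X], p.Monic → q.Monic → lam (p * q) = lam p * lam q)
    (k : ℕ) (Q : F[X]) (hQ : Q.Monic) :
    ∑ f ∈ (mon F k).filter (fun f => Q ∣ f), lam f =
      if Q.natDegree ≤ k then lam Q * Lc lam (k - Q.natDegree) else 0 := by
  split_ifs with h
  · rw [Lc, Finset.mul_sum]
    symm
    refine Finset.sum_bij (fun g _ => Q * g) ?_ ?_ ?_ ?_
    · intro g hg
      obtain ⟨a, b⟩ := mem_mon.1 hg
      rw [Finset.mem_filter, mem_mon]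
      refine ⟨⟨hQ.mul a, ?_⟩, dvd_mul_right _ _⟩
      rw [hQ.natDegree_mul a]; omega
    · intro g1 _ g2 _ h12
      exact mul_left_cancel₀ hQ.ne_zero h12
    · intro f hf
      rw [Finset.mem_filter, mem_mon] at hf
      obtain ⟨⟨a, b⟩, g, rfl⟩ := hf
      have hg : g.Monic := hQ.of_mul_monic_left a
      refine ⟨g, mem_mon.2 ⟨hg, ?_⟩, rfl⟩
      rw [hQ.natDegree_mul hg] at b; omega
    · intro g hg
      rw [hmul _ _ hQ (mem_mon.1 hg).1]
  · apply Finset.sum_eq_zero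
    intro f hf
    rw [Finset.mem_filter, mem_mon] at hf
    obtain ⟨⟨a, b⟩, c⟩ := hf
    have := natDegree_le_of_dvd c a.ne_zero
    omega

theorem newton (lam : F[X] → ℂ) (h1 : lam 1 = 1)
    (hmul : ∀ p q : F[X], p.Monic → q.Monic → lam (p * q) = lam p * lam q) (k : ℕ) :
    (k : ℂ) * Lc lam k = ∑ m ∈ Icc 1 k, Sc lam m * Lc lam (k - m) := by
  classical
  have hpow : ∀ P : F[X], P.Monic → ∀ j, lam (P ^ j) = lam P ^ j := by
    intro P hP j
    induction j with
    | zero => simp [h1]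
    | succ j ih => rw [pow_succ, hmul _ _ (hP.pow j) hP, ih, pow_succ]
  have hL : (k : ℂ) * Lc lam k = ∑ d ∈ Icc 1 k, ∑ P ∈ irr F d, ∑ j ∈ Icc 1 k,
      if j * d ≤ k then (d : ℂ) * lam P ^ j * Lc lam (k - j * d) else 0 := by
    conv_lhs => rw [Lc, Finset.mul_sum]
    have : ∀ f ∈ mon F k, (k : ℂ) * lam f = ∑ d ∈ Icc 1 k, ∑ P ∈ irr F d, ∑ j ∈ Icc 1 k,
        if P ^ j ∣ f then (d : ℂ) * lam f else 0 := by
      intro f hf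
      conv_lhs => rw [degree_count k f hf]
      simp only [Finset.sum_mul, ite_mul, zero_mul]
    rw [Finset.sum_congr rfl this, Finset.sum_comm]
    apply Finset.sum_congr rfl; intro d _
    rw [Finset.sum_comm]
    apply Finset.sum_congr rfl; intro P hP
    obtain ⟨hPm, hPd, hPi⟩ := mem_irr.1 hP
    rw [Finset.sum_comm]
    apply Finset.sum_congr rfl; intro j _
    rw [← Finset.sum_filter, ← Finset.mul_sum, sum_multiples lam hmul k _ (hPm.pow j), hpow P hPm,
      hPm.natDegree_pow, hPd]
    split_ifs
    · ring
    · simp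
  rw [hL]
  have hR : ∑ m ∈ Icc 1 k, Sc lam m * Lc lam (k - m) = ∑ d ∈ Icc 1 k, ∑ P ∈ irr F d,
      ∑ m ∈ Icc 1 k, if d ∣ m then (d : ℂ) * lam P ^ (m / d) * Lc lam (k - m) else 0 := by
    have : ∀ m ∈ Icc 1 k, Sc lam m * Lc lam (k - m) = ∑ d ∈ Icc 1 k, ∑ P ∈ irr F d,
        if d ∣ m then (d : ℂ) * lam P ^ (m / d) * Lc lam (k - m) else 0 := by
      intro m hm
      rw [Finset.mem_Icc] at hm
      have hdiv : m.divisors = (Icc 1 k).filter (fun d => d ∣ m) := by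
        ext d
        simp only [Nat.mem_divisors, Finset.mem_filter, Finset.mem_Icc]
        constructor
        · rintro ⟨a, b⟩
          exact ⟨⟨Nat.pos_of_dvd_of_pos a (by omega), (Nat.le_of_dvd (by omega) a).trans hm.2⟩, a⟩
        · rintro ⟨_, a⟩; exact ⟨a, by omega⟩
      rw [Sc, hdiv, Finset.sum_filter, Finset.sum_mul]
      apply Finset.sum_congr rfl; intro d _
      split_ifs
      · rw [Finset.sum_mul]
      · simp
    rw [Finset.sum_congr rfl this, Finset.sum_comm]
    apply Finset.sum_congr rfl; intro d _
    rw [Finset.sum_comm]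
  rw [hR]
  apply Finset.sum_congr rfl; intro d hd
  apply Finset.sum_congr rfl; intro P hP
  rw [Finset.mem_Icc] at hd
  rw [← Finset.sum_filter, ← Finset.sum_filter]
  refine Finset.sum_bij (fun j _ => j * d) ?_ ?_ ?_ ?_
  · intro j hj
    simp only [Finset.mem_filter, Finset.mem_Icc] at hj ⊢
    exact ⟨⟨Nat.mul_pos (by omega) (by omega), hj.2⟩, dvd_mul_left _ _⟩
  · intro a _ b _ hab
    exact Nat.eq_of_mul_eq_mul_right (by omega) hab
  · intro m hm
    simp only [Finset.mem_filter, Finset.mem_Icc] at hm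
    obtain ⟨⟨a, b⟩, c, rfl⟩ := hm
    refine ⟨c, ?_, mul_comm _ _⟩
    have hc : 1 ≤ c := by
      rcases Nat.eq_zero_or_pos c with h | h
      · subst h; omega
      · exact h
    simp only [Finset.mem_filter, Finset.mem_Icc]
    refine ⟨⟨hc, by nlinarith⟩, by linarith [mul_comm c d]⟩
  · intro j _
    rw [Nat.mul_div_cancel _ (by omega)]

/-- Power sums of a degree two L-function. -/
theorem power_sums (lam : F[X] → ℂ) (h1 : lam 1 = 1)
    (hmul : ∀ p q : F[X], p.Monic → q.Monic → lam (p * q) = lam p * lam q)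
    (hL : ∀ k, 3 ≤ k → Lc lam k = 0) (α β : ℂ) (hs : α + β = - Lc lam 1) (hp : α * β = Lc lam 2)
    (m : ℕ) (hm : 1 ≤ m) : Sc lam m = -(α ^ m + β ^ m) := by
  have hL0 : Lc lam 0 = 1 := by
    have : mon F 0 = {1} := by
      ext p; rw [mem_mon, Finset.mem_singleton]
      constructor
      · rintro ⟨a, b⟩; exact a.natDegree_eq_zero.1 b
      · rintro rfl; simp
    rw [Lc, this, Finset.sum_singleton, h1]
  have hN := newton lam h1 hmul
  induction m using Nat.strong_induction_on with
  | _ m ih =>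
    rcases m with _ | _ | _ | m
    · omega
    · have := hN 1
      simp [hL0] at this
      rw [← this]; simp; linear_combination hs
    · have := hN 2
      rw [show Icc 1 2 = {1, 2} from rfl, Finset.sum_pair (by norm_num), ih 1 (by norm_num) le_rfl] at this
      simp [hL0] at this
      rw [← hp] at this
      have h2 : Lc lam 1 = -(α + β) := by rw [hs]; ring
      rw [h2] at this
      simp only [zero_add, Nat.reduceAdd]
      linear_combination -this
    · have := hN (m + 3)
      rw [hL (m + 3) (by omega), mul_zero, Finset.sum_Icc_succ_top (by omega), Finset.sum_Icc_succ_top (by omega),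
        Finset.sum_Icc_succ_top (by omega)] at this
      rw [Finset.sum_eq_zero, ih (m + 1) (by omega) (by omega), ih (m + 2) (by omega) (by omega)] at this
      · have e1 : m + 3 - (m + 1) = 2 := by omega
        have e2 : m + 3 - (m + 1 + 1) = 1 := by omega
        have e3 : m + 3 - (m + 2 + 1) = 0 := by omega
        rw [e1, e2, e3, hL0, ← hp] at this
        have h2 : Lc lam 1 = -(α + β) := by rw [hs]; ring
        rw [h2] at this
        simp only [add_assoc, Nat.reduceAdd] at this ⊢
        linear_combination -this
      · intro i hi
        rw [Finset.mem_Icc] at hi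
        rw [hL _ (by omega), mul_zero]

end Newton
end PurityAux


namespace PurityAux
open Polynomial Finset

section Lfun
variable {F : Type*} [Field F] [Finite F]

/-- the multiplicative function on monic polynomials -/
def lam (χ : MulChar F ℂ) (ψ : AddChar F ℂ) (p : F[X]) : ℂ :=
  χ (p.eval 0) * χ⁻¹ (p.eval 1) * ψ p.nextCoeff

lemma lam_one (χ : MulChar F ℂ) (ψ : AddChar F ℂ) : lam χ ψ 1 = 1 := by
  simp [lam, nextCoeff]

lemma lam_mul (χ : MulChar F ℂ) (ψ : AddChar F ℂ) (p q : F[X]) (hp : p.Monic) (hq : q.Monic) :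
    lam χ ψ (p * q) = lam χ ψ p * lam χ ψ q := by
  simp only [lam, eval_mul, map_mul, hp.nextCoeff_mul hq, AddChar.map_add_eq_mul]
  ring

lemma Lc_one [Fintype F] [CharP F 2] (χ : MulChar F ℂ) (ψ : AddChar F ℂ) :
    Lc (lam χ ψ) 1 = ∑ a : F, χ a * χ⁻¹ (a + 1) * ψ a := by
  rw [Lc]
  symm
  refine Finset.sum_bij (fun a _ => X + C a) ?_ ?_ ?_ ?_
  · intro a _
    exact mem_mon.2 ⟨monic_X_add_C a, natDegree_X_add_C a⟩
  · intro a _ b _ h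
    simpa using h
  · intro p hp
    obtain ⟨h1, h2⟩ := mem_mon.1 hp
    refine ⟨p.coeff 0, mem_univ _, ?_⟩
    have := h1.eq_X_add_C h2
    exact this.symm
  · intro a _
    simp [lam, add_comm]

lemma Lc_zero [CharP F 2] (χ : MulChar F ℂ) (ψ : AddChar F ℂ) (hψ : ψ ≠ 1) (k : ℕ) (hk : 3 ≤ k) :
    Lc (lam χ ψ) k = 0 := by
  obtain ⟨c, hc⟩ := AddChar.ne_one_iff.1 hψ
  have h2 : (c : F) + c = 0 := CharTwo.add_self_eq_zero c
  set t : F[X] := C c * X ^ (k-1) + C c * X ^ (k-2) with ht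
  have htd : t.degree < k := by
    refine lt_of_le_of_lt (degree_add_le _ _) (max_lt ?_ ?_)
    · exact lt_of_le_of_lt (degree_C_mul_X_pow_le _ _) (by exact_mod_cast (by omega))
    · exact lt_of_le_of_lt (degree_C_mul_X_pow_le _ _) (by exact_mod_cast (by omega))
  have key : ∀ p ∈ mon F k, p + t ∈ mon F k := by
    intro p hp
    obtain ⟨h1, h2⟩ := mem_mon.1 hp
    have hd : t.degree < p.degree := by
      rwa [degree_eq_natDegree h1.ne_zero, h2]
    exact mem_mon.2 ⟨h1.add_of_left hd, by rw [natDegree_add_eq_left_of_degree_lt hd, h2]⟩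
  have tt : t + t = 0 := CharTwo.add_self_eq_zero t
  have hl : ∀ p ∈ mon F k, lam χ ψ (p + t) = ψ c * lam χ ψ p := by
    intro p hp
    obtain ⟨h1, h2⟩ := mem_mon.1 hp
    obtain ⟨h1', h2'⟩ := mem_mon.1 (key p hp)
    have e0 : (p + t).eval 0 = p.eval 0 := by
      simp only [ht, eval_add, eval_mul, eval_C, eval_pow, eval_X]
      rw [zero_pow (by omega), zero_pow (by omega)]; ring
    have e1 : (p + t).eval 1 = p.eval 1 := by
      simp only [ht, eval_add, eval_mul, eval_C, eval_pow, eval_X]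
      rw [one_pow, one_pow, mul_one, CharTwo.add_self_eq_zero, add_zero]
    have e2 : (p + t).nextCoeff = c + p.nextCoeff := by
      rw [nextCoeff_of_natDegree_pos (by omega), nextCoeff_of_natDegree_pos (by omega), h2, h2',
        ht, coeff_add, coeff_add, coeff_C_mul_X_pow, coeff_C_mul_X_pow, if_pos rfl, if_neg (by omega)]
      ring
    rw [lam, lam, e0, e1, e2, AddChar.map_add_eq_mul]; ring
  have : Lc (lam χ ψ) k = ψ c * Lc (lam χ ψ) k := by
    conv_rhs => rw [Lc, Finset.mul_sum, ← Finset.sum_congr rfl hl]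
    rw [Lc]
    refine Finset.sum_nbij' (fun p => p + t) (fun p => p + t) key key ?_ ?_ ?_
    · intro p _; simp [add_assoc, tt]
    · intro p _; simp [add_assoc, tt]
    · intro p _; simp [add_assoc, tt]
  have h3 : (ψ c - 1) * Lc (lam χ ψ) k = 0 := by linear_combination -this
  rcases mul_eq_zero.1 h3 with h | h
  · exact absurd (sub_eq_zero.1 h) hc
  · exact h

variable {K : Type*} [Field K] [Fintype K] [Algebra F K]

lemma finrank_adj (z : K) :
    Module.finrank (IntermediateField.adjoin F {z}) K = Module.finrank F K / (minpoly F z).natDegree := by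
  have : FiniteDimensional F K := Module.Finite.of_finite
  have hz : IsIntegral F z := IsIntegral.of_finite F z
  have h1 := Module.finrank_mul_finrank F (IntermediateField.adjoin F {z}) K
  rw [IntermediateField.adjoin.finrank hz] at h1
  rw [← h1, Nat.mul_div_cancel_left _ (minpoly.natDegree_pos hz)]

lemma norm_minpoly [CharP F 2] (z : K) :
    Algebra.norm F z = ((minpoly F z).eval 0) ^ (Module.finrank F K / (minpoly F z).natDegree) := by
  have : FiniteDimensional F K := Module.Finite.of_finite
  have hz : IsIntegral F z := IsIntegral.of_finite F z
  rw [Algebra.norm_eq_norm_adjoin, ← finrank_adj, ← IntermediateField.adjoin.powerBasis_gen hz,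
    Algebra.PowerBasis.norm_gen_eq_coeff_zero_minpoly]
  rw [IntermediateField.adjoin.powerBasis_gen hz, IntermediateField.minpoly_gen, CharTwo.neg_eq, one_pow, one_mul,
    coeff_zero_eq_eval_zero]

lemma G_eq [CharP F 2] (χ : MulChar F ℂ) (ψ : AddChar F ℂ) (z : K) :
    χ (Algebra.norm F z) * χ⁻¹ (Algebra.norm F (z + 1)) * ψ (Algebra.trace F K z) =
      lam χ ψ (minpoly F z) ^ (Module.finrank F K / (minpoly F z).natDegree) := by
  have : FiniteDimensional F K := Module.Finite.of_finite
  have h1 : minpoly F (z + 1) = (minpoly F z).comp (X - C 1) := by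
    have := minpoly.add_algebraMap z (1 : F)
    simpa using this
  have h2 : (minpoly F (z+1)).natDegree = (minpoly F z).natDegree := by
    rw [h1, natDegree_comp, natDegree_X_sub_C, mul_one]
  have h3 : (minpoly F (z+1)).eval 0 = (minpoly F z).eval 1 := by
    rw [h1, eval_comp]; simp [CharTwo.neg_eq]
  rw [norm_minpoly z, norm_minpoly (z+1), h2, h3, trace_eq_finrank_mul_minpoly_nextCoeff, finrank_adj,
    CharTwo.neg_eq, ← nsmul_eq_mul, AddChar.map_nsmul_eq_pow, lam, map_pow, map_pow, mul_pow, mul_pow]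

open Classical in
lemma root_count (P : F[X]) (hm : P.Monic) (hi : Irreducible P) (hd : P.natDegree ∣ Module.finrank F K) :
    (univ.filter (fun z : K => minpoly F z = P)).card = P.natDegree := by
  have : FiniteDimensional F K := Module.Finite.of_finite
  have hs : (P.map (algebraMap F K)).Splits := by
    have h1 : P ∣ X ^ (Nat.card F) ^ (Module.finrank F K) - X := 
      (Irreducible.natDegree_dvd_iff_dvd_X_pow_card_pow_sub_X hi).1 hd
    have h2 : (X ^ (Nat.card F) ^ (Module.finrank F K) - X : F[X]) = X ^ (Nat.card K) - X := by
      rw [Module.natCard_eq_pow_finrank (K := F) (V := K)]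
    rw [h2] at h1
    refine Splits.of_dvd (Polynomial.splits_X_pow_nat_card_sub_X (K := K)) ?_ ?_
    · exact FiniteField.X_pow_card_sub_X_ne_zero _ Finite.one_lt_card
    · simpa using Polynomial.map_dvd (algebraMap F K) h1
  have hsep : P.Separable := PerfectField.separable_of_irreducible hi
  have : (univ.filter (fun z : K => minpoly F z = P)) = (P.aroots K).toFinset := by
    ext z
    simp only [mem_filter, mem_univ, true_and, Multiset.mem_toFinset, mem_aroots, hi.ne_zero, ne_eq, not_false_eq_true]
    constructor
    · rintro rfl; exact minpoly.aeval _ _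
    · intro h; exact (minpoly.eq_of_irreducible_of_monic hi h hm).symm
  rw [this, Multiset.toFinset_card_of_nodup (Polynomial.nodup_roots hsep.map), ← hs.natDegree_eq_card_roots, natDegree_map]

lemma Sc_eq [CharP F 2] (χ : MulChar F ℂ) (ψ : AddChar F ℂ) :
    Sc (lam χ ψ) (Module.finrank F K) =
      ∑ z : K, χ (Algebra.norm F z) * χ⁻¹ (Algebra.norm F (z + 1)) * ψ (Algebra.trace F K z) := by
  classical
  have : FiniteDimensional F K := Module.Finite.of_finite
  have hdv : ∀ z : K, (minpoly F z).natDegree ∣ Module.finrank F K := fun z => minpoly.degree_dvd (IsIntegral.of_finite F z)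
  simp only [G_eq]
  set m := Module.finrank F K with hm
  have hm0 : m ≠ 0 := Module.finrank_pos.ne'
  rw [Sc, ← Finset.sum_fiberwise_of_maps_to (s := univ) (t := m.divisors) (g := fun z : K => (minpoly F z).natDegree)
    (fun z _ => Nat.mem_divisors.2 ⟨hdv z, hm0⟩)]
  refine Finset.sum_congr rfl fun d hd => ?_
  rw [← Finset.sum_fiberwise_of_maps_to (t := irr F d) (g := fun z : K => minpoly F z)]
  · refine Finset.sum_congr rfl fun P hP => ?_
    obtain ⟨h1, h2, h3⟩ := mem_irr.1 hP
    rw [Finset.sum_congr rfl (g := fun _ => lam χ ψ P ^ (m / d))]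
    · rw [sum_const, nsmul_eq_mul]
      congr 2
      have hrc := root_count (K := K) P h1 h3 (h2 ▸ (Nat.mem_divisors.1 hd).1)
      subst h2
      rw [← hrc, filter_filter]
      conv_rhs => rw [hrc]
      congr 1
      ext z
      simp only [mem_filter, mem_univ, true_and]
      constructor
      · rintro rfl; exact ⟨rfl, rfl⟩
      · exact fun h => h.2
    · intro z hz
      simp only [mem_filter, mem_univ, true_and] at hz
      rw [hz.1, hz.2]
  · intro z hz
    simp only [mem_filter, mem_univ, true_and] at hz
    exact mem_irr.2 ⟨minpoly.monic (IsIntegral.of_finite F z), hz, minpoly.irreducible (IsIntegral.of_finite F z)⟩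

end Lfun
end PurityAux


namespace PurityAux
open Polynomial Finset

lemma recurrence {I : Type*} [Fintype I] (u : I → ℂ) (hu : ∀ i, ‖u i‖ = 1) (M : ℕ) :
    ∃ m, M ≤ m ∧ ∀ i, ‖u i ^ m - 1‖ ≤ 1/2 := by
  have hb : Bornology.IsBounded (Metric.closedBall (0 : I → ℂ) 1) := Metric.isBounded_closedBall
  obtain ⟨v, _, φ, hφ, hlim⟩ := tendsto_subseq_of_bounded hb (x := fun k : ℕ => fun i => u i ^ (k * M)) (by
    intro k
    rw [mem_closedBall_zero_iff, pi_norm_le_iff_of_nonneg zero_le_one]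
    intro i
    simp [hu])
  have hc := hlim.cauchySeq
  obtain ⟨k0, hk0⟩ := Metric.cauchySeq_iff.1 hc (1/2) (by norm_num)
  have h1 := hk0 (k0+1) (by omega) k0 le_rfl
  have hlt : φ k0 < φ (k0+1) := hφ (Nat.lt_succ_self k0)
  obtain ⟨e, he⟩ := Nat.exists_eq_add_of_lt hlt
  refine ⟨(e+1) * M, by nlinarith, fun i => ?_⟩
  have h2 : dist (u i ^ (φ (k0+1) * M)) (u i ^ (φ k0 * M)) ≤ 1/2 :=
    le_trans (dist_le_pi_dist (fun i => u i ^ (φ (k0+1) * M)) (fun i => u i ^ (φ k0 * M)) i) h1.le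
  rw [dist_eq_norm, he] at h2
  have h3 : u i ^ ((φ k0 + e + 1) * M) - u i ^ (φ k0 * M) = u i ^ (φ k0 * M) * (u i ^ ((e+1)*M) - 1) := by
    ring
  rw [h3, norm_mul, norm_pow, hu, one_pow, one_mul] at h2
  exact h2

lemma power_sum_bound {I : Type*} [Fintype I] (a : I → ℂ) (R C : ℝ) (hR : 0 < R) (M : ℕ)
    (h : ∀ m, M ≤ m → ‖∑ i, a i ^ m‖ ≤ C * R ^ m) (j : I) : ‖a j‖ ≤ R := by
  by_contra hj
  push Not at hj
  have hC : ∀ M', ∃ m, M' ≤ m ∧ (‖a j‖ / R) ^ m ≤ 2 * C := by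
    intro M'
    set u : I → ℂ := fun i => if a i = 0 then 1 else a i / ‖a i‖ with hu
    have hu1 : ∀ i, ‖u i‖ = 1 := by
      intro i
      simp only [hu]
      split_ifs with h0
      · simp
      · simp [h0]
    obtain ⟨m, hm, hm2⟩ := recurrence u hu1 (M + M' + 1)
    refine ⟨m, by omega, ?_⟩
    have hau : ∀ i, a i = ‖a i‖ * u i := by
      intro i
      simp only [hu]
      split_ifs with h0
      · simp [h0]
      · have : (‖a i‖ : ℂ) ≠ 0 := by simpa using h0
        field_simp
    have hre : ∀ i, ‖a i‖ ^ m / 2 ≤ (a i ^ m).re := by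
      intro i
      have e1 : a i ^ m = ((‖a i‖ ^ m : ℝ) : ℂ) * u i ^ m := by
        conv_lhs => rw [hau i, mul_pow]
        push_cast; rfl
      rw [e1, Complex.re_ofReal_mul]
      have e2 : 1/2 ≤ (u i ^ m).re := by
        have := (abs_le.1 ((Complex.abs_re_le_norm _).trans (hm2 i))).1
        simp only [Complex.sub_re, Complex.one_re] at this
        linarith
      have : 0 ≤ ‖a i‖ ^ m := by positivity
      nlinarith
    have h4 : ‖a j‖ ^ m / 2 ≤ C * R ^ m := by
      refine le_trans ?_ (h m (by omega))
      refine le_trans ?_ (Complex.re_le_norm _)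
      rw [Complex.re_sum]
      refine le_trans (hre j) ?_
      exact Finset.single_le_sum (f := fun i => (a i ^ m).re)
        (fun i _ => le_trans (by positivity) (hre i)) (mem_univ j)
    rw [div_pow, div_le_iff₀ (by positivity)]
    linarith
  have h1 : 1 < ‖a j‖ / R := by rwa [one_lt_div hR]
  obtain ⟨M', hM'⟩ := pow_unbounded_of_one_lt (2*C) h1
  obtain ⟨m, hm, hm2⟩ := hC M'
  have := pow_le_pow_right₀ h1.le hm
  linarith

section
variable {F : Type*} [Field F] [Fintype F] [DecidableEq F]

lemma char_orth [Fintype (MulChar F ℂ)] (u v : F) :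
    ∑ χ : MulChar F ℂ, χ u * χ⁻¹ v = if u = v ∧ u ≠ 0 then ((Fintype.card F - 1 : ℕ) : ℂ) else 0 := by
  by_cases hu : u = 0
  · simp [hu, MulChar.map_zero]
  by_cases hv : v = 0
  · simp [hv, hu, MulChar.map_zero]
  have hval : ∀ χ : MulChar F ℂ, χ u * χ⁻¹ v = χ (u * v⁻¹) := by
    intro χ
    rw [MulChar.inv_apply', map_mul]
  simp only [hval]
  split_ifs with h
  · obtain ⟨rfl, _⟩ := h
    simp only [mul_inv_cancel₀ hu, map_one, sum_const, card_univ, nsmul_eq_mul, mul_one]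
    congr 1
    have := MulChar.card_eq_card_units_of_hasEnoughRootsOfUnity F ℂ
    rw [← Nat.card_eq_fintype_card, this, Nat.card_eq_fintype_card, Fintype.card_units]
  · have hne : u * v⁻¹ ≠ 1 := by
      intro h1
      apply h
      refine ⟨?_, hu⟩
      field_simp at h1
      exact h1
    have hw : u * v⁻¹ ≠ 0 := mul_ne_zero hu (inv_ne_zero hv)
    obtain ⟨χ₀, h0⟩ := MulChar.exists_apply_ne_one_of_hasEnoughRootsOfUnity F ℂ hne
    have : ∑ χ : MulChar F ℂ, χ (u * v⁻¹) = χ₀ (u * v⁻¹) * ∑ χ : MulChar F ℂ, χ (u * v⁻¹) := by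
      rw [Finset.mul_sum]
      refine (Fintype.sum_equiv (Equiv.mulLeft χ₀) _ _ fun χ => ?_).symm
      simp [MulChar.mul_apply]
    have h3 : (χ₀ (u * v⁻¹) - 1) * ∑ χ : MulChar F ℂ, χ (u * v⁻¹) = 0 := by linear_combination -this
    rcases mul_eq_zero.1 h3 with h | h
    · exact absurd (sub_eq_zero.1 h) h0
    · exact h
end

lemma tr_sq {K : Type*} [Field K] [Finite K] [Algebra (ZMod 2) K] (t : K) :
    Algebra.trace (ZMod 2) K (t ^ 2) = Algebra.trace (ZMod 2) K t := by
  have h := Algebra.trace_eq_of_algEquiv (FiniteField.frobeniusAlgEquivOfAlgebraic (ZMod 2) K) t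
  rw [← h]
  simp [FiniteField.coe_frobeniusAlgEquivOfAlgebraic]

/-- additive character from the trace -/
def psi {F : Type*} [Field F] [Algebra (ZMod 2) F] (c : F) : AddChar F ℂ where
  toFun x := ((sg (Algebra.trace (ZMod 2) F (c * x)) : ℝ) : ℂ)
  map_zero_eq_one' := by simp [sg]
  map_add_eq_mul' a b := by rw [mul_add, map_add, sg_add]; push_cast; rfl

lemma psi_apply {F : Type*} [Field F] [Algebra (ZMod 2) F] (c x : F) :
    psi c x = ((sg (Algebra.trace (ZMod 2) F (c * x)) : ℝ) : ℂ) := rfl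

lemma psi_ne_one {F : Type*} [Field F] [Fintype F] [Algebra (ZMod 2) F] (c : F) (hc : c ≠ 0) : psi c ≠ 1 := by
  have : FiniteDimensional (ZMod 2) F := Module.Finite.of_finite
  obtain ⟨e, he⟩ := Algebra.trace_surjective (ZMod 2) F 1
  rw [AddChar.ne_one_iff]
  refine ⟨c⁻¹ * e, ?_⟩
  rw [psi_apply, mul_inv_cancel_left₀ hc, he]
  norm_num [sg]

lemma exists_pair (L1 L2 : ℂ) : ∃ p : ℂ × ℂ, p.1 + p.2 = -L1 ∧ p.1 * p.2 = L2 := by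
  obtain ⟨s, hs⟩ := IsAlgClosed.exists_pow_nat_eq (L1^2 - 4*L2) (n := 2) (by norm_num)
  refine ⟨((-L1 + s)/2, (-L1 - s)/2), by ring, ?_⟩
  linear_combination -hs/4

lemma sum_Sc {F : Type*} [Field F] [Fintype F] [DecidableEq F] [Algebra (ZMod 2) F] [CharP F 2]
    [Fintype (MulChar F ℂ)] (n : ℕ) (hn : 2 ≤ n) (hF : Fintype.card F = 2^n) (c : F) (hc : c ≠ 0)
    (m : ℕ) (hm : 3 ≤ m) :
    ‖∑ χ : MulChar F ℂ, Sc (lam χ (psi c)) (2*m)‖ ≤ 3 * 2^n * ((2:ℝ)^n)^m := by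
  classical
  have : NeZero (2*m) := ⟨by omega⟩
  let K := FiniteField.Extension F 2 (2*m)
  letI : Fintype K := Fintype.ofFinite K
  have hfr : Module.finrank F K = 2*m := FiniteField.finrank_extension F 2 (2*m)
  have hcK : Fintype.card K = 2^(n*m) * 2^(n*m) := by
    rw [Fintype.card_eq_nat_card, FiniteField.natCard_extension, Nat.card_eq_fintype_card, hF]
    ring
  have : CharP K 2 := charP_of_injective_algebraMap (algebraMap F K).injective 2
  have hfin : FiniteDimensional (ZMod 2) K := Module.Finite.of_finite
  have hfin2 : FiniteDimensional (ZMod 2) F := Module.Finite.of_finite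
  have hst : IsScalarTower (ZMod 2) F K := inferInstance
  have hb := norm_sum_bound (K := K) (F := F) (Algebra.trace (ZMod 2) K).toAddMonoidHom (fun t => tr_sq t)
    (Algebra.trace_surjective (ZMod 2) K 1) (n*m) n hn hF hcK (by
      calc (2^n-1)^2 < (2^n)^2 := by
            apply Nat.pow_lt_pow_left _ (by norm_num)
            have : 0 < 2^n := by positivity
            omega
        _ = 2^(n*2) := by rw [pow_mul]
        _ ≤ 2^(n*m) := Nat.pow_le_pow_right (by norm_num) (Nat.mul_le_mul_left _ (by omega)))
    (algebraMap F K c) (by simpa using hc)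
  have key : ∑ χ : MulChar F ℂ, Sc (lam χ (psi c)) (2*m) = ((((2:ℝ)^n - 1) * ∑ z ∈ univ.filter (fun z : K => z ≠ 0 ∧ z ≠ 1 ∧ Algebra.norm F z = Algebra.norm F (z+1)), sg ((Algebra.trace (ZMod 2) K).toAddMonoidHom (algebraMap F K c * z)) : ℝ) : ℂ) := by
    have h1 : ∀ χ : MulChar F ℂ, Sc (lam χ (psi c)) (2*m) = ∑ z : K, χ (Algebra.norm F z) * χ⁻¹ (Algebra.norm F (z + 1)) * psi c (Algebra.trace F K z) := by
      intro χ
      have h0 := Sc_eq (K := K) χ (psi c)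
      rwa [show Module.finrank F K = 2*m from hfr] at h0
    simp only [h1]
    rw [Finset.sum_comm]
    simp only [← Finset.sum_mul, char_orth, Finset.sum_filter, Complex.ofReal_mul, Complex.ofReal_sum, Finset.mul_sum]
    refine Finset.sum_congr rfl fun z _ => ?_
    have h2 : psi c (Algebra.trace F K z) = ((sg ((Algebra.trace (ZMod 2) K).toAddMonoidHom (algebraMap F K c * z)) : ℝ) : ℂ) := by
      rw [psi_apply]
      congr 2
      change _ = Algebra.trace (ZMod 2) K (algebraMap F K c * z)
      rw [← Algebra.trace_trace (R := ZMod 2) (S := F) (T := K) (algebraMap F K c * z), ← Algebra.smul_def,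
        (Algebra.trace F K).map_smul, smul_eq_mul]
    rw [h2]
    have h3 : (z ≠ 0 ∧ z ≠ 1 ∧ Algebra.norm F z = Algebra.norm F (z+1)) ↔ (Algebra.norm F z = Algebra.norm F (z+1) ∧ Algebra.norm F z ≠ 0) := by
      rw [Algebra.norm_ne_zero_iff]
      constructor
      · exact fun h => ⟨h.2.2, h.1⟩
      · intro h
        refine ⟨h.2, ?_, h.1⟩
        rintro rfl
        have := h.1
        rw [CharTwo.add_self_eq_zero, Algebra.norm_zero] at this
        simp at this
    simp only [h3]
    split_ifs with h
    · congr 1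
      rw [hF, Nat.cast_sub Nat.one_le_two_pow]
      push_cast; rfl
    · simp
  rw [key, Complex.norm_real, Real.norm_eq_abs, abs_mul, abs_of_nonneg]
  · rw [← pow_mul]; exact hb
  · have : (1:ℝ) ≤ 2^n := one_le_pow₀ (by norm_num)
    linarith

theorem weil {F : Type*} [Field F] [Fintype F] [DecidableEq F] [Algebra (ZMod 2) F] [CharP F 2]
    (n : ℕ) (hn : 2 ≤ n) (hF : Fintype.card F = 2^n) (c : F) (hc : c ≠ 0) (χ : MulChar F ℂ) :
    ‖∑ a : F, χ a * χ⁻¹ (a + 1) * psi c a‖ ≤ 2 * √((2:ℝ)^n) := by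
  classical
  letI : Fintype (MulChar F ℂ) := Fintype.ofFinite _
  choose p hp1 hp2 using fun χ : MulChar F ℂ => exists_pair (Lc (lam χ (psi c)) 1) (Lc (lam χ (psi c)) 2)
  have hps : ∀ χ m, 1 ≤ m → Sc (lam χ (psi c)) m = -((p χ).1^m + (p χ).2^m) := fun χ m hm =>
    power_sums _ (lam_one _ _) (lam_mul _ _) (fun k hk => Lc_zero χ (psi c) (psi_ne_one c hc) k hk)
      _ _ (hp1 χ) (hp2 χ) m hm
  have hb := power_sum_bound (Sum.elim (fun χ : MulChar F ℂ => (p χ).1^2) (fun χ => (p χ).2^2))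
    ((2:ℝ)^n) (3*2^n) (by positivity) 3 (by
      intro m hm
      refine le_trans (le_of_eq ?_) (sum_Sc n hn hF c hc m hm)
      rw [Fintype.sum_sum_type, ← norm_neg]
      simp only [Sum.elim_inl, Sum.elim_inr, ← pow_mul]
      congr 1
      rw [← Finset.sum_add_distrib, ← Finset.sum_neg_distrib]
      exact Finset.sum_congr rfl fun χ _ => (hps χ (2*m) (by omega)).symm)
  have h1 : ‖(p χ).1‖ ≤ √((2:ℝ)^n) := by
    apply Real.le_sqrt_of_sq_le
    simpa using hb (Sum.inl χ)
  have h2 : ‖(p χ).2‖ ≤ √((2:ℝ)^n) := by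
    apply Real.le_sqrt_of_sq_le
    simpa using hb (Sum.inr χ)
  rw [← Lc_one, ← norm_neg, ← hp1 χ]
  refine (norm_add_le _ _).trans ?_
  linarith

end PurityAux

namespace PurityAux
open Polynomial Finset

section charbound
variable {F : Type*} [Field F] [Fintype F] [DecidableEq F] [Algebra (ZMod 2) F] [CharP F 2]

lemma one_le_two_sqrt (n : ℕ) : (1:ℝ) ≤ 2 * √((2:ℝ)^n) := by
  have : (1:ℝ) ≤ √((2:ℝ)^n) := Real.one_le_sqrt.2 (one_le_pow₀ (by norm_num))
  linarith

lemma diag_sum (χ : MulChar F ℂ) (c : F) :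
    ∑ z : F, χ z * χ⁻¹ (z + 0) * psi c z = (∑ z : F, psi c z) - 1 := by
  have : ∀ z : F, χ z * χ⁻¹ (z + 0) * psi c z = psi c z - if z = 0 then 1 else 0 := by
    intro z
    split_ifs with h
    · simp [h, MulChar.map_zero]
    · rw [add_zero, MulChar.inv_apply', ← map_mul, mul_inv_cancel₀ h]; simp
  simp only [this, sum_sub_distrib]
  simp

lemma char_bound (n : ℕ) (hn : 2 ≤ n) (hF : Fintype.card F = 2^n) (χ : MulChar F ℂ) (hχ : χ ≠ 1)
    (c α : F) (h : c ≠ 0 ∨ α ≠ 0) :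
    ‖∑ z : F, χ z * χ⁻¹ (z + α) * psi c z‖ ≤ 2 * √((2:ℝ)^n) := by
  by_cases hα : α = 0
  · subst hα
    have hc : c ≠ 0 := by simpa using h
    rw [diag_sum, AddChar.sum_eq_zero_of_ne_one (psi_ne_one c hc)]
    simpa using one_le_two_sqrt n
  by_cases hc : c = 0
  · subst hc
    have h1 : ∀ z : F, psi 0 z = 1 := by intro z; simp [psi_apply, sg]
    simp only [h1, mul_one]
    have h2 : ∑ z : F, χ z * χ⁻¹ (z + α) = ∑ t : F, χ (t + α) * χ⁻¹ t := by
      refine Fintype.sum_equiv (Equiv.addRight α) _ _ fun z => ?_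
      simp [add_assoc, CharTwo.add_self_eq_zero]
    have h3 : ∀ t : F, χ (t + α) * χ⁻¹ t = χ (1 + α * t⁻¹) - if t = 0 then 1 else 0 := by
      intro t
      split_ifs with ht
      · simp [ht, MulChar.map_zero]
      · rw [MulChar.inv_apply', ← map_mul, sub_zero]
        congr 1
        field_simp
    have h4 : ∑ t : F, χ (1 + α * t⁻¹) = ∑ t : F, χ t :=
      Fintype.sum_equiv ((Equiv.inv F).trans ((Equiv.mulLeft₀ α hα).trans (Equiv.addLeft 1))) _ _
        (fun t => rfl)
    rw [h2]
    simp only [h3, sum_sub_distrib]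
    rw [h4, MulChar.sum_eq_zero_of_ne_one hχ]
    simpa using one_le_two_sqrt n
  · have h2 : ∑ z : F, χ z * χ⁻¹ (z + α) * psi c z = ∑ t : F, χ t * χ⁻¹ (t + 1) * psi (c * α) t := by
      refine (Fintype.sum_equiv (Equiv.mulLeft₀ α hα) _ _ fun t => ?_).symm
      change _ = χ (α * t) * χ⁻¹ (α * t + α) * psi c (α * t)
      rw [show α * t + α = α * (t + 1) by ring, map_mul, map_mul, psi_apply, psi_apply, mul_assoc c α t]
      have : χ α * χ⁻¹ α = 1 := by
        rw [MulChar.inv_apply', ← map_mul, mul_inv_cancel₀ hα, map_one]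
      linear_combination -(χ t * χ⁻¹ (t+1) * ((sg (Algebra.trace (ZMod 2) F (c * (α * t))) : ℝ) : ℂ)) * this
    rw [h2]
    exact weil n hn hF (c * α) (mul_ne_zero hc hα) χ

lemma exists_trace_rep (L : F →+ ZMod 2) : ∃ c : F, ∀ z, L z = Algebra.trace (ZMod 2) F (c * z) := by
  have : FiniteDimensional (ZMod 2) F := Module.Finite.of_finite
  have hnd := traceForm_nondegenerate (ZMod 2) F
  let L' : F →ₗ[ZMod 2] ZMod 2 := L.toZModLinearMap 2
  refine ⟨((Algebra.traceForm (ZMod 2) F).toDual hnd).symm L', fun z => ?_⟩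
  have := LinearMap.BilinForm.apply_toDual_symm_apply (hB := hnd) L' z
  rw [Algebra.traceForm_apply] at this
  rw [this]; rfl

end charbound

section pars
variable {I : Type*} [Fintype I] [DecidableEq I]

/-- dot product sign -/
def dsg (b x : I → ZMod 2) : ℝ := sg (∑ i, b i * x i)

lemma dsg_sum (x : I → ZMod 2) : ∑ b : I → ZMod 2, dsg b x = if x = 0 then (2:ℝ) ^ Fintype.card I else 0 := by
  split_ifs with h
  · simp [h, dsg, sg, ZMod.card]
  · obtain ⟨i, hi⟩ := Function.ne_iff.1 h
    have hi1 : x i = 1 := by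
      rcases zmod2_cases (x i) with h' | h'
      · exact absurd h' hi
      · exact h'
    have : ∑ b : I → ZMod 2, dsg b x = - ∑ b : I → ZMod 2, dsg b x := by
      rw [← Finset.sum_neg_distrib]
      refine (Fintype.sum_equiv (Equiv.addRight (Pi.single i (1 : ZMod 2))) _ _ fun b => ?_).symm
      simp only [dsg, Equiv.coe_addRight, Pi.add_apply, add_mul, Finset.sum_add_distrib]
      rw [sg_add]
      have : ∑ j, (Pi.single i (1 : ZMod 2) : I → ZMod 2) j * x j = 1 := by
        rw [Finset.sum_eq_single i]
        · simp [hi1]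
        · intro j _ hj; simp [Pi.single_eq_of_ne hj]
        · simp
      rw [this]
      norm_num [sg]
    linarith

lemma dsg_mul (b x x' : I → ZMod 2) : dsg b x * dsg b x' = dsg b (x + x') := by
  simp only [dsg, Pi.add_apply, mul_add, Finset.sum_add_distrib, sg_add]

lemma parseval (D : (I → ZMod 2) → ℂ) :
    ∑ b : I → ZMod 2, ‖∑ x, (dsg b x : ℂ) * D x‖ ^ 2 = (2:ℝ) ^ Fintype.card I * ∑ x, ‖D x‖ ^ 2 := by
  have key : ∑ b : I → ZMod 2, ((‖∑ x, (dsg b x : ℂ) * D x‖ ^ 2 : ℝ) : ℂ) =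
      (((2:ℝ) ^ Fintype.card I * ∑ x, ‖D x‖ ^ 2 : ℝ) : ℂ) := by
    have h1 : ∀ b : I → ZMod 2, ((‖∑ x, (dsg b x : ℂ) * D x‖ ^ 2 : ℝ) : ℂ) =
        ∑ x, ∑ x', D x * (starRingEnd ℂ) (D x') * ((dsg b (x + x') : ℝ) : ℂ) := by
      intro b
      rw [Complex.ofReal_pow, ← Complex.mul_conj', map_sum, Finset.sum_mul_sum]
      refine Finset.sum_congr rfl fun x _ => Finset.sum_congr rfl fun x' _ => ?_
      rw [map_mul, Complex.conj_ofReal, ← dsg_mul]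
      push_cast; ring
    simp only [h1]
    rw [Finset.sum_comm]
    push_cast
    rw [Finset.mul_sum]
    refine Finset.sum_congr rfl fun x _ => ?_
    rw [Finset.sum_comm]
    simp only [← Finset.mul_sum, ← Complex.ofReal_sum, dsg_sum]
    rw [Finset.sum_eq_single x]
    · have : x + x = 0 := by ext i; exact CharTwo.add_self_eq_zero _
      rw [if_pos this, Complex.mul_conj']
      push_cast; ring
    · intro x' _ hne
      rw [if_neg, Complex.ofReal_zero, mul_zero]
      intro h0
      apply hne
      ext i
      have := congrFun h0 i
      exact (CharTwo.add_eq_zero.1 this).symm ▸ rfl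
    · simp
  exact_mod_cast key

end pars

section merge
variable {ι : Type*} [Fintype ι] [DecidableEq ι] (A : Finset ι)

lemma merge_add (x a : {i // i ∈ A} → ZMod 2) (y : {i // i ∉ A} → ZMod 2) :
    mergeCfg A (x + a) y = mergeCfg A x y + mergeCfg A a 0 := by
  ext i
  simp only [mergeCfg, Pi.add_apply]
  split_ifs <;> simp

/-- merging as an equivalence -/
def mergeEquiv : ({i // i ∈ A} → ZMod 2) × ({i // i ∉ A} → ZMod 2) ≃ (ι → ZMod 2) where
  toFun p := mergeCfg A p.1 p.2
  invFun v := (fun i => v i, fun i => v i)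
  left_inv p := by
    ext i
    · simp [mergeCfg, i.2]
    · simp [mergeCfg, i.2]
  right_inv v := by
    ext i
    simp [mergeCfg]

/-- Pauli coefficients -/
def Tc (φ : (ι → ZMod 2) → ℂ) (a b : {i // i ∈ A} → ZMod 2) : ℂ :=
  ∑ v : ι → ZMod 2, ((dsg b (fun i => v i) : ℝ) : ℂ) * (φ v * (starRingEnd ℂ) (φ (v + mergeCfg A a 0)))

lemma trace_formula (φ : (ι → ZMod 2) → ℂ) :
    ((rdm A φ * rdm A φ).trace).re = ((2:ℝ) ^ A.card)⁻¹ * ∑ a, ∑ b, ‖Tc A φ a b‖ ^ 2 := by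
  have hT : ∀ a b, Tc A φ a b = ∑ x, ((dsg b x : ℝ) : ℂ) * rdm A φ x (x + a) := by
    intro a b
    rw [Tc, ← (mergeEquiv A).sum_comp, Fintype.sum_prod_type]
    refine Finset.sum_congr rfl fun x _ => ?_
    simp only [rdm, Matrix.of_apply, Finset.mul_sum]
    refine Finset.sum_congr rfl fun y _ => ?_
    have : (fun i : {i // i ∈ A} => (mergeEquiv A (x, y)) i) = x := by
      ext i; simp [mergeEquiv, mergeCfg, i.2]
    rw [this, merge_add]; rfl
  have hherm : ∀ x x', rdm A φ x' x = (starRingEnd ℂ) (rdm A φ x x') := by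
    intro x x'
    simp only [rdm, Matrix.of_apply, map_sum, map_mul, Complex.conj_conj]
    exact Finset.sum_congr rfl fun y _ => mul_comm _ _
  simp only [hT, parseval]
  rw [← Finset.mul_sum, Fintype.card_coe, inv_mul_cancel_left₀ (by positivity), Finset.sum_comm]
  simp only [Matrix.trace, Matrix.diag_apply, Matrix.mul_apply, Complex.re_sum]
  refine Finset.sum_congr rfl fun x _ => ?_
  refine (Fintype.sum_equiv (Equiv.addLeft x) _ _ fun a => ?_).symm
  rw [Equiv.coe_addLeft, hherm x (x+a), Complex.mul_conj']
  norm_cast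
end merge

end PurityAux

/-- Purity bound for reduced density matrices of nontrivial chi states:
`Tr(ρ_A²) ≤ 2^{−ℓ}(1 + (4^ℓ − 1)·2^{4−n})`. -/
theorem lfsr_eigenstate_purity
    (n ℓ : ℕ) (hn : 2 ≤ n) (N : ℕ) (hN : N = 2 ^ n - 1)
    (F : Type*) [Field F] [Fintype F] [DecidableEq F]
    (hcard : Fintype.card F = 2 ^ n)
    (g : Fˣ) (hg : ∀ x : Fˣ, x ∈ Subgroup.zpowers g)
    (ω : ℂ) (hω : ω = Complex.exp (2 * Real.pi * Complex.I / N))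
    (ι : (Fin n → ZMod 2) ≃+ F)
    (q : ℤ) (hq : ¬ (N : ℤ) ∣ q)
    (ψq : F → ℂ)
    (hψq0 : ψq 0 = 0)
    (hψq : ∀ j : ℕ, ψq ((g ^ j : Fˣ) : F) = ω ^ (q * j) / Real.sqrt N)
    (A : Finset (Fin n)) (hA : A.card = ℓ) :
    ((rdm A (fun x => ψq (ι x)) * rdm A (fun x => ψq (ι x))).trace).re ≤
      ((2 : ℝ) ^ ℓ)⁻¹ * (1 + ((4 : ℝ) ^ ℓ - 1) * (2 : ℝ) ^ ((4 : ℝ) - (n : ℝ))) := by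
  classical
  haveI : CharP F 2 := charP_of_card_eq_prime_pow (f := n) hcard
  letI : Algebra (ZMod 2) F := ZMod.algebra F 2
  have h2n : 4 ≤ 2 ^ n := by
    calc 4 = 2^2 := by norm_num
      _ ≤ 2^n := Nat.pow_le_pow_right (by norm_num) hn
  have hNpos : 0 < N := by omega
  have hNR : (N : ℝ) = 2^n - 1 := by
    rw [hN, Nat.cast_sub (by omega)]; push_cast; rfl
  have hNR0 : (0:ℝ) < N := by exact_mod_cast hNpos
  have h2nR : (4:ℝ) ≤ 2^n := by exact_mod_cast h2n
  have hsq : ((√(N:ℝ) : ℝ) : ℂ) ≠ 0 := by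
    exact_mod_cast (Real.sqrt_pos.2 hNR0).ne'
  have hsq2 : ((√(N:ℝ) : ℝ) : ℂ) * ((√(N:ℝ) : ℝ) : ℂ) = N := by
    rw [← Complex.ofReal_mul, Real.mul_self_sqrt hNR0.le]; simp
  have hω0 : ω ≠ 0 := by rw [hω]; exact Complex.exp_ne_zero _
  have hprim : IsPrimitiveRoot ω N := by
    rw [hω]; exact Complex.isPrimitiveRoot_exp N hNpos.ne'
  have hpow : ∀ x : F, x ≠ 0 → ∃ j : ℕ, x = ((g ^ j : Fˣ) : F) := by
    intro x hx
    obtain ⟨j, hj⟩ := mem_powers_iff_mem_zpowers.2 (hg (Units.mk0 x hx))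
    refine ⟨j, ?_⟩
    have := congrArg (fun u : Fˣ => (u : F)) hj
    exact this.symm
  -- the multiplicative character
  let χ : MulChar F ℂ :=
    { toFun := fun x => ((√(N:ℝ) : ℝ) : ℂ) * ψq x
      map_one' := by
        have := hψq 0
        simp only [pow_zero, Units.val_one] at this
        rw [this]
        simp [hsq]
      map_mul' := by
        intro x y
        by_cases hx : x = 0
        · simp [hx, hψq0]
        by_cases hy : y = 0
        · simp [hy, hψq0]
        obtain ⟨i, rfl⟩ := hpow x hx
        obtain ⟨j, rfl⟩ := hpow y hy
        rw [← Units.val_mul, ← pow_add, hψq, hψq, hψq]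
        push_cast
        rw [mul_add, zpow_add₀ hω0]
        field_simp
      map_nonunit' := by
        intro x hx
        have : x = 0 := by
          by_contra h
          exact hx (isUnit_iff_ne_zero.2 h)
        simp [this, hψq0] }
  have hχapp : ∀ x, χ x = ((√(N:ℝ) : ℝ) : ℂ) * ψq x := fun x => rfl
  have hχ1 : χ ≠ 1 := by
    intro h
    have h1 : χ (g : F) = 1 := by rw [h]; simp
    have h2 := hψq 1
    rw [pow_one, Nat.cast_one, mul_one] at h2
    rw [hχapp, h2, mul_div_cancel₀ _ hsq] at h1
    exact hq ((hprim.zpow_eq_one_iff_dvd q).1 h1)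
  have hprod : ∀ z w, ψq z * (starRingEnd ℂ) (ψq w) = (N : ℂ)⁻¹ * (χ z * χ⁻¹ w) := by
    intro z w
    have h1 : χ⁻¹ w = (starRingEnd ℂ) (χ w) := by
      rw [← MulChar.star_eq_inv, MulChar.star_apply]; rfl
    rw [h1, hχapp, hχapp, map_mul, Complex.conj_ofReal, ← hsq2]
    field_simp
  rw [PurityAux.trace_formula, hA]
  refine mul_le_mul_of_nonneg_left ?_ (by positivity)
  have hcX : Fintype.card ({i // i ∈ A} → ZMod 2) = 2 ^ ℓ := by
    rw [Fintype.card_fun, ZMod.card, Fintype.card_coe, hA]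
  -- evaluation of the coefficients
  have hT : ∀ a b : ({i // i ∈ A} → ZMod 2), ∃ c : F, (b ≠ 0 → c ≠ 0) ∧ (b = 0 → c = 0) ∧
      PurityAux.Tc A (fun x => ψq (ι x)) a b =
        (N : ℂ)⁻¹ * ∑ z : F, χ z * χ⁻¹ (z + ι (mergeCfg A a 0)) * PurityAux.psi c z := by
    intro a b
    let L : F →+ ZMod 2 :=
      { toFun := fun z => ∑ i : {i // i ∈ A}, b i * (ι.symm z) i
        map_zero' := by simp
        map_add' := by intro z w; simp [mul_add, Finset.sum_add_distrib] }
    have hL : ∀ z, L z = ∑ i : {i // i ∈ A}, b i * (ι.symm z) i := fun z => rfl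
    obtain ⟨c, hc⟩ := PurityAux.exists_trace_rep L
    have hb0 : c = 0 → b = 0 := by
      intro h0
      ext i
      have h1 := hc (ι (Pi.single (i : Fin n) 1))
      rw [h0, zero_mul, map_zero, hL, AddEquiv.symm_apply_apply, Finset.sum_eq_single i] at h1
      · simpa using h1
      · intro j _ hj
        rw [Pi.single_eq_of_ne (fun h => hj (Subtype.ext h)), mul_zero]
      · simp
    have hc0 : b = 0 → c = 0 := by
      intro h0
      by_contra hcne
      obtain ⟨z, hz⟩ := AddChar.ne_one_iff.1 (PurityAux.psi_ne_one c hcne)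
      apply hz
      rw [PurityAux.psi_apply, ← hc, hL]
      simp [h0, PurityAux.sg]
    refine ⟨c, fun hb h0 => hb (hb0 h0), hc0, ?_⟩
    rw [PurityAux.Tc, Finset.mul_sum, ← ι.toEquiv.sum_comp]
    refine Finset.sum_congr rfl fun v _ => ?_
    rw [map_add, hprod, PurityAux.psi_apply, ← hc, hL]
    simp only [AddEquiv.toEquiv_eq_coe, AddEquiv.coe_toEquiv, AddEquiv.symm_apply_apply, PurityAux.dsg]
    ring
  set B : ℝ := (2 : ℝ) ^ ((4 : ℝ) - (n : ℝ)) with hB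
  have hBv : B = 16 / 2^n := by
    rw [hB, Real.rpow_sub (by norm_num), Real.rpow_natCast]; norm_num
  have hbound : ∀ a b : ({i // i ∈ A} → ZMod 2), (a ≠ 0 ∨ b ≠ 0) → ‖PurityAux.Tc A (fun x => ψq (ι x)) a b‖ ^ 2 ≤ B := by
    intro a b hab
    obtain ⟨c, hc, _, hTe⟩ := hT a b
    have h1 : c ≠ 0 ∨ ι (mergeCfg A a 0) ≠ 0 := by
      rcases hab with h | h
      · right
        intro h0
        apply h
        have h2 : mergeCfg A a 0 = 0 := by simpa using h0
        ext i
        have := congrFun h2 i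
        simpa [mergeCfg, i.2] using this
      · exact Or.inl (hc h)
    have h2 := PurityAux.char_bound n hn hcard χ hχ1 c _ h1
    rw [hTe, norm_mul, mul_pow, norm_inv, Complex.norm_natCast, hBv]
    have h3 : ‖∑ z : F, χ z * χ⁻¹ (z + ι (mergeCfg A a 0)) * PurityAux.psi c z‖ ^ 2 ≤ 4 * 2^n := by
      refine (pow_le_pow_left₀ (norm_nonneg _) h2 2).trans (le_of_eq ?_)
      rw [mul_pow, Real.sq_sqrt (by positivity)]; norm_num
    rw [inv_pow, ← div_eq_inv_mul, div_le_div_iff₀ (by positivity) (by positivity)]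
    have h4 : (2:ℝ)^n ≤ 2 * N := by rw [hNR]; linarith
    have h5 : ((2:ℝ)^n)^2 ≤ 4 * N^2 := by nlinarith
    calc _ ≤ 4 * 2^n * (2:ℝ)^n := mul_le_mul_of_nonneg_right h3 (by positivity)
      _ ≤ _ := by nlinarith
  have h00 : ‖PurityAux.Tc A (fun x => ψq (ι x)) (0:({i // i ∈ A} → ZMod 2)) 0‖ ^ 2 = 1 := by
    obtain ⟨c, _, hc, hTe⟩ := hT 0 0
    have hm : mergeCfg A (0:({i // i ∈ A} → ZMod 2)) 0 = 0 := by ext i; simp [mergeCfg]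
    rw [hTe, hc rfl, hm, map_zero, PurityAux.diag_sum]
    have : ∀ z : F, PurityAux.psi 0 z = 1 := by intro z; simp [PurityAux.psi_apply, PurityAux.sg]
    simp only [this, Finset.sum_const, Finset.card_univ, hcard]
    have h6 : ((2^n : ℕ) • (1:ℂ) - 1) = N := by
      rw [hN, Nat.cast_sub (by omega)]; simp
    rw [h6, inv_mul_cancel₀ (by exact_mod_cast hNpos.ne')]
    simp
  rw [← Fintype.sum_prod_type' (f := fun a b => ‖PurityAux.Tc A (fun x => ψq (ι x)) a b‖ ^ 2),
    ← Finset.add_sum_erase _ _ (Finset.mem_univ ((0:({i // i ∈ A} → ZMod 2)), (0:({i // i ∈ A} → ZMod 2))))]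
  refine add_le_add (le_of_eq h00) ?_
  refine (Finset.sum_le_card_nsmul _ _ B ?_).trans (le_of_eq ?_)
  · rintro ⟨a, b⟩ hab
    apply hbound
    rw [Finset.mem_erase] at hab
    by_contra hcon
    push Not at hcon
    exact hab.1 (Prod.ext hcon.1 hcon.2)
  · rw [Finset.card_erase_of_mem (Finset.mem_univ _), Finset.card_univ, Fintype.card_prod, hcX, nsmul_eq_mul,
      Nat.cast_sub (Nat.one_le_iff_ne_zero.2 (by positivity))]
    push_cast
    rw [← mul_pow]; norm_num
end
end
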